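/- Let β ∈ (1,2) with δ(β) = (1^m 0)^∞ for some m ≥ 1. Then for every t ∈ B_β one has lim_{r→0⁺} dim_H(B_β ∩ (t, t + r)) = dim_H K_β(t) > 0. -/

import Mathlib

open Set Filter MeasureTheory

/-- The β-transformation `x ↦ βx (mod 1)`. -/
noncomputable def Tbeta (β x : ℝ) : ℝ := Int.fract (β * x)

/-- The survivor set `K_β(t) = {x ∈ [0,1) : T_β^n x ≥ t for all n ≥ 0}`. -/
def Kset (β t : ℝ) : Set ℝ := {x | x ∈ Set.Ico (0 : ℝ) 1 ∧ ∀ n : ℕ, t ≤ (Tbeta β)^[n] x}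

/-- Strict lexicographic order on sequences of naturals. -/
def seqLt (x y : ℕ → ℕ) : Prop := ∃ n, (∀ i, i < n → x i = y i) ∧ x n < y n

/-- Lexicographic order on sequences of naturals. -/
def seqLe (x y : ℕ → ℕ) : Prop := x = y ∨ seqLt x y

/-- The `n`-th iterate of the left shift. -/
def shiftN (n : ℕ) (x : ℕ → ℕ) : ℕ → ℕ := fun i => x (i + n)

/-- The sequence `w 0^∞`. -/
def wordSeq (w : List ℕ) : ℕ → ℕ := fun i => w.getD i 0

/-- The periodic sequence `w^∞`. -/
def perSeq (w : List ℕ) : ℕ → ℕ := fun i => w.getD (i % w.length) 0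

/-- The sequence obtained by concatenating the word `w` with the sequence `x`. -/
def catSeq (w : List ℕ) (x : ℕ → ℕ) : ℕ → ℕ :=
  fun i => if i < w.length then w.getD i 0 else x (i - w.length)

/-- The greedy β-expansion of `t`: the digit `b_{i+1}` is `⌊β T_β^i t⌋`. -/
noncomputable def greedy (β t : ℝ) : ℕ → ℕ := fun i => (⌊β * (Tbeta β)^[i] t⌋).toNat

/-- `d` is the quasi-greedy β-expansion of `1`: the lexicographically largest
sequence in `{0,1}^ℕ` not ending in `0^∞` whose digits sum to `1` in base `β`. -/
def IsQuasiGreedy (β : ℝ) (d : ℕ → ℕ) : Prop :=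
  (∀ i, d i ≤ 1) ∧ (¬ ∃ N, ∀ n, N ≤ n → d n = 0) ∧
  (∑' i : ℕ, (d i : ℝ) / β ^ (i + 1) = 1) ∧
  ∀ e : ℕ → ℕ, (∀ i, e i ≤ 1) → (¬ ∃ N, ∀ n, N ≤ n → e n = 0) →
    (∑' i : ℕ, (e i : ℝ) / β ^ (i + 1) = 1) → seqLe e d

/-- `s = s_1…s_p` is a β-Lyndon word: `s_{i+1}…s_p ≻ s_1…s_{p-i}` for `1 ≤ i < p`
and `σ^n(s^∞) ≺ δ(β)` for all `n ≥ 0`. -/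
def IsBetaLyndon (β : ℝ) (s : List ℕ) : Prop :=
  s ≠ [] ∧ (∀ a ∈ s, a ≤ 1) ∧
  (∀ i, 1 ≤ i → i < s.length →
    seqLt (wordSeq (s.take (s.length - i))) (wordSeq (s.drop i))) ∧
  (∀ d : ℕ → ℕ, IsQuasiGreedy β d → ∀ n : ℕ, seqLt (shiftN n (perSeq s)) d)

/-- Left endpoint `t_L = Σ_{i=1}^p s_i β^{-i}` of the β-Lyndon interval generated by `s`. -/
noncomputable def lyndonLeft (β : ℝ) (s : List ℕ) : ℝ :=
  ∑ i ∈ Finset.range s.length, (s.getD i 0 : ℝ) / β ^ (i + 1)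

/-- Right endpoint `t_R = (β^p/(β^p - 1)) t_L` of the β-Lyndon interval generated by `s`. -/
noncomputable def lyndonRight (β : ℝ) (s : List ℕ) : ℝ :=
  β ^ s.length / (β ^ s.length - 1) * lyndonLeft β s

/-- The union of all β-Lyndon intervals `[t_L, t_R)`. -/
noncomputable def lyndonUnionIco (β : ℝ) : Set ℝ :=
  ⋃ s ∈ {s : List ℕ | IsBetaLyndon β s}, Set.Ico (lyndonLeft β s) (lyndonRight β s)

/-- The symbolic survivor set `K̃_β(t)` with upper bound sequence `d = δ(β)`. -/
def Ktilde (β t : ℝ) (d : ℕ → ℕ) : Set (ℕ → ℕ) :=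
  {x | (∀ i, x i ≤ 1) ∧ ∀ n : ℕ, seqLe (greedy β t) (shiftN n x) ∧ seqLe (shiftN n x) d}

/-- The set-valued bifurcation set `E_β`. -/
def Eset (β : ℝ) : Set ℝ :=
  {t | t ∈ Set.Ico (0 : ℝ) 1 ∧ ∀ t', t < t' → t' < 1 → Kset β t' ≠ Kset β t}

/-- The dimension bifurcation set `B_β`. -/
def Bset (β : ℝ) : Set ℝ :=
  {t | t ∈ Set.Ico (0 : ℝ) 1 ∧ ∀ t', t < t' → t' < 1 → dimH (Kset β t') ≠ dimH (Kset β t)}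

/-- `β` is a multinacci number: `β^{m+1} = β^m + ⋯ + β + 1` for some `m ≥ 1`. -/
def IsMultinacci (β : ℝ) : Prop :=
  ∃ m : ℕ, 1 ≤ m ∧ β ^ (m + 1) = ∑ i ∈ Finset.range (m + 1), β ^ i

/-!
A point of `B_β` is the minimum of its own orbit, so `B_β ∩ (t, t + r) ⊆ K_β(t)`; this is the upper
bound. For the lower bound, languages are measured by their generating function at `β⁻ˢ`: a set
covered by the free concatenations of a language has dimension at most `s` if the generating
function is less than `1`, and at least `s` if the language is a finite prefix code and the
generating function is at least `1`.

Given `b < dim_H K_β(t)` there are `s > b` and a word `W`, with cylinder in `(t, t + r)`, such that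
`K_β(W0^∞)` has dimension above `s`, but its points avoiding `W` have dimension below `s`. The
dimension is therefore carried by the first return words to `W`. Take the leftmost return word `a`
and the rightmost one `c` of a large finite family, and prefix orbits of this family by powers of
`a`: this gives a set of dimension at least `s` of points `y` in the cylinder of `aW`, minimal in
their orbit, recurrent to `W`, and never above `c^M W` on their visits to `W`. All these `y` lie in
`B_β`. Indeed, if `dim_H K_β(t') = dim_H K_β(y) ≥ s` with `t' > y`, then the loops at `W` of
`K_β(t')` have infinite generating function. Since nothing in these loops, and nothing in the
expansion of `y`, can imitate the marker `c^M q c^M`, for `q` a long prefix of the expansion of `y`,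
appending it to finitely many loops gives a code all of whose concatenations stay in `K_β(y)`, with
generating function above `1`. Hence `dim_H K_β(y)` exceeds `dim_H K_β(t')`.
-/

namespace BetaSurvivor

open scoped NNReal ENNReal

section Words

variable {α : Type*} {W a v w : List α} {D D' : Set (List α)}

lemma suffix_append_cases (h : v <:+ a ++ w) :
    v <:+ w ∨ ∃ u, u ≠ [] ∧ u <:+ a ∧ v = u ++ w := by
  rcases List.suffix_or_suffix_of_suffix h (List.suffix_append a w) with hvw | ⟨u, rfl⟩
  · exact .inl hvw
  · by_cases hu : u = []
    · exact .inl (by simp [hu])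
    · obtain ⟨z, hz⟩ := h
      rw [← List.append_assoc] at hz
      exact .inr ⟨u, hu, ⟨z, List.append_cancel_right hz⟩, rfl⟩

lemma suffix_flatten_cases {L : List (List α)} (hv : v <:+ L.flatten) :
    (∃ L', L' <:+ L ∧ v = L'.flatten) ∨
      ∃ d L' u, d :: L' <:+ L ∧ u <:+ d ∧ u ≠ [] ∧ u ≠ d ∧ v = u ++ L'.flatten := by
  induction L with
  | nil => exact .inl ⟨[], List.suffix_rfl, by simpa using hv⟩
  | cons d L ih =>
    rw [List.flatten_cons] at hv
    rcases suffix_append_cases hv with hvL | ⟨u, hu, hud, rfl⟩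
    · rcases ih hvL with ⟨L', hL', rfl⟩ | ⟨e, L', u, hL', hu⟩
      · exact .inl ⟨L', hL'.trans (List.suffix_cons _ _), rfl⟩
      · exact .inr ⟨e, L', u, hL'.trans (List.suffix_cons _ _), hu⟩
    · by_cases hd : u = d
      · exact .inl ⟨d :: L, List.suffix_rfl, by simp [hd]⟩
      · exact .inr ⟨d, L, u, List.suffix_rfl, hud, hu, hd, rfl⟩

/-- The `k`-th power `a ⋯ a` of a word. -/
def wordPow (a : List α) (k : ℕ) : List α := (List.replicate k a).flatten

lemma wordPow_zero (a : List α) : wordPow a 0 = [] := rfl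

lemma wordPow_succ (a : List α) (k : ℕ) : wordPow a (k + 1) = a ++ wordPow a k := by
  simp [wordPow, List.replicate_succ]

lemma wordPow_add (a : List α) (j k : ℕ) : wordPow a (j + k) = wordPow a j ++ wordPow a k := by
  rw [wordPow, List.replicate_add, List.flatten_append, ← wordPow, ← wordPow]

lemma length_wordPow (a : List α) (k : ℕ) : (wordPow a k).length = k * a.length := by
  simp [wordPow]

lemma suffix_wordPow_cases {M : ℕ} (hv : v <:+ wordPow a M) :
    (∃ j ≤ M, v = wordPow a j) ∨
      ∃ j u, u <:+ a ∧ u ≠ [] ∧ u ≠ a ∧ v = u ++ wordPow a j := by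
  have eq_replicate {L : List (List α)} (hL : L <:+ List.replicate M a) :
      L = List.replicate L.length a :=
    List.eq_replicate_of_mem fun b hb => List.eq_of_mem_replicate (hL.subset hb)
  rcases suffix_flatten_cases hv with ⟨L, hL, rfl⟩ | ⟨d, L, u, hL, hud, hu, hne, rfl⟩
  · exact .inl ⟨L.length, by simpa using hL.length_le, congrArg _ (eq_replicate hL)⟩
  · obtain rfl : d = a := List.eq_of_mem_replicate (hL.subset (by simp))
    exact .inr ⟨L.length, u, hud, hu, hne,
      congrArg (u ++ ·.flatten) (eq_replicate ((List.suffix_cons _ _).trans hL))⟩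

lemma prefix_flatten_append (hD : ∀ d ∈ D, W <+: d ++ W) {L : List (List α)}
    (hL : ∀ d ∈ L, d ∈ D) : W <+: L.flatten ++ W := by
  induction L with
  | nil => simp
  | cons d L ih =>
    rw [List.forall_mem_cons] at hL
    simpa using (hD d hL.1).trans ((List.prefix_append_right_inj d).2 (ih hL.2))

lemma prefix_wordPow_append (ha : W <+: a ++ W) (k : ℕ) : W <+: wordPow a k ++ W :=
  prefix_flatten_append (D := {a}) (by simpa using ha) fun _ hd => List.eq_of_mem_replicate hd

/-- Concatenations of exactly `M` words of `F`. -/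
def concatPow (F : Set (List α)) (M : ℕ) : Set (List α) :=
  {u | ∃ L : List (List α), L.length = M ∧ (∀ d ∈ L, d ∈ F) ∧ u = L.flatten}

lemma finite_concatPow {F : Set (List α)} (hF : F.Finite) (M : ℕ) :
    (concatPow F M).Finite := by
  induction M with
  | zero =>
    refine (finite_singleton ([] : List α)).subset ?_
    rintro u ⟨L, hL, -, rfl⟩
    simp [List.length_eq_zero_iff.1 hL]
  | succ M ih =>
    refine (hF.image2 (· ++ ·) ih).subset ?_
    rintro u ⟨_ | ⟨d, L⟩, hlen, hL, rfl⟩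
    · simp at hlen
    · rw [List.forall_mem_cons] at hL
      exact ⟨d, hL.1, L.flatten, ⟨L, by simpa using hlen, hL.2, rfl⟩, rfl⟩

/-- `D` is a code of nonempty blocks relative to a marker word `W`: each block `d` brings `W`
back, in the sense that `dW` begins with `W`, and the words `dW` are pairwise prefix-incomparable.
Hence concatenations of blocks, followed by `W`, can be parsed uniquely. -/
structure IsBlockCode (W : List α) (D : Set (List α)) : Prop where
  ne_nil : ∀ d ∈ D, d ≠ []
  marker_prefix : ∀ d ∈ D, W <+: d ++ W
  eq_of_prefix : ∀ d ∈ D, ∀ d' ∈ D, d ++ W <+: d' ++ W → d = d'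

namespace IsBlockCode

lemma mono (h : IsBlockCode W D) (hsub : D' ⊆ D) : IsBlockCode W D' :=
  ⟨fun d hd => h.ne_nil d (hsub hd), fun d hd => h.marker_prefix d (hsub hd),
    fun d hd d' hd' => h.eq_of_prefix d (hsub hd) d' (hsub hd')⟩

lemma prefix_of_flatten_prefix (h : IsBlockCode W D) {L L' : List (List α)}
    (hL : ∀ d ∈ L, d ∈ D) (hL' : ∀ d ∈ L', d ∈ D)
    (hpre : L.flatten ++ W <+: L'.flatten ++ W) : L <+: L' := by
  induction L generalizing L' with
  | nil => simp
  | cons d L ih =>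
    rw [List.forall_mem_cons] at hL
    cases L' with
    | nil =>
      have hlen := hpre.length_le
      have hd := List.length_pos_iff.2 (h.ne_nil d hL.1)
      simp only [List.flatten_cons, List.flatten_nil, List.length_append, List.length_nil] at hlen
      omega
    | cons d' L' =>
      rw [List.forall_mem_cons] at hL'
      simp only [List.flatten_cons, List.append_assoc] at hpre
      have hd : d ++ W <+: d ++ (L.flatten ++ W) :=
        (List.prefix_append_right_inj d).2 (prefix_flatten_append h.marker_prefix hL.2)
      have hd' : d' ++ W <+: d' ++ (L'.flatten ++ W) :=
        (List.prefix_append_right_inj d').2 (prefix_flatten_append h.marker_prefix hL'.2)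
      obtain rfl : d = d' := by
        rcases List.prefix_or_prefix_of_prefix (hd.trans hpre) hd' with hp | hp
        · exact h.eq_of_prefix _ hL.1 _ hL'.1 hp
        · exact (h.eq_of_prefix _ hL'.1 _ hL.1 hp).symm
      rw [List.prefix_append_right_inj] at hpre
      exact (List.prefix_cons_inj d).2 (ih hL.2 hL'.2 hpre)

lemma flatten_injOn (h : IsBlockCode W D) :
    InjOn List.flatten {L : List (List α) | ∀ d ∈ L, d ∈ D} := fun L hL L' hL' heq => by
  have hle := h.prefix_of_flatten_prefix hL hL' (by rw [heq])
  have hge := h.prefix_of_flatten_prefix hL' hL (by rw [heq])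
  exact hle.eq_of_length (hle.length_le.antisymm hge.length_le)

lemma concatPow_append_tail (h : IsBlockCode W D) {T : List (List α)} (hT : ∀ d ∈ T, d ∈ D)
    (hne : T ≠ []) (M : ℕ) : IsBlockCode W ((· ++ T.flatten) '' concatPow D M) := by
  have hmem {L : List (List α)} (hL : ∀ d ∈ L, d ∈ D) : ∀ d ∈ L ++ T, d ∈ D := fun d hd =>
    (List.mem_append.1 hd).elim (hL d) (hT d)
  refine ⟨?_, ?_, ?_⟩
  · rintro _ ⟨u, -, rfl⟩ hnil
    obtain ⟨e, T', rfl⟩ := List.exists_cons_of_ne_nil hne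
    simp only [List.flatten_cons, List.append_eq_nil_iff] at hnil
    exact h.ne_nil e (hT e (by simp)) hnil.2.1
  · rintro _ ⟨u, ⟨L, -, hL, rfl⟩, rfl⟩
    simpa using prefix_flatten_append h.marker_prefix (hmem hL)
  · rintro _ ⟨u, ⟨L, hlen, hL, rfl⟩, rfl⟩ _ ⟨u', ⟨L', hlen', hL', rfl⟩, rfl⟩ hpre
    have hLL := h.prefix_of_flatten_prefix (hmem hL) (hmem hL') (by simpa using hpre)
    rw [List.append_cancel_right (hLL.eq_of_length (by simp [hlen, hlen']))]

end IsBlockCode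

lemma take_eq_ofFn (σ : Stream' α) (n : ℕ) : σ.take n = List.ofFn fun i : Fin n => σ.get i :=
  List.ext_getElem (by simp [Stream'.length_take]) fun i _ _ => by simp [Stream'.take_get]

lemma exists_stream_of_prefixClosed [Finite α] {A : Set (List α)}
    (hpre : ∀ u v, u <+: v → v ∈ A → u ∈ A) (hlen : ∀ n, ∃ u ∈ A, u.length = n) :
    ∃ σ : Stream' α, ∀ n, σ.take n ∈ A := by
  let : TopologicalSpace α := ⊥
  have : DiscreteTopology α := ⟨rfl⟩
  let cyl (n : ℕ) : Set (ℕ → α) := {σ | List.ofFn (fun i : Fin n => σ i) ∈ A}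
  have hclosed (n : ℕ) : IsClosed (cyl n) :=
    (isClosed_discrete {f : Fin n → α | List.ofFn f ∈ A}).preimage
      (f := fun σ : ℕ → α => fun i : Fin n => σ i) (by fun_prop)
  have hanti (n : ℕ) : cyl (n + 1) ⊆ cyl n := fun σ hσ =>
    hpre _ _ (by rw [List.ofFn_succ_last]; exact List.prefix_append _ _) hσ
  have hne (n : ℕ) : (cyl n).Nonempty := by
    obtain ⟨u, hu, rfl⟩ := hlen n
    obtain ⟨w, -, hw⟩ := hlen 1
    refine ⟨fun i => u.getD i (w.head (List.ne_nil_of_length_eq_add_one hw)), ?_⟩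
    simpa [cyl] using hu
  obtain ⟨σ, hσ⟩ := IsCompact.nonempty_iInter_of_sequence_nonempty_isCompact_isClosed
    cyl hanti hne (hclosed 0).isCompact hclosed
  exact ⟨σ, fun n =>
    (congrArg (· ∈ A) (take_eq_ofFn σ n)).mpr (mem_iInter.1 hσ n)⟩

end Words

section GeneratingFunction

variable {α ι : Type*} {q : ℝ≥0∞} {A B : Set (List α)}

lemma tsum_prod_map_of_length_eq (f : ι → ℝ≥0∞) (k : ℕ) :
    ∑' L : {L : List ι // L.length = k}, (L.1.map f).prod = (∑' i, f i) ^ k := by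
  induction k with
  | zero =>
    rw [tsum_eq_single ⟨[], rfl⟩]
    · simp
    · rintro ⟨L, hL⟩ hne
      exact absurd (Subtype.ext (List.length_eq_zero_iff.1 hL)) hne
  | succ k ih =>
    let consEquiv : ι × {L : List ι // L.length = k} ≃ {L : List ι // L.length = k + 1} :=
      { toFun := fun p => ⟨p.1 :: p.2.1, by simp [p.2.2]⟩
        invFun := fun L => (L.1.head (List.ne_nil_of_length_eq_add_one L.2),
          ⟨L.1.tail, by simp [L.2]⟩)
        left_inv := fun p => by simp
        right_inv := fun L => by simp }
    rw [← consEquiv.tsum_eq]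
    simp only [consEquiv, Equiv.coe_fn_mk, List.map_cons, List.prod_cons]
    rw [ENNReal.tsum_prod (f := fun (i : ι) (L : {L : List ι // L.length = k}) =>
      f i * (L.1.map f).prod)]
    simp_rw [ENNReal.tsum_mul_left, ih]
    rw [ENNReal.tsum_mul_right, pow_succ']

lemma tsum_prod_map (f : ι → ℝ≥0∞) :
    ∑' L : List ι, (L.map f).prod = ∑' k : ℕ, (∑' i, f i) ^ k := by
  rw [← (Equiv.sigmaFiberEquiv (List.length (α := ι))).tsum_eq, ENNReal.tsum_sigma']
  exact tsum_congr fun k => tsum_prod_map_of_length_eq f k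

/-- The generating function `∑_{u ∈ A} q ^ |u|` of the language `A`, evaluated at `q`. -/
noncomputable def genFun (q : ℝ≥0∞) (A : Set (List α)) : ℝ≥0∞ := ∑' u : A, q ^ u.1.length

lemma genFun_mono (h : A ⊆ B) : genFun q A ≤ genFun q B :=
  ENNReal.tsum_mono_subtype (fun u : List α => q ^ u.length) h

lemma genFun_union_le : genFun q (A ∪ B) ≤ genFun q A + genFun q B :=
  ENNReal.tsum_union_le (fun u : List α => q ^ u.length) _ _

lemma genFun_iUnion_le (A : ι → Set (List α)) : genFun q (⋃ i, A i) ≤ ∑' i, genFun q (A i) :=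
  ENNReal.tsum_iUnion_le_tsum (fun u : List α => q ^ u.length) _

lemma genFun_singleton (u : List α) : genFun q {u} = q ^ u.length := by
  simp [genFun]

lemma genFun_range_le (f : ι → List α) : genFun q (range f) ≤ ∑' i, q ^ (f i).length := by
  simpa only [iUnion_singleton_eq_range, genFun_singleton]
    using genFun_iUnion_le (q := q) fun i => {f i}

lemma genFun_image_append_left (e : List α) (A : Set (List α)) :
    genFun q ((e ++ ·) '' A) = q ^ e.length * genFun q A := by
  simp only [genFun]
  rw [tsum_image (f := fun u => q ^ u.length) (g := (e ++ ·))
    (fun _ _ _ _ huv => List.append_cancel_left huv), ← ENNReal.tsum_mul_left]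
  simp only [List.length_append, pow_add]

lemma genFun_image_append_right (e : List α) (A : Set (List α)) :
    genFun q ((· ++ e) '' A) = genFun q A * q ^ e.length := by
  simp only [genFun]
  rw [tsum_image (f := fun u => q ^ u.length) (g := (· ++ e))
    (fun _ _ _ _ huv => List.append_cancel_right huv), ← ENNReal.tsum_mul_right]
  simp only [List.length_append, pow_add]

lemma genFun_image2_append_le (A B : Set (List α)) :
    genFun q (image2 (· ++ ·) A B) ≤ genFun q A * genFun q B := by
  have hunion : image2 (· ++ ·) A B = ⋃ a : A, (a.1 ++ ·) '' B := by
    ext; simp [mem_image2]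
  rw [hunion]
  refine (genFun_iUnion_le _).trans_eq ?_
  simp only [genFun_image_append_left]
  rw [ENNReal.tsum_mul_right, ← genFun]

lemma genFun_ne_top_of_finite (hq : q ≠ ⊤) (hA : A.Finite) : genFun q A ≠ ⊤ := by
  have := hA.fintype
  rw [genFun, tsum_fintype]
  exact (ENNReal.sum_lt_top.2 fun u _ => (ENNReal.pow_ne_top hq).lt_top).ne

lemma exists_finset_lt_genFun {b : ℝ≥0∞} (hb : b < genFun q A) :
    ∃ F : Finset (List α), (F : Set (List α)) ⊆ A ∧ b < genFun q (F : Set (List α)) := by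
  classical
  rw [genFun, ENNReal.tsum_eq_iSup_sum, lt_iSup_iff] at hb
  obtain ⟨G, hG⟩ := hb
  refine ⟨G.map ⟨Subtype.val, Subtype.val_injective⟩, fun x hx => ?_, ?_⟩
  · simp only [Finset.coe_map, Function.Embedding.coeFn_mk, mem_image] at hx
    obtain ⟨y, -, rfl⟩ := hx
    exact y.2
  · rw [genFun, Finset.tsum_subtype' _ fun u : List α => q ^ u.length]
    simpa using hG

lemma genFun_mul_le_of_length_ge {p : ℝ≥0∞} (hp : p ≤ 1) {L : ℕ} (hA : ∀ u ∈ A, L ≤ u.length) :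
    genFun (p * q) A ≤ p ^ L * genFun q A := by
  rw [genFun, genFun, ← ENNReal.tsum_mul_left]
  refine ENNReal.tsum_le_tsum fun u => ?_
  rw [mul_pow]
  gcongr ?_ * _
  exact pow_le_pow_of_le_one zero_le hp (hA u.1 u.2)

lemma one_lt_genFun_of_one_le_union {p : ℝ≥0∞} (hp : p ≤ 1) (hA : ∀ u ∈ A, u ≠ [])
    (hAB : 1 ≤ genFun (p * q) (A ∪ B)) (hB : p + genFun (p * q) B < 1) : 1 < genFun q A := by
  by_contra! hle
  refine hB.not_ge ?_
  calc 1 ≤ genFun (p * q) (A ∪ B) := hAB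
    _ ≤ genFun (p * q) A + genFun (p * q) B := genFun_union_le
    _ ≤ p ^ 1 * genFun q A + genFun (p * q) B := by
        gcongr
        exact genFun_mul_le_of_length_ge hp fun u hu => List.length_pos_iff.2 (hA u hu)
    _ ≤ p + genFun (p * q) B := by
        gcongr
        rw [pow_one]
        exact mul_le_of_le_one_right' hle

lemma pow_length_flatten (L : List (List α)) :
    q ^ L.flatten.length = (L.map fun u => q ^ u.length).prod := by
  induction L with
  | nil => simp
  | cons u L ih =>
    rw [List.flatten_cons, List.length_append, pow_add, ih, List.map_cons, List.prod_cons]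

lemma mem_of_mem_map_val {s : Set α} (L : List s) : ∀ x ∈ L.map Subtype.val, x ∈ s := by
  intro x hx
  obtain ⟨y, -, rfl⟩ := List.mem_map.1 hx
  exact y.2

lemma IsBlockCode.injective_flatten {W : List α} (h : IsBlockCode W A) :
    Function.Injective fun L : List A => (L.map Subtype.val).flatten := fun L L' hLL =>
  List.map_injective_iff.2 Subtype.val_injective
    (h.flatten_injOn (mem_of_mem_map_val L) (mem_of_mem_map_val L') hLL)

lemma IsBlockCode.genFun_pow_le {W : List α} (h : IsBlockCode W A) (M : ℕ) :
    genFun q A ^ M ≤ genFun q (concatPow A M) := by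
  let flat : {L : List A // L.length = M} → concatPow A M := fun L =>
    ⟨(L.1.map Subtype.val).flatten, L.1.map Subtype.val, by simp [L.2], mem_of_mem_map_val L.1, rfl⟩
  have hflat : Function.Injective flat := fun L L' hLL =>
    Subtype.ext (h.injective_flatten (congrArg Subtype.val hLL))
  rw [genFun, ← tsum_prod_map_of_length_eq]
  refine le_trans (tsum_congr fun L => ?_).le (ENNReal.tsum_comp_le_tsum_of_injective hflat _)
  simp only [flat]
  rw [pow_length_flatten, List.map_map]
  rfl

lemma exists_le_pow_mul {x y b : ℝ≥0∞} (hx : 1 < x) (hy : y ≠ 0) (hb : b ≠ ⊤) :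
    ∃ M : ℕ, b ≤ x ^ M * y := by
  have hlim : Tendsto (fun n : ℕ => x ^ n) atTop (nhds ⊤) :=
    ENNReal.tendsto_pow_atTop_nhds_top_iff.2 hx
  obtain ⟨M, hM⟩ := (hlim.eventually (lt_mem_nhds (ENNReal.div_lt_top hb hy))).exists
  have hxM : x ^ M ≠ 0 := pow_ne_zero M (zero_lt_one.trans hx).ne'
  exact ⟨M, (ENNReal.div_le_iff_le_mul (.inl hy) (.inr hxM)).1 hM.le⟩

end GeneratingFunction

section Branches

variable {β x y z : ℝ} {u v : List Bool} {n k : ℕ}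

lemma Tbeta_mem_Ico (β x : ℝ) : Tbeta β x ∈ Ico (0 : ℝ) 1 :=
  ⟨Int.fract_nonneg _, Int.fract_lt_one _⟩

lemma iterate_Tbeta_mem_Ico (hx : x ∈ Ico (0 : ℝ) 1) (n : ℕ) :
    (Tbeta β)^[n] x ∈ Ico (0 : ℝ) 1 := by
  cases n with
  | zero => exact hx
  | succ n => rw [Function.iterate_succ_apply']; exact Tbeta_mem_Ico _ _

lemma iterate_add_apply' {α : Type*} (f : α → α) (n k : ℕ) (x : α) :
    f^[n + k] x = f^[k] (f^[n] x) := by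
  rw [add_comm, Function.iterate_add_apply]

/-- The inverse branch of `T_β ^ |v|` belonging to the word `v`, extended affinely to `ℝ`. -/
noncomputable def branch (β : ℝ) : List Bool → ℝ → ℝ
  | [], x => x
  | d :: v, x => (d.toNat + branch β v x) / β

/-- The value `∑ vᵢ β⁻ⁱ` in base `β` of a finite word `v`. -/
noncomputable def wordValue (β : ℝ) (v : List Bool) : ℝ := branch β v 0

/-- The first greedy digit `⌊βx⌋` of `x`, for `x ∈ [0, 1)` and `β ≤ 2`. -/
noncomputable def firstDigit (β x : ℝ) : Bool := decide (1 ≤ β * x)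

/-- The word of the first `n` greedy digits. -/
noncomputable def digits (β : ℝ) : ℝ → ℕ → List Bool
  | _, 0 => []
  | x, n + 1 => firstDigit β x :: digits β (Tbeta β x) n

/-- The cylinder of points of `[0, 1)` whose greedy expansion starts with the word `v`. -/
def cylinder (β : ℝ) (v : List Bool) : Set ℝ :=
  {x | x ∈ Ico (0 : ℝ) 1 ∧ digits β x v.length = v}

lemma branch_cons (d : Bool) (v : List Bool) (x : ℝ) :
    branch β (d :: v) x = (d.toNat + branch β v x) / β := rfl

lemma wordValue_cons (d : Bool) (v : List Bool) :
    wordValue β (d :: v) = (d.toNat + wordValue β v) / β := rfl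

lemma branch_append (u v : List Bool) (x : ℝ) :
    branch β (u ++ v) x = branch β u (branch β v x) := by
  induction u with
  | nil => rfl
  | cons d u ih => rw [List.cons_append, branch_cons, branch_cons, ih]

lemma wordValue_append (u v : List Bool) : wordValue β (u ++ v) = branch β u (wordValue β v) :=
  branch_append u v 0

lemma branch_eq (hβ : 0 < β) (v : List Bool) (x : ℝ) :
    branch β v x = wordValue β v + x / β ^ v.length := by
  induction v with
  | nil => simp [branch, wordValue]
  | cons d v ih =>
    rw [branch_cons, wordValue_cons, ih, List.length_cons]
    field_simp
    ring

lemma branch_sub_branch (hβ : 0 < β) (v : List Bool) (x y : ℝ) :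
    branch β v x - branch β v y = (x - y) / β ^ v.length := by
  rw [branch_eq hβ, branch_eq hβ v y]
  ring

lemma strictMono_branch (hβ : 0 < β) (v : List Bool) : StrictMono (branch β v) := fun x y hxy => by
  rw [branch_eq hβ v x, branch_eq hβ v y]
  gcongr

lemma wordValue_nonneg (hβ : 0 < β) (v : List Bool) : 0 ≤ wordValue β v := by
  induction v with
  | nil => exact le_rfl
  | cons d v ih =>
    rw [wordValue_cons]
    positivity

lemma wordValue_lt (hβ : 1 < β) (v : List Bool) : wordValue β v < 1 / (β - 1) := by
  have hpos : 0 < β - 1 := sub_pos.2 hβ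
  induction v with
  | nil => exact one_div_pos.2 hpos
  | cons d v ih =>
    have hd : (d.toNat : ℝ) ≤ 1 := mod_cast Bool.toNat_le d
    calc wordValue β (d :: v) < (1 + 1 / (β - 1)) / β := by
          rw [wordValue_cons]
          exact div_lt_div_of_pos_right (add_lt_add_of_le_of_lt hd ih) (zero_lt_one.trans hβ)
      _ = 1 / (β - 1) := by
          field_simp
          ring

lemma wordValue_le_wordValue_append (hβ : 0 < β) (u v : List Bool) :
    wordValue β u ≤ wordValue β (u ++ v) := by
  rw [wordValue_append]
  exact (strictMono_branch hβ u).monotone (wordValue_nonneg hβ v)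

@[simp] lemma length_digits (x : ℝ) (n : ℕ) : (digits β x n).length = n := by
  induction n generalizing x with
  | zero => rfl
  | succ n ih => simp [digits, ih]

lemma digits_add (x : ℝ) (n k : ℕ) :
    digits β x (n + k) = digits β x n ++ digits β ((Tbeta β)^[n] x) k := by
  induction n generalizing x with
  | zero => simp [digits]
  | succ n ih =>
    rw [Nat.add_right_comm]
    simp [digits, ih]

lemma digits_prefix (x : ℝ) (hk : k ≤ n) : digits β x k <+: digits β x n := by
  obtain ⟨j, rfl⟩ := Nat.exists_eq_add_of_le hk
  rw [digits_add]
  exact List.prefix_append _ _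

lemma drop_digits (x : ℝ) (hk : k ≤ n) :
    (digits β x n).drop k = digits β ((Tbeta β)^[k] x) (n - k) := by
  obtain ⟨j, rfl⟩ := Nat.exists_eq_add_of_le hk
  rw [digits_add, List.drop_append_of_le_length (by simp), List.drop_of_length_le (by simp)]
  simp

lemma digits_zero_right (n : ℕ) : digits β 0 n = List.replicate n false := by
  induction n with
  | zero => rfl
  | succ n ih =>
    have hT : Tbeta β 0 = 0 := by simp [Tbeta]
    simp [digits, hT, ih, List.replicate_succ, firstDigit]

lemma Tbeta_eq (hβ : β ∈ Ioc (0 : ℝ) 2) (hx : x ∈ Ico (0 : ℝ) 1) :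
    Tbeta β x = β * x - (firstDigit β x).toNat := by
  have hnonneg : 0 ≤ β * x := mul_nonneg hβ.1.le hx.1
  have hlt : β * x < 2 := by nlinarith [hβ.1, hβ.2, hx.2]
  have hfloor : ⌊β * x⌋ = ((firstDigit β x).toNat : ℤ) := by
    rw [Int.floor_eq_iff]
    by_cases h : 1 ≤ β * x
    · simp only [firstDigit, h]
      norm_num
      exact ⟨h, by linarith⟩
    · simp only [firstDigit, h]
      norm_num
      exact ⟨hnonneg, not_le.1 h⟩
  rw [Tbeta, Int.fract, hfloor, Int.cast_natCast]

lemma firstDigit_inverse_branch (hβ : 0 < β) (d : Bool) (hy : y ∈ Ico (0 : ℝ) 1) :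
    firstDigit β ((d.toNat + y) / β) = d := by
  rw [firstDigit, mul_div_cancel₀ _ hβ.ne']
  cases d <;> simp [hy.1, hy.2]

lemma branch_digits (hβ : β ∈ Ioc (0 : ℝ) 2) (hx : x ∈ Ico (0 : ℝ) 1) (n : ℕ) :
    branch β (digits β x n) ((Tbeta β)^[n] x) = x := by
  induction n generalizing x with
  | zero => rfl
  | succ n ih =>
    rw [digits, branch_cons, Function.iterate_succ_apply, ih (Tbeta_mem_Ico β x), Tbeta_eq hβ hx]
    have := hβ.1
    field_simp
    ring

lemma mem_cylinder_cons {d : Bool} :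
    x ∈ cylinder β (d :: v) ↔
      x ∈ Ico (0 : ℝ) 1 ∧ firstDigit β x = d ∧ Tbeta β x ∈ cylinder β v := by
  have hT := Tbeta_mem_Ico β x
  simp only [cylinder, mem_ofPred_eq, List.length_cons, digits, List.cons.injEq]
  tauto

lemma mem_cylinder_append :
    x ∈ cylinder β (u ++ v) ↔ x ∈ cylinder β u ∧ (Tbeta β)^[u.length] x ∈ cylinder β v := by
  constructor
  · rintro ⟨hx, heq⟩
    rw [List.length_append, digits_add] at heq
    obtain ⟨hu, hv⟩ := List.append_inj heq (by simp)
    exact ⟨⟨hx, hu⟩, iterate_Tbeta_mem_Ico hx _, hv⟩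
  · rintro ⟨⟨hx, hu⟩, -, hv⟩
    exact ⟨hx, by rw [List.length_append, digits_add, hu, hv]⟩

lemma cylinder_anti (huv : u <+: v) : cylinder β v ⊆ cylinder β u := by
  obtain ⟨w, rfl⟩ := huv
  exact fun x hx => (mem_cylinder_append.1 hx).1

lemma mem_cylinder_digits (hx : x ∈ Ico (0 : ℝ) 1) (n : ℕ) : x ∈ cylinder β (digits β x n) :=
  ⟨hx, by simp⟩

lemma prefix_of_mem_cylinder (hu : x ∈ cylinder β u) (hv : x ∈ cylinder β v)
    (h : u.length ≤ v.length) : u <+: v := by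
  rw [← hu.2, ← hv.2]
  exact digits_prefix _ h

lemma prefix_or_prefix_of_mem_cylinder (hu : x ∈ cylinder β u) (hv : x ∈ cylinder β v) :
    u <+: v ∨ v <+: u :=
  (le_total u.length v.length).imp (prefix_of_mem_cylinder hu hv) (prefix_of_mem_cylinder hv hu)

lemma mem_cylinder_iff_prefix_digits (hx : x ∈ Ico (0 : ℝ) 1) (hn : v.length ≤ n) :
    x ∈ cylinder β v ↔ v <+: digits β x n :=
  ⟨fun hv => prefix_of_mem_cylinder hv (mem_cylinder_digits hx n) (by simpa using hn),
    fun hv => cylinder_anti hv (mem_cylinder_digits hx n)⟩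

lemma branch_iterate_of_mem_cylinder (hβ : β ∈ Ioc (0 : ℝ) 2) (hx : x ∈ cylinder β v) :
    branch β v ((Tbeta β)^[v.length] x) = x := by
  conv_lhs => rw [← hx.2, length_digits]
  exact branch_digits hβ hx.1 _

lemma wordValue_le_of_mem_cylinder (hβ : β ∈ Ioc (0 : ℝ) 2) (hx : x ∈ cylinder β v) :
    wordValue β v ≤ x := by
  rw [← branch_iterate_of_mem_cylinder hβ hx]
  exact (strictMono_branch hβ.1 v).monotone (iterate_Tbeta_mem_Ico hx.1 _).1

lemma lt_wordValue_add_of_mem_cylinder (hβ : β ∈ Ioc (0 : ℝ) 2) (hx : x ∈ cylinder β v) :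
    x < wordValue β v + 1 / β ^ v.length := by
  conv_lhs => rw [← branch_iterate_of_mem_cylinder hβ hx]
  rw [← branch_eq hβ.1 v 1]
  exact strictMono_branch hβ.1 v (iterate_Tbeta_mem_Ico hx.1 _).2

lemma ediam_cylinder_le (hβ : β ∈ Ioc (0 : ℝ) 2) (v : List Bool) :
    Metric.ediam (cylinder β v) ≤ ENNReal.ofReal (1 / β ^ v.length) := by
  have hsub : cylinder β v ⊆ Icc (wordValue β v) (wordValue β v + 1 / β ^ v.length) := fun x hx =>
    ⟨wordValue_le_of_mem_cylinder hβ hx, (lt_wordValue_add_of_mem_cylinder hβ hx).le⟩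
  refine (Metric.ediam_mono hsub).trans_eq ?_
  rw [Real.ediam_Icc, add_sub_cancel_left]

lemma lt_of_mem_cylinder_of_lt (hβ : β ∈ Ioc (0 : ℝ) 2) (huv : ¬ u <+: v) (hvu : ¬ v <+: u)
    {x' y' : ℝ} (hx : x ∈ cylinder β u) (hy : y ∈ cylinder β v) (hxy : x < y)
    (hx' : x' ∈ cylinder β u) (hy' : y' ∈ cylinder β v) : x' < y' := by
  induction u generalizing v x y x' y' with
  | nil => exact absurd List.nil_prefix huv
  | cons d u ih =>
    cases v with
    | nil => exact absurd List.nil_prefix hvu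
    | cons e v =>
      rw [mem_cylinder_cons] at hx hy hx' hy'
      have hpos := hβ.1
      have hTx := Tbeta_eq hβ hx.1
      have hTy := Tbeta_eq hβ hy.1
      have hTx' := Tbeta_eq hβ hx'.1
      have hTy' := Tbeta_eq hβ hy'.1
      rw [hx.2.1] at hTx
      rw [hy.2.1] at hTy
      rw [hx'.2.1] at hTx'
      rw [hy'.2.1] at hTy'
      by_cases hde : d = e
      · subst hde
        rw [List.prefix_cons_inj] at huv hvu
        have hT : Tbeta β x < Tbeta β y := by rw [hTx, hTy]; gcongr
        have hT' := ih huv hvu hx.2.2 hy.2.2 hT hx'.2.2 hy'.2.2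
        rw [hTx', hTy', sub_lt_sub_iff_right] at hT'
        exact lt_of_mul_lt_mul_left hT' hpos.le
      · have hmul : β * x < β * y := by gcongr
        have hd := hx'.2.1
        have he := hy'.2.1
        have hd₀ := hx.2.1
        have he₀ := hy.2.1
        cases d <;> cases e <;> simp only [firstDigit, decide_eq_true_eq, decide_eq_false_iff_not,
          not_le, reduceCtorEq, not_true_eq_false, not_false_eq_true] at hd he hd₀ he₀ hde
        · exact lt_of_mul_lt_mul_left (hd.trans_le he) hpos.le
        · linarith

lemma ordConnected_cylinder (hβ : β ∈ Ioc (0 : ℝ) 2) (v : List Bool) :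
    (cylinder β v).OrdConnected := by
  refine ⟨fun x hx y hy z hz => ?_⟩
  have hzI : z ∈ Ico (0 : ℝ) 1 := ⟨hx.1.1.trans hz.1, hz.2.trans_lt hy.1.2⟩
  refine ⟨hzI, ?_⟩
  by_contra hne
  have hzy : z < y := lt_of_le_of_ne hz.2 (by rintro rfl; exact hne hy.2)
  have hzx : z < x := lt_of_mem_cylinder_of_lt hβ
    (fun h => hne (h.eq_of_length (by simp))) (fun h => hne (h.eq_of_length (by simp)).symm)
    (mem_cylinder_digits hzI v.length) hy hzy (mem_cylinder_digits hzI _) hx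
  exact hzx.not_ge hz.1

lemma lt_of_mem_cylinder_of_notMem (hβ : β ∈ Ioc (0 : ℝ) 2) {t z' : ℝ} (ht : t ∈ cylinder β v)
    (htz : t ≤ z) (hz : z ∈ Ico (0 : ℝ) 1) (hzv : z ∉ cylinder β v) (hn : v.length ≤ n)
    (hz' : z' ∈ cylinder β (digits β z n)) (hx : x ∈ cylinder β v) : x < z' := by
  have hlt : t < z := lt_of_le_of_ne htz (by rintro rfl; exact hzv ht)
  have hpre : ¬ v <+: digits β z n := fun h => hzv ((mem_cylinder_iff_prefix_digits hz hn).2 h)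
  have hpre' : ¬ digits β z n <+: v := fun h =>
    hpre (h.eq_of_length_le (by simpa using hn) ▸ List.prefix_rfl)
  exact lt_of_mem_cylinder_of_lt hβ hpre hpre' ht (mem_cylinder_digits hz n) hlt hx hz'

lemma mem_cylinder_replicate_true_iff (hβ : β ∈ Ioc (0 : ℝ) 2) (hx : x ∈ Ico (0 : ℝ) 1) (j : ℕ) :
    x ∈ cylinder β (List.replicate j true) ↔ wordValue β (List.replicate j true) ≤ x := by
  refine ⟨wordValue_le_of_mem_cylinder hβ, fun hle => ?_⟩
  induction j generalizing x with
  | zero => exact ⟨hx, rfl⟩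
  | succ j ih =>
    rw [List.replicate_succ, wordValue_cons, div_le_iff₀' hβ.1, Bool.toNat_true,
      Nat.cast_one] at hle
    have hdig : firstDigit β x = true := by
      simp only [firstDigit, decide_eq_true_eq]
      linarith [wordValue_nonneg hβ.1 (.replicate j true)]
    refine mem_cylinder_cons.2 ⟨hx, hdig, ih (Tbeta_mem_Ico β x) ?_⟩
    rw [Tbeta_eq hβ hx, hdig, Bool.toNat_true, Nat.cast_one]
    linarith

end Branches

section Admissible

variable {β x : ℝ} {m n : ℕ} {u v W : List Bool}

/-- Words without a run of `m + 1` ones: the admissible words when `δ(β) = (1^m 0)^∞`. -/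
def Admissible (m : ℕ) (v : List Bool) : Prop := ¬ List.replicate (m + 1) true <:+: v

lemma Admissible.of_infix (hv : Admissible m v) (h : u <:+: v) : Admissible m u :=
  fun hu => hv (hu.trans h)

lemma Admissible.left (h : Admissible m (u ++ v)) : Admissible m u :=
  h.of_infix (List.prefix_append u v).isInfix

lemma Admissible.right (h : Admissible m (u ++ v)) : Admissible m v :=
  h.of_infix (List.suffix_append u v).isInfix

lemma Admissible.append_of_prefix (hu : Admissible m (u ++ W)) (hv : Admissible m v)
    (hWv : W <+: v) (hW : m ≤ W.length) : Admissible m (u ++ v) := by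
  intro hrun
  rcases List.infix_append_iff.1 hrun with h | h | ⟨l₁, l₂, heq, h₁, h₂⟩
  · exact hu.left h
  · exact hv h
  · by_cases hl₁ : l₁ = []
    · rw [hl₁, List.nil_append] at heq
      exact hv (heq ▸ h₂.isInfix)
    · have hlen := congrArg List.length heq
      have hl₁ := List.length_pos_of_ne_nil hl₁
      simp only [List.length_replicate, List.length_append] at hlen
      have hl₂ : l₂ <+: W := List.prefix_of_prefix_length_le h₂ hWv (by omega)
      exact hu (List.infix_append_iff.2 (.inr (.inr ⟨l₁, l₂, heq, h₁, hl₂⟩)))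

lemma Admissible.append_replicate_false (hv : Admissible m v) (n : ℕ) :
    Admissible m (v ++ List.replicate n false) := by
  intro hrun
  rcases List.infix_append_iff.1 hrun with h | h | ⟨l₁, l₂, heq, h₁, h₂⟩
  · exact hv h
  · simpa using List.eq_of_mem_replicate (h.subset (List.mem_replicate.2 ⟨m.succ_ne_zero, rfl⟩))
  · obtain rfl : l₂ = [] := List.eq_nil_iff_forall_not_mem.2 fun b hb => by
      have htrue : b = true := List.eq_of_mem_replicate (heq ▸ List.mem_append_right l₁ hb)
      simpa [htrue] using List.eq_of_mem_replicate (h₂.subset hb)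
    exact hv (by rw [heq, List.append_nil]; exact h₁.isInfix)

/-- `β > 1` is the base with `1 = β⁻¹ + ⋯ + β^{-(m+1)}`, equivalently `δ(β) = (1^m 0)^∞`. -/
structure IsMultinacciBase (β : ℝ) (m : ℕ) : Prop where
  one_lt : 1 < β
  value_ones : wordValue β (List.replicate (m + 1) true) = 1

namespace IsMultinacciBase

variable (h : IsMultinacciBase β m)
include h

lemma pos : 0 < β := zero_lt_one.trans h.one_lt

lemma lt_two : β < 2 := by
  have hpos : 0 < β - 1 := sub_pos.2 h.one_lt
  have hlt := wordValue_lt h.one_lt (List.replicate (m + 1) true)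
  rw [h.value_ones, lt_div_iff₀ hpos] at hlt
  linarith

lemma mem_Ioc : β ∈ Ioc (0 : ℝ) 2 := ⟨h.pos, h.lt_two.le⟩

lemma wordValue_replicate_true : wordValue β (List.replicate m true) = β - 1 := by
  have hval := h.value_ones
  rw [List.replicate_succ, wordValue_cons, div_eq_one_iff_eq h.pos.ne', Bool.toNat_true,
    Nat.cast_one] at hval
  linarith

lemma admissible_of_mem_cylinder (hx : x ∈ cylinder β v) : Admissible m v := by
  rintro ⟨a, b, rfl⟩
  obtain ⟨hy, hval⟩ := (mem_cylinder_append.1 (mem_cylinder_append.1 hx).1).2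
  have hle := wordValue_le_of_mem_cylinder h.mem_Ioc ⟨hy, hval⟩
  rw [h.value_ones] at hle
  exact hle.not_gt hy.2

lemma inverse_branch_lt_one {y : ℝ} (hy : y ∈ Ico (0 : ℝ) 1) {d : Bool} {k : ℕ}
    (hm : m ≤ k) (hok : Admissible m (d :: digits β y k)) : (d.toNat + y) / β < 1 := by
  rw [div_lt_one h.pos]
  cases d
  · simpa using hy.2.trans h.one_lt
  · by_contra! hle
    have hval : wordValue β (List.replicate m true) ≤ y := by
      rw [h.wordValue_replicate_true]
      simp only [Bool.toNat_true, Nat.cast_one] at hle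
      linarith
    have hmem := (mem_cylinder_replicate_true_iff h.mem_Ioc hy m).2 hval
    have hpre := (mem_cylinder_iff_prefix_digits (n := k) hy (by simpa using hm)).1 hmem
    exact hok (((List.prefix_cons_inj true).2 hpre).isInfix)

lemma branch_mem_cylinder_of_digits (hx : x ∈ Ico (0 : ℝ) 1)
    (hv : Admissible m (v ++ digits β x m)) :
    branch β v x ∈ cylinder β v ∧ (Tbeta β)^[v.length] (branch β v x) = x := by
  induction v with
  | nil => exact ⟨⟨hx, rfl⟩, rfl⟩
  | cons d v ih =>
    obtain ⟨hy, hiter⟩ := ih (hv.of_infix (List.suffix_cons d _).isInfix)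
    set y := branch β v x
    have hdigits : digits β y (v.length + m) = v ++ digits β x m := by
      rw [digits_add, hy.2, hiter]
    have hmem : (d.toNat + y) / β ∈ Ico (0 : ℝ) 1 :=
      ⟨div_nonneg (add_nonneg (Nat.cast_nonneg _) hy.1.1) h.pos.le,
        h.inverse_branch_lt_one hy.1 (Nat.le_add_left m v.length) (hdigits ▸ hv)⟩
    have hdig := firstDigit_inverse_branch h.pos d hy.1
    have hT : Tbeta β ((d.toNat + y) / β) = y := by
      rw [Tbeta_eq h.mem_Ioc hmem, hdig, mul_div_cancel₀ _ h.pos.ne', add_sub_cancel_left]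
    rw [branch_cons]
    exact ⟨mem_cylinder_cons.2 ⟨hmem, hdig, hT.symm ▸ hy⟩,
      by rw [List.length_cons, Function.iterate_succ_apply, hT, hiter]⟩

lemma wordValue_mem_cylinder (hv : Admissible m v) : wordValue β v ∈ cylinder β v :=
  (h.branch_mem_cylinder_of_digits ⟨le_rfl, zero_lt_one⟩
    (by rw [digits_zero_right]; exact hv.append_replicate_false m)).1

lemma branch_mem_cylinder (hv : Admissible m (v ++ W)) (hW : m ≤ W.length)
    (hx : x ∈ cylinder β W) :
    branch β v x ∈ cylinder β (v ++ W) ∧ (Tbeta β)^[v.length] (branch β v x) = x := by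
  obtain ⟨z, hz⟩ : digits β x m <+: W := hx.2 ▸ digits_prefix x hW
  have hok : Admissible m (v ++ digits β x m) := by
    rw [← hz, ← List.append_assoc] at hv
    exact hv.left
  obtain ⟨hmem, hiter⟩ := h.branch_mem_cylinder_of_digits hx.1 hok
  exact ⟨mem_cylinder_append.2 ⟨hmem, by rwa [hiter]⟩, hiter⟩

end IsMultinacciBase

end Admissible

section LetterWeight

variable {β : ℝ} {s : ℝ≥0} {A : Set (List Bool)}

/-- The weight `β⁻ˢ` of a letter: with it, the generating function of a language is the sum of
the `s`-th powers of the diameters `β^{-|u|}` of its cylinders. -/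
noncomputable def letterWeight (β : ℝ) (s : ℝ≥0) : ℝ≥0∞ := ENNReal.ofReal (β ^ (-(s : ℝ)))

lemma letterWeight_ne_top : letterWeight β s ≠ ⊤ := ENNReal.ofReal_ne_top

lemma letterWeight_ne_zero (hβ : 0 < β) : letterWeight β s ≠ 0 := by
  rw [letterWeight, ENNReal.ofReal_ne_zero_iff]
  positivity

lemma letterWeight_le_one (hβ : 1 ≤ β) : letterWeight β s ≤ 1 := by
  rw [letterWeight, ENNReal.ofReal_le_one]
  exact Real.rpow_le_one_of_one_le_of_nonpos hβ (by simp)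

lemma letterWeight_lt_one (hβ : 1 < β) (hs : 0 < s) : letterWeight β s < 1 := by
  rw [letterWeight, ENNReal.ofReal_lt_one]
  exact Real.rpow_lt_one_of_one_lt_of_neg hβ (by simpa using hs)

lemma letterWeight_add (hβ : 0 < β) (s s' : ℝ≥0) :
    letterWeight β (s + s') = letterWeight β s * letterWeight β s' := by
  rw [letterWeight, letterWeight, letterWeight, ← ENNReal.ofReal_mul (by positivity),
    ← Real.rpow_add hβ, NNReal.coe_add, neg_add]

lemma letterWeight_pow (hβ : 0 < β) (s : ℝ≥0) (n : ℕ) :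
    letterWeight β s ^ n = ENNReal.ofReal (1 / β ^ n) ^ (s : ℝ) := by
  rw [letterWeight, ENNReal.ofReal_rpow_of_pos (by positivity),
    ← ENNReal.ofReal_pow (by positivity), ← Real.rpow_mul_natCast hβ.le, one_div,
    ← Real.rpow_natCast β n, ← Real.rpow_neg hβ.le, ← Real.rpow_mul hβ.le, neg_mul, neg_mul,
    mul_comm]

lemma continuous_letterWeight (hβ : β ≠ 0) : Continuous (letterWeight β) :=
  ENNReal.continuous_ofReal.comp <|
    continuous_const.rpow NNReal.continuous_coe.neg fun _ => .inl hβ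

lemma continuous_genFun_letterWeight (hβ : β ≠ 0) (hA : A.Finite) :
    Continuous fun s => genFun (letterWeight β s) A := by
  have := hA.fintype
  simp only [genFun, tsum_fintype]
  exact continuous_finsetSum _ fun u _ =>
    (ENNReal.continuous_pow _).comp (continuous_letterWeight hβ)

lemma exists_lt_genFun_lt_one (hβ : β ≠ 0) (hA : A.Finite) (hs : 0 < s)
    (h : genFun (letterWeight β s) A < 1) : ∃ s' < s, genFun (letterWeight β s') A < 1 := by
  have hnhds := (continuous_genFun_letterWeight hβ hA).tendsto s (gt_mem_nhds h)
  obtain ⟨l, hl, hsub⟩ := exists_Ioc_subset_of_mem_nhds hnhds ⟨0, hs⟩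
  obtain ⟨s', hls, hss⟩ := exists_between hl
  exact ⟨s', hss, hsub ⟨hls, hss.le⟩⟩

lemma exists_gt_one_lt_genFun (hβ : β ≠ 0) (hA : A.Finite)
    (h : 1 < genFun (letterWeight β s) A) : ∃ s' > s, 1 < genFun (letterWeight β s') A := by
  have hnhds := (continuous_genFun_letterWeight hβ hA).tendsto s (lt_mem_nhds h)
  obtain ⟨l, hl, hsub⟩ := exists_Ico_subset_of_mem_nhds hnhds ⟨s + 1, by simp⟩
  obtain ⟨s', hls, hss⟩ := exists_between hl
  exact ⟨s', hls, hsub ⟨hls.le, hss⟩⟩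

lemma ediam_cylinder_rpow_le (hβ : β ∈ Ioc (0 : ℝ) 2) (s : ℝ≥0) (v : List Bool) :
    Metric.ediam (cylinder β v) ^ (s : ℝ) ≤ letterWeight β s ^ v.length := by
  rw [letterWeight_pow hβ.1]
  exact ENNReal.rpow_le_rpow (ediam_cylinder_le hβ v) (by simp)

lemma ediam_cylinder_le_pow (hβ : β ∈ Ioc (1 : ℝ) 2) {v : List Bool} {k : ℕ} (hk : k ≤ v.length) :
    Metric.ediam (cylinder β v) ≤ ENNReal.ofReal ((1 / β) ^ k) := by
  have hpos : 0 < β := zero_lt_one.trans hβ.1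
  refine (ediam_cylinder_le ⟨hpos, hβ.2⟩ v).trans (ENNReal.ofReal_le_ofReal ?_)
  rw [← one_div_pow]
  exact pow_le_pow_of_le_one (by positivity) ((div_le_one hpos).2 hβ.1.le) hk

lemma length_le_length_flatten {α : Type*} {L : List (List α)} (hL : ∀ u ∈ L, u ≠ []) :
    L.length ≤ L.flatten.length := by
  induction L with
  | nil => simp
  | cons u L ih =>
    rw [List.forall_mem_cons] at hL
    have hu := List.length_pos_of_ne_nil hL.1
    have := ih hL.2
    simp only [List.length_cons, List.flatten_cons, List.length_append]
    omega

lemma exists_mem_cylinder_flatten {X : Set ℝ} {R : Set (List Bool)}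
    (hR : ∀ x ∈ X, ∃ c ∈ R, x ∈ cylinder β c ∧ (Tbeta β)^[c.length] x ∈ X) (k : ℕ) :
    ∀ x ∈ X, ∃ L : List R, L.length = k ∧ x ∈ cylinder β (L.map Subtype.val).flatten := by
  induction k with
  | zero =>
    intro x hx
    obtain ⟨c, -, hxc, -⟩ := hR x hx
    exact ⟨[], rfl, hxc.1, rfl⟩
  | succ k ih =>
    intro x hx
    obtain ⟨c, hc, hxc, hT⟩ := hR x hx
    obtain ⟨L, hL, hxL⟩ := ih _ hT
    exact ⟨⟨c, hc⟩ :: L, by simp [hL], mem_cylinder_append.2 ⟨hxc, hxL⟩⟩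

/- The cylinders of all concatenations of `k` words of `R` cover `X`, and the sum of the `s`-th
powers of their diameters is at most the `k`-th power of the generating function of `R`. -/
lemma dimH_le_of_genFun_lt_one (hβ : β ∈ Ioc (1 : ℝ) 2) {X : Set ℝ} {R : Set (List Bool)}
    (hR : ∀ x ∈ X, ∃ c ∈ R, x ∈ cylinder β c ∧ (Tbeta β)^[c.length] x ∈ X)
    (hs : genFun (letterWeight β s) R < 1) : dimH X ≤ s := by
  have hpos : 0 < β := zero_lt_one.trans hβ.1
  have hne : ∀ c ∈ R, c ≠ [] := by
    rintro c hc rfl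
    have hone := genFun_mono (q := letterWeight β s) (singleton_subset_iff.2 hc)
    rw [genFun_singleton, List.length_nil, pow_zero] at hone
    exact hone.not_gt hs
  have hsum (k : ℕ) : ∑' L : {L : List R // L.length = k},
      Metric.ediam (cylinder β (L.1.map Subtype.val).flatten) ^ (s : ℝ) ≤
        genFun (letterWeight β s) R ^ k := by
    rw [genFun, ← tsum_prod_map_of_length_eq]
    refine ENNReal.tsum_le_tsum fun L => (ediam_cylinder_rpow_le ⟨hpos, hβ.2⟩ s _).trans_eq ?_
    rw [pow_length_flatten, List.map_map]
    rfl
  have hliminf : Measure.hausdorffMeasure (s : ℝ) X ≤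
      liminf (fun k : ℕ => ∑' L : {L : List R // L.length = k},
        Metric.ediam (cylinder β (L.1.map Subtype.val).flatten) ^ (s : ℝ)) atTop := by
    refine Measure.hausdorffMeasure_le_liminf_tsum
      (ι := fun k : ℕ => {L : List R // L.length = k}) s X
      (fun k => ENNReal.ofReal ((1 / β) ^ k)) ?_ _
      (.of_forall fun k L => ediam_cylinder_le_pow hβ ?_) (.of_forall fun k x hx => ?_)
    · rw [← ENNReal.ofReal_zero]
      exact (ENNReal.continuous_ofReal.tendsto _).comp (tendsto_pow_atTop_nhds_zero_of_lt_one
        (by positivity) ((div_lt_one hpos).2 hβ.1))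
    · calc k = (L.1.map Subtype.val).length := by rw [List.length_map, L.2]
        _ ≤ _ := length_le_length_flatten fun u hu => hne u (mem_of_mem_map_val _ u hu)
    · obtain ⟨L, hL, hxL⟩ := exists_mem_cylinder_flatten hR k x hx
      exact mem_iUnion.2 ⟨⟨L, hL⟩, hxL⟩
  have hzero : Measure.hausdorffMeasure (s : ℝ) X ≤ 0 :=
    hliminf.trans <| (liminf_le_liminf (.of_forall hsum)).trans_eq
      (ENNReal.tendsto_pow_atTop_nhds_zero_of_lt_one hs).liminf_eq
  exact dimH_le_of_hausdorffMeasure_ne_top (by simp [nonpos_iff_eq_zero.1 hzero])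

end LetterWeight

section SequenceValues

variable {β : ℝ} {σ : Stream' Bool}

/-- The value `∑ σᵢ β⁻ⁱ` in base `β` of an infinite sequence of digits. -/
noncomputable def seqValue (β : ℝ) (σ : Stream' Bool) : ℝ :=
  ∑' i, ((σ.get i).toNat : ℝ) / β ^ (i + 1)

lemma wordValue_take (hβ : 0 < β) (σ : Stream' Bool) (n : ℕ) :
    wordValue β (σ.take n) = ∑ i ∈ Finset.range n, ((σ.get i).toNat : ℝ) / β ^ (i + 1) := by
  induction n with
  | zero => rfl
  | succ n ih =>
    rw [Stream'.take_succ', wordValue_append, branch_eq hβ, ih, Finset.sum_range_succ,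
      Stream'.length_take, wordValue_cons, pow_succ']
    simp [wordValue, branch, div_div]

lemma summable_seqValue (hβ : 1 < β) (σ : Stream' Bool) :
    Summable fun i => ((σ.get i).toNat : ℝ) / β ^ (i + 1) := by
  have hpos : 0 < β := zero_lt_one.trans hβ
  have hgeom : Summable fun i : ℕ => (1 / β) ^ (i + 1) :=
    (summable_nat_add_iff 1).2 <|
      summable_geometric_of_lt_one (by positivity) ((div_lt_one hpos).2 hβ)
  refine hgeom.of_nonneg_of_le (fun i => by positivity) fun i => ?_
  rw [one_div_pow]
  gcongr
  exact mod_cast Bool.toNat_le _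

lemma tendsto_branch_take (hβ : 1 < β) (σ : Stream' Bool) (x : ℝ) :
    Tendsto (fun n => branch β (σ.take n) x) atTop (nhds (seqValue β σ)) := by
  have hpos : 0 < β := zero_lt_one.trans hβ
  simp only [branch_eq hpos, wordValue_take hpos, Stream'.length_take]
  simpa only [add_zero, seqValue] using (summable_seqValue hβ σ).hasSum.tendsto_sum_nat.add
    (tendsto_const_nhds.div_atTop (tendsto_pow_atTop_atTop_of_one_lt hβ))

lemma seqValue_nonneg (hβ : 0 < β) (σ : Stream' Bool) : 0 ≤ seqValue β σ :=
  tsum_nonneg fun _ => by positivity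

lemma seqValue_eq_branch (hβ : 1 < β) (σ : Stream' Bool) (n : ℕ) :
    seqValue β σ = branch β (σ.take n) (seqValue β (σ.drop n)) := by
  have hpos : 0 < β := zero_lt_one.trans hβ
  refine tendsto_nhds_unique (((tendsto_branch_take hβ σ 0).comp (tendsto_add_atTop_nat n)).congr
    fun k => ?_) (tendsto_const_nhds.add ((tendsto_branch_take hβ (σ.drop n) 0).div_const
      (β ^ (σ.take n).length)) |>.congr fun k => (branch_eq hpos _ _).symm) |>.trans
      (branch_eq hpos _ _).symm
  rw [Function.comp_apply, add_comm, Stream'.take_add, branch_append]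

lemma seqValue_eq (hβ : 1 < β) (σ : Stream' Bool) :
    seqValue β σ = (σ.head.toNat + seqValue β σ.tail) / β :=
  seqValue_eq_branch hβ σ 1

lemma iterate_Tbeta_seqValue (hβ : β ∈ Ioc (1 : ℝ) 2) (hσ : ∀ n, seqValue β (σ.drop n) < 1)
    (n : ℕ) : (Tbeta β)^[n] (seqValue β σ) = seqValue β (σ.drop n) ∧
      digits β (seqValue β σ) n = σ.take n := by
  have hpos : 0 < β := zero_lt_one.trans hβ.1
  induction n generalizing σ with
  | zero => exact ⟨rfl, rfl⟩
  | succ n ih =>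
    have htail : seqValue β σ.tail ∈ Ico (0 : ℝ) 1 := ⟨seqValue_nonneg hpos _, hσ 1⟩
    have hdigit : firstDigit β (seqValue β σ) = σ.head := by
      rw [seqValue_eq hβ.1, firstDigit_inverse_branch hpos _ htail]
    have hT : Tbeta β (seqValue β σ) = seqValue β σ.tail := by
      rw [Tbeta_eq ⟨hpos, hβ.2⟩ ⟨seqValue_nonneg hpos σ, hσ 0⟩, hdigit, seqValue_eq hβ.1 σ]
      field_simp
      ring
    obtain ⟨hiter, hdigits⟩ := ih (σ := σ.tail) fun k => hσ (k + 1)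
    exact ⟨by rw [Function.iterate_succ_apply, hT, hiter, Stream'.drop_succ],
      by rw [digits, hdigit, hT, hdigits, Stream'.take_succ]⟩

end SequenceValues

section SurvivorLanguage

variable {β τ : ℝ} {m : ℕ} {Q : List Bool → Prop} {u v : List Bool} {σ σ' : Stream' Bool}

/-- A property of words that passes to prefixes. -/
def PrefixClosed (Q : List Bool → Prop) : Prop := ∀ u v, u <+: v → Q v → Q u

/-- The admissible words that could, as far as their letters tell, begin the expansion of a
point of `K_β(τ)` all of whose digit blocks satisfy `Q`. The number `1 / (β - 1)` is the largest
value of a sequence of digits, so `τ ≤ branch β v (1 / (β - 1))` says that some continuation of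
`v` has value at least `τ`. -/
def survivorLang (β : ℝ) (m : ℕ) (τ : ℝ) (Q : List Bool → Prop) : Set (List Bool) :=
  {u | Admissible m u ∧ ∀ v, v <:+ u → τ ≤ branch β v (1 / (β - 1)) ∧ Q v}

/-- The infinite sequences all of whose prefixes lie in `survivorLang β m τ Q`. -/
def survivorSeqs (β : ℝ) (m : ℕ) (τ : ℝ) (Q : List Bool → Prop) : Set (Stream' Bool) :=
  {σ | ∀ n, σ.take n ∈ survivorLang β m τ Q}

/-- The points of `K_β(τ)` all of whose digit blocks satisfy `Q`. -/
def restrictedSurvivor (β τ : ℝ) (Q : List Bool → Prop) : Set ℝ :=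
  {x | x ∈ Kset β τ ∧ ∀ n k, Q (digits β ((Tbeta β)^[n] x) k)}

lemma branch_one_div_sub_one_le (hβ : 1 < β) (v : List Bool) :
    branch β v (1 / (β - 1)) ≤ 1 / (β - 1) := by
  have hsub : β - 1 ≠ 0 := (sub_pos.2 hβ).ne'
  induction v with
  | nil => exact le_rfl
  | cons d v ih =>
    have hd : (d.toNat : ℝ) ≤ 1 := mod_cast Bool.toNat_le d
    calc branch β (d :: v) (1 / (β - 1)) ≤ (1 + 1 / (β - 1)) / β := by
          rw [branch_cons]
          gcongr
      _ = 1 / (β - 1) := by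
          field_simp
          ring

lemma mem_survivorLang_of_suffix (huv : u <:+ v) (hv : v ∈ survivorLang β m τ Q) :
    u ∈ survivorLang β m τ Q :=
  ⟨hv.1.of_infix huv.isInfix, fun w hw => hv.2 w (hw.trans huv)⟩

lemma mem_survivorLang_of_prefix (hβ : 1 < β) (hQ : PrefixClosed Q) (huv : u <+: v)
    (hv : v ∈ survivorLang β m τ Q) : u ∈ survivorLang β m τ Q := by
  refine ⟨hv.1.of_infix huv.isInfix, ?_⟩
  rintro w ⟨a, rfl⟩
  obtain ⟨z, rfl⟩ := huv
  obtain ⟨hval, hQwz⟩ := hv.2 (w ++ z) ⟨a, by simp⟩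
  refine ⟨hval.trans ?_, hQ _ _ (List.prefix_append w z) hQwz⟩
  rw [branch_append]
  exact (strictMono_branch (zero_lt_one.trans hβ) w).monotone (branch_one_div_sub_one_le hβ z)

lemma drop_mem_survivorSeqs (hσ : σ ∈ survivorSeqs β m τ Q) (k : ℕ) :
    σ.drop k ∈ survivorSeqs β m τ Q := fun n =>
  mem_survivorLang_of_suffix (by rw [Stream'.take_add]; exact List.suffix_append _ _) (hσ (k + n))

lemma le_seqValue_of_mem_survivorSeqs (hβ : 1 < β) (hσ : σ ∈ survivorSeqs β m τ Q) :
    τ ≤ seqValue β σ :=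
  ge_of_tendsto' (tendsto_branch_take hβ σ (1 / (β - 1)))
    fun n => ((hσ n).2 _ List.suffix_rfl).1

namespace IsMultinacciBase

variable (h : IsMultinacciBase β m)
include h

lemma seqValue_le_one (hσ : σ ∈ survivorSeqs β m τ Q) : seqValue β σ ≤ 1 :=
  le_of_tendsto' (tendsto_branch_take h.one_lt σ 0)
    fun _ => (h.wordValue_mem_cylinder (hσ _).1).1.2.le

lemma head_eq_of_seqValue_eq (hτ : 0 < τ) (hσ : σ ∈ survivorSeqs β m τ Q)
    (hσ' : σ' ∈ survivorSeqs β m τ Q) (heq : seqValue β σ = seqValue β σ') :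
    σ.head = σ'.head := by
  have htail := drop_mem_survivorSeqs hσ 1
  have htail' := drop_mem_survivorSeqs hσ' 1
  have hle := h.seqValue_le_one htail
  have hle' := h.seqValue_le_one htail'
  have hge := le_seqValue_of_mem_survivorSeqs h.one_lt htail
  have hge' := le_seqValue_of_mem_survivorSeqs h.one_lt htail'
  rw [← Stream'.tail_eq_drop] at hle hle' hge hge'
  rw [seqValue_eq h.one_lt, seqValue_eq h.one_lt σ', div_left_inj' h.pos.ne'] at heq
  cases hd : σ.head <;> cases hd' : σ'.head <;>
    simp only [hd, hd', Bool.toNat_true, Bool.toNat_false, Nat.cast_one, Nat.cast_zero]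
      at heq ⊢ <;> linarith

lemma injOn_seqValue (hτ : 0 < τ) : InjOn (seqValue β) (survivorSeqs β m τ Q) := by
  intro σ hσ σ' hσ' heq
  have hget : ∀ n, ∀ σ ∈ survivorSeqs β m τ Q, ∀ σ' ∈ survivorSeqs β m τ Q,
      seqValue β σ = seqValue β σ' → σ.get n = σ'.get n := by
    intro n
    induction n with
    | zero => exact fun σ hσ σ' hσ' => h.head_eq_of_seqValue_eq hτ hσ hσ'
    | succ _ ih =>
      intro σ hσ σ' hσ' heq
      have hhead := h.head_eq_of_seqValue_eq hτ hσ hσ' heq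
      rw [seqValue_eq h.one_lt, seqValue_eq h.one_lt σ', hhead, div_left_inj' h.pos.ne',
        add_right_inj] at heq
      exact ih _ (drop_mem_survivorSeqs hσ 1) _ (drop_mem_survivorSeqs hσ' 1) heq
  exact Stream'.ext fun n => hget n σ hσ σ' hσ' heq

lemma seqValue_mem_restrictedSurvivor (hσ : σ ∈ survivorSeqs β m τ Q)
    (hlt : ∀ n, seqValue β (σ.drop n) < 1) : seqValue β σ ∈ restrictedSurvivor β τ Q := by
  have hβ : β ∈ Ioc (1 : ℝ) 2 := ⟨h.one_lt, h.lt_two.le⟩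
  refine ⟨⟨⟨seqValue_nonneg h.pos σ, hlt 0⟩, fun n => ?_⟩, fun n k => ?_⟩ <;>
    rw [(iterate_Tbeta_seqValue hβ hlt n).1]
  · exact le_seqValue_of_mem_survivorSeqs h.one_lt (drop_mem_survivorSeqs hσ n)
  · rw [(iterate_Tbeta_seqValue hβ (fun i => by rw [Stream'.drop_drop]; exact hlt _) k).2]
    exact ((drop_mem_survivorSeqs hσ n k).2 _ List.suffix_rfl).2

lemma countable_seqValue_drop_eq_one (hτ : 0 < τ) :
    {σ ∈ survivorSeqs β m τ Q | ∃ n, 1 ≤ seqValue β (σ.drop n)}.Countable := by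
  have hcover : {σ ∈ survivorSeqs β m τ Q | ∃ n, 1 ≤ seqValue β (σ.drop n)} ⊆
      ⋃ (n : ℕ) (u : List Bool),
        {σ ∈ survivorSeqs β m τ Q | σ.take n = u ∧ 1 ≤ seqValue β (σ.drop n)} := by
    rintro σ ⟨hσ, n, hn⟩
    exact mem_iUnion₂.2 ⟨n, σ.take n, hσ, rfl, hn⟩
  refine Countable.mono hcover (countable_iUnion fun n => countable_iUnion fun u =>
    Set.Subsingleton.countable ?_)
  rintro σ ⟨hσ, hu, hn⟩ σ' ⟨hσ', hu', hn'⟩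
  have hone := (h.seqValue_le_one (drop_mem_survivorSeqs hσ n)).antisymm hn
  have hone' := (h.seqValue_le_one (drop_mem_survivorSeqs hσ' n)).antisymm hn'
  apply h.injOn_seqValue hτ hσ hσ'
  rw [seqValue_eq_branch h.one_lt σ n, seqValue_eq_branch h.one_lt σ' n, hu, hu', hone, hone']

end IsMultinacciBase

end SurvivorLanguage

section Covers

variable {β τ : ℝ} {s : ℝ≥0}

lemma Tbeta_mem_Kset {x : ℝ} (hx : x ∈ Kset β τ) : Tbeta β x ∈ Kset β τ :=
  ⟨Tbeta_mem_Ico _ _, fun n => hx.2 (n + 1)⟩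

-- Two points of `K_β(τ)` whose first digits differ have images in `[τ, 1)`, hence lie on
-- different sides of the discontinuity `1 / β` and at distance at least `τ / β`.
lemma div_pow_le_abs_sub_of_digits_ne (hβ : β ∈ Ioc (1 : ℝ) 2) (hτ : 0 < τ) {x y : ℝ} {n : ℕ}
    (hx : x ∈ Kset β τ) (hy : y ∈ Kset β τ) (hne : digits β x n ≠ digits β y n) :
    τ / β ^ n ≤ |x - y| := by
  have hpos : 0 < β := zero_lt_one.trans hβ.1
  induction n generalizing x y with
  | zero => exact absurd rfl hne
  | succ n ih =>
    have hTx := Tbeta_mem_Kset hx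
    have hTy := Tbeta_mem_Kset hy
    have hxeq := Tbeta_eq ⟨hpos, hβ.2⟩ hx.1
    have hyeq := Tbeta_eq ⟨hpos, hβ.2⟩ hy.1
    rw [pow_succ, ← div_div, div_le_iff₀ hpos, ← abs_of_pos hpos, ← abs_mul, abs_of_pos hpos]
    by_cases hd : firstDigit β x = firstDigit β y
    · refine (ih hTx hTy fun hdig => hne (by rw [digits, digits, hd, hdig])).trans_eq ?_
      rw [hxeq, hyeq, hd]
      congr 1
      ring
    · have hle : τ / β ^ n ≤ τ := div_le_self hτ.le (one_le_pow₀ hβ.1.le)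
      have hτx : τ ≤ Tbeta β x := hTx.2 0
      have hτy : τ ≤ Tbeta β y := hTy.2 0
      have hx1 := hTx.1.2
      have hy1 := hTy.1.2
      rw [le_abs]
      cases hdx : firstDigit β x <;> cases hdy : firstDigit β y <;>
        simp only [hdx, hdy, Bool.toNat_true, Bool.toNat_false, Nat.cast_one, Nat.cast_zero,
          not_true_eq_false] at hd hxeq hyeq
      · right; linarith
      · left; linarith

lemma exists_cylinder_of_ediam_lt (hβ : β ∈ Ioc (1 : ℝ) 2) (hτ : 0 < τ) {A : Set ℝ} {d : ℝ}
    (hdτ : d ≤ τ) (hA : Metric.ediam A < ENNReal.ofReal d) :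
    ∃ e, A ∩ Kset β τ ⊆ cylinder β e ∧
      letterWeight β s ^ e.length ≤
        ENNReal.ofReal (β / τ) ^ (s : ℝ) * ENNReal.ofReal d ^ (s : ℝ) := by
  have hpos : 0 < β := zero_lt_one.trans hβ.1
  have hd : 0 < d := ENNReal.ofReal_pos.1 (bot_le.trans_lt hA)
  obtain ⟨n, hn, hn'⟩ := exists_nat_pow_near ((one_le_div hd).2 hdτ) hβ.1
  obtain ⟨x₀, hx₀⟩ : ∃ x₀, ∀ x ∈ A ∩ Kset β τ, x₀ ∈ A ∩ Kset β τ :=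
    (A ∩ Kset β τ).eq_empty_or_nonempty.elim (fun h => ⟨0, by simp [h]⟩)
      fun ⟨x₀, hx₀⟩ => ⟨x₀, fun _ _ => hx₀⟩
  refine ⟨digits β x₀ n, fun x hx => ⟨hx.2.1, ?_⟩, ?_⟩
  · obtain ⟨hx₀A, hx₀K⟩ := hx₀ x hx
    rw [length_digits]
    by_contra hne
    have hlt : |x - x₀| < d := by
      have hedist := (Metric.edist_le_ediam_of_mem hx.1 hx₀A).trans_lt hA
      rwa [edist_dist, Real.dist_eq, ENNReal.ofReal_lt_ofReal_iff hd] at hedist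
    refine hlt.not_ge (le_trans ?_ (div_pow_le_abs_sub_of_digits_ne hβ hτ hx.2 hx₀K hne))
    rwa [le_div_comm₀ hd (by positivity)]
  · rw [length_digits, letterWeight_pow hpos,
      ← ENNReal.mul_rpow_of_nonneg _ _ (NNReal.coe_nonneg s), ← ENNReal.ofReal_mul (by positivity)]
    refine ENNReal.rpow_le_rpow (ENNReal.ofReal_le_ofReal ?_) s.2
    rw [div_lt_iff₀ hd, pow_succ] at hn'
    rw [div_mul_eq_mul_div, div_le_div_iff₀ (by positivity) hτ]
    linarith

lemma exists_lt_rpow_lt_add {a b ε : ℝ≥0∞} (hab : a < b) (hε : 0 < ε) :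
    ∃ d, a < d ∧ d < b ∧ d ^ (s : ℝ) < a ^ (s : ℝ) + ε := by
  have hfin : a ^ (s : ℝ) ≠ ⊤ := ENNReal.rpow_ne_top_of_nonneg s.2 hab.ne_top
  have hlt : a ^ (s : ℝ) < a ^ (s : ℝ) + ε := ENNReal.lt_add_right hfin hε.ne'
  have hev := (ENNReal.continuous_rpow_const (y := s)).continuousAt.eventually (gt_mem_nhds hlt)
  have := nhdsGT_neBot_of_exists_gt ⟨b, hab⟩
  obtain ⟨d, hd, had, hdb⟩ :=
    ((hev.filter_mono nhdsWithin_le_nhds).and (Ioo_mem_nhdsGT hab)).exists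
  exact ⟨d, had, hdb, hd⟩

lemma exists_seq_cover_of_hausdorffMeasure_eq_zero {X : Set ℝ} (hs : 0 < s)
    (hX : Measure.hausdorffMeasure (s : ℝ) X = 0) {r ε : ℝ≥0∞} (hr : 0 < r) (hε : 0 < ε) :
    ∃ (A : ℕ → Set ℝ) (d : ℕ → ℝ≥0∞), X ⊆ ⋃ i, A i ∧ (∀ i, Metric.ediam (A i) < d i) ∧
      (∀ i, d i < r) ∧ ∑' i, d i ^ (s : ℝ) ≤ ε := by
  obtain ⟨r', hr', hr'r⟩ := exists_between hr
  have hε2 : 0 < ε / 2 := ENNReal.half_pos hε.ne'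
  obtain ⟨ε', hε', hsum'⟩ := ENNReal.exists_pos_sum_of_countable' hε2.ne' ℕ
  rw [Measure.hausdorffMeasure_apply] at hX
  have hinf := (le_iSup₂_of_le r' hr' le_rfl).trans_lt (hX.trans_lt hε2)
  simp only [iInf_lt_iff] at hinf
  obtain ⟨A, hcover, hdiam, hsum⟩ := hinf
  choose d had hdr hd using fun i => exists_lt_rpow_lt_add ((hdiam i).trans_lt hr'r) (hε' i)
  refine ⟨A, d, hcover, had, hdr, ?_⟩
  have hterm : ∀ i, d i ^ (s : ℝ) ≤
      (⨆ _ : (A i).Nonempty, Metric.ediam (A i) ^ (s : ℝ)) + ε' i := by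
    intro i
    refine (hd i).le.trans (add_le_add_left ?_ _)
    rcases (A i).eq_empty_or_nonempty with hempty | hne
    · simp [hempty, hs]
    · exact le_iSup_of_le hne le_rfl
  calc ∑' i, d i ^ (s : ℝ)
      ≤ ∑' i, ((⨆ _ : (A i).Nonempty, Metric.ediam (A i) ^ (s : ℝ)) + ε' i) :=
        ENNReal.tsum_le_tsum hterm
    _ ≤ ε / 2 + ε / 2 := by
        rw [ENNReal.tsum_add]
        exact add_le_add hsum.le hsum'.le
    _ = ε := ENNReal.add_halves ε

lemma exists_cylinder_cover_of_dimH_lt (hβ : β ∈ Ioc (1 : ℝ) 2) (hτ : 0 < τ) {X : Set ℝ}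
    (hX : X ⊆ Kset β τ) (hdim : dimH X < s) {ε : ℝ≥0∞} (hε : 0 < ε) :
    ∃ C : Set (List Bool), genFun (letterWeight β s) C ≤ ε ∧
      ∀ x ∈ X, ∃ c ∈ C, x ∈ cylinder β c := by
  have hs : 0 < s := ENNReal.coe_pos.1 (bot_le.trans_lt hdim)
  set K := ENNReal.ofReal (β / τ) ^ (s : ℝ)
  have hβτ : 0 < β / τ := div_pos (zero_lt_one.trans hβ.1) hτ
  have hK_top : K ≠ ⊤ := ENNReal.rpow_ne_top_of_nonneg s.2 ENNReal.ofReal_ne_top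
  have hK_pos : K ≠ 0 :=
    (ENNReal.rpow_pos (ENNReal.ofReal_pos.2 hβτ) ENNReal.ofReal_ne_top).ne'
  obtain ⟨A, d, hcover, had, hdτ, hsum⟩ := exists_seq_cover_of_hausdorffMeasure_eq_zero hs
    (hausdorffMeasure_of_dimH_lt hdim) (ENNReal.ofReal_pos.2 hτ) (ENNReal.div_pos hε.ne' hK_top)
  have hd_ofReal : ∀ i, ENNReal.ofReal (d i).toReal = d i := fun i =>
    ENNReal.ofReal_toReal (hdτ i).ne_top
  choose e he hweight using fun i => exists_cylinder_of_ediam_lt (s := s) hβ hτ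
    (ENNReal.toReal_le_of_le_ofReal hτ.le (hdτ i).le) ((had i).trans_eq (hd_ofReal i).symm)
  refine ⟨range e, ?_, fun x hx => ?_⟩
  · calc genFun (letterWeight β s) (range e) ≤ ∑' i, letterWeight β s ^ (e i).length :=
          genFun_range_le e
      _ ≤ ∑' i, K * d i ^ (s : ℝ) :=
          ENNReal.tsum_le_tsum fun i => (hweight i).trans_eq (by rw [hd_ofReal])
      _ ≤ K * (ε / K) := by
          rw [ENNReal.tsum_mul_left]
          gcongr
      _ = ε := ENNReal.mul_div_cancel hK_pos hK_top
  · obtain ⟨i, hi⟩ := mem_iUnion.1 (hcover hx)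
    exact ⟨e i, mem_range_self i, he i ⟨hi, hX hx⟩⟩

lemma exists_prefix_cover_of_countable {α : Type*} {q : ℝ≥0∞} (hq : q < 1) {N : Set (Stream' α)}
    (hN : N.Countable) {ε : ℝ≥0∞} (hε : 0 < ε) :
    ∃ C : Set (List α), genFun q C ≤ ε ∧ ∀ σ ∈ N, ∃ n, σ.take n ∈ C := by
  have := hN.to_subtype
  obtain ⟨ε', hε', hsum⟩ := ENNReal.exists_pos_sum_of_countable' hε.ne' N
  choose n hn using fun σ => ((ENNReal.tendsto_pow_atTop_nhds_zero_of_lt_one hq).eventually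
    (ge_mem_nhds (hε' σ))).exists
  refine ⟨range fun σ : N => σ.1.take (n σ), (genFun_range_le _).trans ?_,
    fun σ hσ => ⟨_, mem_range_self (⟨σ, hσ⟩ : N)⟩⟩
  simp only [Stream'.length_take]
  exact (ENNReal.tsum_le_tsum hn).trans hsum.le

end Covers

section FinitenessCriterion

variable {α : Type*} {q : ℝ≥0∞} {A C : Set (List α)}

lemma genFun_le_add_of_prefix_cover (hsuf : ∀ u v, u <:+ v → v ∈ A → u ∈ A) {L N : ℕ}
    (hL : ∀ u ∈ A, L ≤ u.length → ∃ c ∈ C, c <+: u) :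
    genFun q {u ∈ A | u.length < N} ≤
      genFun q {u : List α | u.length < L} + genFun q C * genFun q {u ∈ A | u.length < N} := by
  have hsub : {u ∈ A | u.length < N} ⊆
      {u | u.length < L} ∪ image2 (· ++ ·) C {u ∈ A | u.length < N} := by
    rintro u ⟨hu, hN⟩
    rcases lt_or_ge u.length L with hlt | hge
    · exact .inl hlt
    · obtain ⟨c, hc, v, rfl⟩ := hL u hu hge
      have hv : v <:+ c ++ v := List.suffix_append c v
      exact .inr ⟨c, hc, v, ⟨hsuf _ _ hv hu, hv.length_le.trans_lt hN⟩, rfl⟩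
  calc genFun q {u ∈ A | u.length < N}
      ≤ genFun q ({u | u.length < L} ∪ image2 (· ++ ·) C {u ∈ A | u.length < N}) :=
        genFun_mono hsub
    _ ≤ _ := genFun_union_le.trans (add_le_add_right (genFun_image2_append_le _ _) _)

lemma genFun_le_of_prefix_cover [Finite α] (hq : q ≠ ⊤)
    (hsuf : ∀ u v, u <:+ v → v ∈ A → u ∈ A) (hC : genFun q C ≤ 2⁻¹) {L : ℕ}
    (hL : ∀ u ∈ A, L ≤ u.length → ∃ c ∈ C, c <+: u) :
    genFun q A ≤ 2 * genFun q {u : List α | u.length < L} := by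
  set b := genFun q {u : List α | u.length < L}
  have htrunc : ∀ N, genFun q {u ∈ A | u.length < N} ≤ 2 * b := by
    intro N
    set a := genFun q {u ∈ A | u.length < N}
    have ha_top : a / 2 ≠ ⊤ := ENNReal.div_ne_top (genFun_ne_top_of_finite hq
      ((List.finite_length_lt α N).subset fun u hu => hu.2)) two_ne_zero
    have hhalf : a / 2 + a / 2 ≤ b + a / 2 := by
      rw [ENNReal.add_halves, ENNReal.div_eq_inv_mul]
      exact (genFun_le_add_of_prefix_cover hsuf hL).trans
        (add_le_add_right (mul_le_mul_left hC a) b)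
    rw [mul_comm, ← ENNReal.div_le_iff_le_mul (by simp) (by simp)]
    exact (ENNReal.add_le_add_iff_right ha_top).1 hhalf
  by_contra! hlt
  obtain ⟨F, hFA, hF⟩ := exists_finset_lt_genFun hlt
  refine hF.not_ge ((genFun_mono fun u hu => ?_).trans (htrunc (F.sup List.length + 1)))
  exact ⟨hFA hu, Nat.lt_succ_of_le (Finset.le_sup (f := List.length) hu)⟩

-- König's lemma: a prefix-closed set with no infinite branch avoiding `C` has bounded height
-- outside the words with a prefix in `C`.
lemma exists_forall_exists_prefix_mem [Finite α] (hpre : ∀ u v, u <+: v → v ∈ A → u ∈ A)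
    (hC : ∀ σ : Stream' α, (∀ n, σ.take n ∈ A) → ∃ n, σ.take n ∈ C) :
    ∃ L : ℕ, ∀ u ∈ A, L ≤ u.length → ∃ c ∈ C, c <+: u := by
  by_contra! hno
  obtain ⟨σ, hσ⟩ := exists_stream_of_prefixClosed (A := {u ∈ A | ∀ c ∈ C, ¬ c <+: u})
    (fun u v huv hv => ⟨hpre u v huv hv.1, fun c hc hcu => hv.2 c hc (hcu.trans huv)⟩) fun n => by
      obtain ⟨u, hu, hn, hCu⟩ := hno n
      exact ⟨u.take n, ⟨hpre _ _ (List.take_prefix n u) hu, fun c hc hcu =>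
        hCu c hc (hcu.trans (List.take_prefix n u))⟩, List.length_take_of_le hn⟩
  obtain ⟨n, hn⟩ := hC σ fun n => (hσ n).1
  exact (hσ n).2 _ hn List.prefix_rfl

lemma IsMultinacciBase.genFun_survivorLang_ne_top {β τ : ℝ} {m : ℕ} (h : IsMultinacciBase β m)
    {s : ℝ≥0} (hτ : 0 < τ) {Q : List Bool → Prop} (hQ : PrefixClosed Q)
    (hdim : dimH (restrictedSurvivor β τ Q) < s) :
    genFun (letterWeight β s) (survivorLang β m τ Q) ≠ ⊤ := by
  have hβ : β ∈ Ioc (1 : ℝ) 2 := ⟨h.one_lt, h.lt_two.le⟩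
  have hs : 0 < s := ENNReal.coe_pos.1 (bot_le.trans_lt hdim)
  have hquarter : (0 : ℝ≥0∞) < 2⁻¹ / 2 := ENNReal.half_pos (by simp)
  obtain ⟨C₁, hC₁, hcover₁⟩ :=
    exists_cylinder_cover_of_dimH_lt hβ hτ (fun x hx => hx.1) hdim hquarter
  obtain ⟨C₂, hC₂, hcover₂⟩ := exists_prefix_cover_of_countable (letterWeight_lt_one hβ.1 hs)
    (h.countable_seqValue_drop_eq_one hτ (Q := Q)) hquarter
  have hbranch : ∀ σ ∈ survivorSeqs β m τ Q, ∃ n, σ.take n ∈ C₁ ∪ C₂ := by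
    intro σ hσ
    by_cases hlt : ∀ n, seqValue β (σ.drop n) < 1
    · obtain ⟨c, hc, -, hcσ⟩ := hcover₁ _ (h.seqValue_mem_restrictedSurvivor hσ hlt)
      rw [(iterate_Tbeta_seqValue hβ hlt c.length).2] at hcσ
      exact ⟨c.length, .inl (hcσ.symm ▸ hc)⟩
    · push Not at hlt
      exact (hcover₂ σ ⟨hσ, hlt⟩).imp fun n hn => .inr hn
  obtain ⟨L, hL⟩ := exists_forall_exists_prefix_mem
    (fun u v => mem_survivorLang_of_prefix h.one_lt hQ) hbranch
  have hC : genFun (letterWeight β s) (C₁ ∪ C₂) ≤ 2⁻¹ :=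
    genFun_union_le.trans ((add_le_add hC₁ hC₂).trans_eq (ENNReal.add_halves _))
  refine ne_top_of_le_ne_top (ENNReal.mul_ne_top (by simp) ?_) (genFun_le_of_prefix_cover
    letterWeight_ne_top (fun u v => mem_survivorLang_of_suffix) hC hL)
  exact genFun_ne_top_of_finite letterWeight_ne_top (List.finite_length_lt Bool L)

end FinitenessCriterion

section SurvivorSets

variable {β t τ x y : ℝ} {W : List Bool} {X : Set ℝ}

lemma iterate_mem_Kset (hx : x ∈ Kset β t) (n : ℕ) : (Tbeta β)^[n] x ∈ Kset β t :=
  ⟨iterate_Tbeta_mem_Ico hx.1 n, fun k => iterate_add_apply' _ n k x ▸ hx.2 (n + k)⟩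

lemma antitone_Kset (β : ℝ) : Antitone (Kset β) :=
  fun _ _ h _ hx => ⟨hx.1, fun n => h.trans (hx.2 n)⟩

lemma restrictedSurvivor_true (β τ : ℝ) : restrictedSurvivor β τ (fun _ => True) = Kset β τ :=
  Set.ext fun _ => and_iff_left fun _ _ => trivial

lemma dimH_image_branch (hβ : 0 < β) (u : List Bool) (X : Set ℝ) :
    dimH (branch β u '' X) = dimH X := by
  have hpow : 0 < β ^ u.length := pow_pos hβ _
  have hdist : ∀ x y, dist (branch β u x) (branch β u y) = dist x y / β ^ u.length := fun x y => by
    rw [Real.dist_eq, Real.dist_eq, branch_sub_branch hβ, abs_div, abs_of_pos hpow]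
  apply le_antisymm
  · refine (LipschitzWith.of_dist_le_mul (K := Real.toNNReal (1 / β ^ u.length)) fun x y => ?_)
      |>.dimH_image_le X
    rw [hdist, Real.coe_toNNReal _ (by positivity), one_div_mul_eq_div]
  · refine (AntilipschitzWith.of_le_mul_dist (K := Real.toNNReal (β ^ u.length)) fun x y => ?_)
      |>.le_dimH_image X
    rw [hdist, Real.coe_toNNReal _ hpow.le, mul_div_cancel₀ _ hpow.ne']

/-- The points of `X` whose orbit never visits the cylinder of `W`. -/
def avoiding (β : ℝ) (W : List Bool) (X : Set ℝ) : Set ℝ :=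
  {x | x ∈ X ∧ ∀ n, (Tbeta β)^[n] x ∉ cylinder β W}

/-- The points of `X` in the cylinder of `W` whose orbit visits that cylinder infinitely often. -/
def recurring (β : ℝ) (W : List Bool) (X : Set ℝ) : Set ℝ :=
  {x | x ∈ X ∧ x ∈ cylinder β W ∧ ∀ N, ∃ n ≥ N, (Tbeta β)^[n] x ∈ cylinder β W}

lemma frequently_iterate_iterate {P : ℝ → Prop} (h : ∀ N, ∃ n ≥ N, P ((Tbeta β)^[n] x))
    (k N : ℕ) : ∃ n ≥ N, P ((Tbeta β)^[n] ((Tbeta β)^[k] x)) := by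
  obtain ⟨n, hn, hP⟩ := h (k + N)
  refine ⟨n - k, by omega, ?_⟩
  rwa [← iterate_add_apply', Nat.add_sub_cancel' (by omega)]

lemma dimH_le_max_avoiding_recurring (hβ : β ∈ Ioc (0 : ℝ) 2) (W : List Bool)
    (hX : X ⊆ Ico (0 : ℝ) 1) (hT : MapsTo (Tbeta β) X X) :
    dimH X ≤ max (dimH (avoiding β W X)) (dimH (recurring β W X)) := by
  have hcover : X ⊆ (⋃ u, branch β u '' avoiding β W X) ∪ ⋃ u, branch β u '' recurring β W X := by
    intro x hx
    by_cases hrec : ∀ N, ∃ n ≥ N, (Tbeta β)^[n] x ∈ cylinder β W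
    · obtain ⟨n, -, hn⟩ := hrec 0
      exact .inr <| mem_iUnion.2 ⟨digits β x n, (Tbeta β)^[n] x,
        ⟨hT.iterate n hx, hn, frequently_iterate_iterate hrec n⟩, branch_digits hβ (hX hx) n⟩
    · push Not at hrec
      obtain ⟨n, hn⟩ := hrec
      refine .inl <| mem_iUnion.2 ⟨digits β x n, (Tbeta β)^[n] x,
        ⟨hT.iterate n hx, fun k => ?_⟩, branch_digits hβ (hX hx) n⟩
      rw [← iterate_add_apply']
      exact hn _ (Nat.le_add_right n k)
  refine (dimH_mono hcover).trans ?_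
  simp only [dimH_union, dimH_iUnion, dimH_image_branch hβ.1, ciSup_const, le_refl]

lemma exists_gt_mem_cylinder_digits (hβ : β ∈ Ioc (0 : ℝ) 2) (hx : x ∈ Ico (0 : ℝ) 1) (n : ℕ) :
    ∃ y ∈ cylinder β (digits β x n), x < y := by
  induction n generalizing x with
  | zero =>
    obtain ⟨y, hxy, hy⟩ := exists_between hx.2
    exact ⟨y, ⟨⟨hx.1.trans hxy.le, hy⟩, rfl⟩, hxy⟩
  | succ n ih =>
    have hTx := Tbeta_mem_Ico β x
    obtain ⟨z, hz, hxz⟩ := ih hTx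
    set d := firstDigit β x
    have hTβ : Tbeta β x = β * x - d.toNat := Tbeta_eq hβ hx
    have hroom : Tbeta β x < min z (β - d.toNat) := lt_min hxz (by nlinarith [hβ.1, hx.2])
    obtain ⟨y, hxy, hy⟩ := exists_between hroom
    have hyz : y ∈ cylinder β (digits β (Tbeta β x) n) :=
      (ordConnected_cylinder hβ _).out (mem_cylinder_digits hTx n) hz
        ⟨hxy.le, (hy.trans_le (min_le_left _ _)).le⟩
    have hlt : x < (d.toNat + y) / β := by
      rw [lt_div_iff₀ hβ.1]
      linarith
    have hmem : (d.toNat + y) / β ∈ Ico (0 : ℝ) 1 := by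
      refine ⟨hx.1.trans hlt.le, (div_lt_one hβ.1).2 ?_⟩
      linarith [hy.trans_le (min_le_right _ _)]
    have hdigit := firstDigit_inverse_branch hβ.1 d hyz.1
    refine ⟨_, mem_cylinder_cons.2 ⟨hmem, hdigit, ?_⟩, hlt⟩
    rwa [Tbeta_eq hβ hmem, hdigit, mul_div_cancel₀ _ hβ.1.ne', add_sub_cancel_left]

lemma dimH_Kset_lt_of_mem_Bset (ht : t ∈ Bset β) (hτ : t < τ) (hτ1 : τ < 1) :
    dimH (Kset β τ) < dimH (Kset β t) :=
  (dimH_mono (antitone_Kset β hτ.le)).lt_of_ne (ht.2 τ hτ hτ1)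

lemma mem_Kset_of_mem_Bset (hβ : β ∈ Ioc (0 : ℝ) 2) (ht : t ∈ Bset β) : t ∈ Kset β t := by
  refine ⟨ht.1, fun n => ?_⟩
  by_contra! hlt
  obtain ⟨z, hz, htz⟩ := exists_gt_mem_cylinder_digits hβ ht.1 n
  have hgap : 0 < (t - (Tbeta β)^[n] t) / β ^ n := div_pos (sub_pos.2 hlt) (pow_pos hβ.1 n)
  obtain ⟨τ, htτ, hτ⟩ := exists_between (lt_min htz (lt_add_of_pos_right t hgap))
  obtain ⟨hτz, hτgap⟩ := lt_min_iff.1 hτ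
  refine ht.2 τ htτ (hτz.trans hz.1.2) (congrArg dimH (Subset.antisymm
    (antitone_Kset β htτ.le) fun x hx => ⟨hx.1, fun j => ?_⟩))
  by_contra! hlt'
  -- An orbit of `K_β(t)` that entered `[t, τ)` would be below `t` after `n` more steps.
  set w := (Tbeta β)^[j] x
  have hw : w ∈ cylinder β (digits β t n) := (ordConnected_cylinder hβ _).out
    (mem_cylinder_digits ht.1 n) hz ⟨hx.2 j, (hlt'.trans hτz).le⟩
  have hle : t ≤ (Tbeta β)^[n] w := by
    rw [← iterate_add_apply']
    exact hx.2 _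
  have hsub := branch_sub_branch hβ.1 (digits β t n) ((Tbeta β)^[n] w) ((Tbeta β)^[n] t)
  rw [branch_digits hβ ht.1, length_digits] at hsub
  have hbw := branch_iterate_of_mem_cylinder hβ hw
  rw [length_digits] at hbw
  rw [hbw] at hsub
  have : (t - (Tbeta β)^[n] t) / β ^ n ≤ ((Tbeta β)^[n] w - (Tbeta β)^[n] t) / β ^ n := by
    have := hβ.1
    gcongr
  linarith

lemma dimH_avoiding_lt_of_mem_Bset (hβ : β ∈ Ioc (0 : ℝ) 2) (ht : t ∈ Bset β) (N : ℕ) :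
    dimH (avoiding β (digits β t N) (Kset β t)) < dimH (Kset β t) := by
  obtain ⟨τ, hτ, htτ⟩ := exists_gt_mem_cylinder_digits hβ ht.1 N
  refine (dimH_mono ?_).trans_lt (dimH_Kset_lt_of_mem_Bset ht htτ hτ.1.2)
  rintro x ⟨hx, havoid⟩
  have hmem := iterate_mem_Kset hx
  exact ⟨hx.1, fun n => (lt_of_mem_cylinder_of_notMem hβ (mem_cylinder_digits ht.1 N)
    (hx.2 n) (hmem n).1 (havoid n) le_rfl (mem_cylinder_digits (hmem n).1 _) hτ).le⟩

lemma exists_digits_ne (hβ : β ∈ Ioc (1 : ℝ) 2) (hx : x ∈ Ico (0 : ℝ) 1) (hy : y ∈ Ico (0 : ℝ) 1)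
    (hxy : x ≠ y) : ∃ n, digits β x n ≠ digits β y n := by
  have hpos : 0 < β := zero_lt_one.trans hβ.1
  by_contra! heq
  have hbound : ∀ n, |x - y| ≤ (1 / β) ^ n := fun n => by
    have hxn := branch_digits ⟨hpos, hβ.2⟩ hx n
    rw [heq n] at hxn
    have hsub := branch_sub_branch hpos (digits β y n) ((Tbeta β)^[n] x) ((Tbeta β)^[n] y)
    rw [hxn, branch_digits ⟨hpos, hβ.2⟩ hy, length_digits] at hsub
    have hxI := iterate_Tbeta_mem_Ico (β := β) hx n
    have hyI := iterate_Tbeta_mem_Ico (β := β) hy n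
    rw [hsub, abs_div, abs_of_pos (pow_pos hpos n), one_div_pow]
    gcongr
    exact abs_sub_le_iff.2 ⟨by linarith [hxI.2, hyI.1], by linarith [hyI.2, hxI.1]⟩
  have hlim : Tendsto (fun n : ℕ => (1 / β) ^ n) atTop (nhds 0) :=
    tendsto_pow_atTop_nhds_zero_of_lt_one (by positivity) ((div_lt_one hpos).2 hβ.1)
  exact hxy (sub_eq_zero.1 (abs_nonpos_iff.1 (ge_of_tendsto' hlim hbound)))

lemma eventually_iterate_notMem_cylinder_digits (hβ : β ∈ Ioc (1 : ℝ) 2) (ht : t ∈ Ico (0 : ℝ) 1)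
    (L : ℕ) (hL : ∀ l, 0 < l → l < L → (Tbeta β)^[l] t ≠ t) :
    ∀ᶠ N in atTop, ∀ l, 0 < l → l < L → (Tbeta β)^[l] t ∉ cylinder β (digits β t N) := by
  have hfin : ∀ᶠ N in atTop, ∀ l ∈ Finset.Ioo 0 L,
      (Tbeta β)^[l] t ∉ cylinder β (digits β t N) := by
    refine (Filter.eventually_all_finset _).2 fun l hl => ?_
    obtain ⟨hl0, hlL⟩ := Finset.mem_Ioo.1 hl
    obtain ⟨n, hn⟩ := exists_digits_ne hβ (iterate_Tbeta_mem_Ico ht l) ht (hL l hl0 hlL)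
    filter_upwards [eventually_ge_atTop n] with N hN hmem
    exact hn (by simpa only [length_digits] using (cylinder_anti (digits_prefix t hN) hmem).2)
  filter_upwards [hfin] with N hN l hl0 hlL using hN l (Finset.mem_Ioo.2 ⟨hl0, hlL⟩)

end SurvivorSets

section BlockCodes

variable {β t τ : ℝ} {m : ℕ} {s : ℝ≥0} {W : List Bool} {D : Set (List Bool)}
  {Q : List Bool → Prop}

lemma IsBlockCode.genFun_eq_top {α : Type*} {q : ℝ≥0∞} {W : List α} {A D : Set (List α)}
    (hD : IsBlockCode W D) (hq : 1 ≤ genFun q D)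
    (hA : ∀ L : List (List α), (∀ d ∈ L, d ∈ D) → L.flatten ∈ A) : genFun q A = ⊤ := by
  let f : List D → A := fun L => ⟨(L.map Subtype.val).flatten, hA _ (mem_of_mem_map_val L)⟩
  have hf : Function.Injective f := fun L L' hLL' =>
    hD.injective_flatten (congrArg Subtype.val hLL')
  refine top_le_iff.1 ?_
  calc (⊤ : ℝ≥0∞) = ∑' _ : ℕ, 1 := (ENNReal.tsum_const_eq_top_of_ne_zero one_ne_zero).symm
    _ ≤ ∑' k : ℕ, genFun q D ^ k := ENNReal.tsum_le_tsum fun k => one_le_pow₀ hq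
    _ = ∑' L : List D, q ^ (f L).1.length := by
      simp only [genFun, ← tsum_prod_map, f, pow_length_flatten, List.map_map, Function.comp_def]
    _ ≤ genFun q A := ENNReal.tsum_comp_le_tsum_of_injective hf _

/-- The words whose occurrence in front of `W` creates a second occurrence of `W` and no run of
`m + 1` ones. -/
def loopWords (m : ℕ) (W : List Bool) : Set (List Bool) :=
  {d | W <+: d ++ W ∧ Admissible m (d ++ W)}

lemma append_mem_loopWords {d e : List Bool} (hW : m ≤ W.length) (hd : d ∈ loopWords m W)
    (he : e ∈ loopWords m W) : d ++ e ∈ loopWords m W := by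
  refine ⟨?_, ?_⟩ <;> rw [List.append_assoc]
  · exact hd.1.trans ((List.prefix_append_right_inj d).2 he.1)
  · exact hd.2.append_of_prefix he.2 he.1 hW

lemma flatten_mem_loopWords (hW : m ≤ W.length) (hadm : Admissible m W)
    {L : List (List Bool)} (hL : ∀ d ∈ L, d ∈ loopWords m W) : L.flatten ∈ loopWords m W := by
  induction L with
  | nil => exact ⟨List.prefix_rfl, hadm⟩
  | cons d L ih =>
    exact append_mem_loopWords hW (hL d List.mem_cons_self)
      (ih fun e he => hL e (List.mem_cons_of_mem _ he))

lemma wordPow_mem_loopWords {d : List Bool} (hW : m ≤ W.length) (hd : d ∈ loopWords m W) (k : ℕ) :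
    wordPow d k ∈ loopWords m W :=
  flatten_mem_loopWords hW hd.2.right fun _ he => List.eq_of_mem_replicate he ▸ hd

lemma admissible_append_of_suffix {d v : List Bool} (hd : d ∈ loopWords m W) (hv : v <:+ d) :
    Admissible m (v ++ W) := by
  obtain ⟨u, rfl⟩ := hv
  have hadm := hd.2
  rw [List.append_assoc] at hadm
  exact hadm.right

lemma le_wordValue_append_of_suffix_flatten (hβ : 0 < β) (hD : ∀ d ∈ D, W <+: d ++ W)
    (hval : ∀ d ∈ D, ∀ v, v <:+ d → v ≠ [] → τ ≤ wordValue β (v ++ W))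
    {L : List (List Bool)} (hL : ∀ d ∈ L, d ∈ D) {v : List Bool} (hv : v <:+ L.flatten)
    (hne : v ≠ []) : τ ≤ wordValue β (v ++ W) := by
  induction L generalizing v with
  | nil => exact absurd (List.suffix_nil.1 hv) hne
  | cons d L ih =>
    have hL' : ∀ e ∈ L, e ∈ D := fun e he => hL e (List.mem_cons_of_mem _ he)
    rw [List.flatten_cons] at hv
    rcases suffix_append_cases hv with hv | ⟨u, hu, hud, rfl⟩
    · exact ih hL' hv hne
    · obtain ⟨z, hz⟩ := prefix_flatten_append hD hL'
      rw [List.append_assoc, ← hz, ← List.append_assoc]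
      exact (hval d (hL d List.mem_cons_self) u hud hu).trans
        (wordValue_le_wordValue_append hβ _ _)

lemma exists_gt_le_wordValue_append (hD : D.Finite) {b : ℝ} (hb : t < b)
    (hval : ∀ d ∈ D, ∀ v, v <:+ d → v ≠ [] → t < wordValue β (v ++ W)) :
    ∃ τ, t < τ ∧ τ ≤ b ∧ ∀ d ∈ D, ∀ v, v <:+ d → v ≠ [] → τ ≤ wordValue β (v ++ W) := by
  set V := ⋃ d ∈ D, {v : List Bool | v <:+ d}
  have hV : V.Finite := hD.biUnion fun d _ =>
    (List.finite_toSet d.tails).subset fun v hv => (List.mem_tails v d).2 hv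
  have hS : (insert b ((fun v => wordValue β (v ++ W)) '' {v | v ∈ V ∧ v ≠ []})).Finite :=
    ((hV.subset fun _ hv => hv.1).image _).insert b
  obtain ⟨τ, hτ, hmin⟩ := exists_min_image _ id hS ⟨b, mem_insert _ _⟩
  refine ⟨τ, ?_, hmin b (mem_insert _ _), fun d hd v hvd hne => hmin _ (mem_insert_of_mem _
    ⟨v, ⟨mem_biUnion hd hvd, hne⟩, rfl⟩)⟩
  rcases hτ with rfl | ⟨v, ⟨hvV, hne⟩, rfl⟩
  · exact hb
  · obtain ⟨d, hd, hvd⟩ := mem_iUnion₂.1 hvV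
    exact hval d hd v hvd hne

namespace IsMultinacciBase

variable (h : IsMultinacciBase β m)
include h

lemma flatten_mem_survivorLang (hτ : τ ≤ 1) (hW : m ≤ W.length) (hadm : Admissible m W)
    (hD : D ⊆ loopWords m W)
    (hval : ∀ d ∈ D, ∀ v, v <:+ d → v ≠ [] → τ ≤ wordValue β (v ++ W))
    {L : List (List Bool)} (hL : ∀ d ∈ L, d ∈ D) (hQ : ∀ v, v <:+ L.flatten → Q v) :
    L.flatten ∈ survivorLang β m τ Q := by
  refine ⟨(flatten_mem_loopWords hW hadm fun d hd => hD (hL d hd)).2.left,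
    fun v hv => ⟨?_, hQ v hv⟩⟩
  by_cases hne : v = []
  · subst hne
    exact hτ.trans ((one_le_div (sub_pos.2 h.one_lt)).2 (by linarith [h.lt_two]))
  · calc τ ≤ wordValue β (v ++ W) :=
          le_wordValue_append_of_suffix_flatten h.pos (fun d hd => (hD hd).1) hval hL hv hne
      _ = branch β v (wordValue β W) := wordValue_append v W
      _ ≤ branch β v (1 / (β - 1)) :=
          (strictMono_branch h.pos v).monotone (wordValue_lt h.one_lt W).le

lemma le_dimH_restrictedSurvivor (hτ0 : 0 < τ) (hτ : τ ≤ 1) (hQ : PrefixClosed Q)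
    (hW : m ≤ W.length) (hadm : Admissible m W) (hcode : IsBlockCode W D)
    (hD : D ⊆ loopWords m W)
    (hval : ∀ d ∈ D, ∀ v, v <:+ d → v ≠ [] → τ ≤ wordValue β (v ++ W))
    (hQD : ∀ L : List (List Bool), (∀ d ∈ L, d ∈ D) → ∀ v, v <:+ L.flatten → Q v)
    (hs : 1 ≤ genFun (letterWeight β s) D) : s ≤ dimH (restrictedSurvivor β τ Q) := by
  by_contra! hdim
  exact h.genFun_survivorLang_ne_top hτ0 hQ hdim <| hcode.genFun_eq_top hs fun L hL =>
    h.flatten_mem_survivorLang hτ hW hadm hD hval hL (hQD L hL)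

lemma le_dimH_Kset (hτ0 : 0 < τ) (hτ : τ ≤ 1) (hW : m ≤ W.length) (hadm : Admissible m W)
    (hcode : IsBlockCode W D) (hD : D ⊆ loopWords m W)
    (hval : ∀ d ∈ D, ∀ v, v <:+ d → v ≠ [] → τ ≤ wordValue β (v ++ W))
    (hs : 1 ≤ genFun (letterWeight β s) D) : s ≤ dimH (Kset β τ) := by
  rw [← restrictedSurvivor_true]
  exact h.le_dimH_restrictedSurvivor hτ0 hτ (fun _ _ _ _ => trivial) hW hadm hcode hD hval
    (fun _ _ _ _ => trivial) hs

lemma exists_gt_le_dimH_Kset (ht : t ∈ Ico (0 : ℝ) 1) (hW : m ≤ W.length) (hadm : Admissible m W)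
    (hfin : D.Finite) (hcode : IsBlockCode W D) (hD : D ⊆ loopWords m W)
    (hval : ∀ d ∈ D, ∀ v, v <:+ d → v ≠ [] → t < wordValue β (v ++ W))
    (hs : 1 ≤ genFun (letterWeight β s) D) : ∃ τ > t, s ≤ dimH (Kset β τ) := by
  obtain ⟨τ, htτ, hτ1, hτ⟩ := exists_gt_le_wordValue_append hfin ht.2 hval
  exact ⟨τ, htτ, h.le_dimH_Kset (ht.1.trans_lt htτ) hτ1 hW hadm hcode hD hτ hs⟩

end IsMultinacciBase

end BlockCodes

section ReturnWords

variable {β t x z : ℝ} {m : ℕ} {s : ℝ≥0} {W c v : List Bool}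

/-- The first return words to `W` of the points of `K_β(t)`: the words that such a point, started
in the cylinder of `W`, reads until its orbit first comes back to that cylinder. -/
def returnWords (β t : ℝ) (W : List Bool) : Set (List Bool) :=
  {c | c ≠ [] ∧ ∃ x ∈ Kset β t, x ∈ cylinder β W ∧ x ∈ cylinder β (c ++ W) ∧
    ∀ j, 0 < j → j < c.length → (Tbeta β)^[j] x ∉ cylinder β W}

lemma exists_returnWord_of_mem_recurring (hx : x ∈ recurring β W (Kset β t)) :
    ∃ c ∈ returnWords β t W,
      x ∈ cylinder β c ∧ (Tbeta β)^[c.length] x ∈ recurring β W (Kset β t) := by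
  classical
  obtain ⟨hK, hW, hrec⟩ := hx
  obtain ⟨hpos, hret⟩ := Nat.find_spec (hrec 1)
  set n := Nat.find (hrec 1)
  have hxn := mem_cylinder_digits (β := β) hK.1 n
  refine ⟨digits β x n, ⟨?_, x, hK, hW, mem_cylinder_append.2 ⟨hxn, ?_⟩, fun j hj hjn hmem => ?_⟩,
    hxn, ?_⟩
  · exact List.length_pos_iff.1 (by rwa [length_digits])
  · rwa [length_digits]
  · rw [length_digits] at hjn
    exact Nat.find_min (hrec 1) hjn ⟨hj, hmem⟩
  · rw [length_digits]
    exact ⟨iterate_mem_Kset hK n, hret, frequently_iterate_iterate hrec n⟩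

lemma isBlockCode_returnWords (β t : ℝ) (W : List Bool) : IsBlockCode W (returnWords β t W) := by
  refine ⟨fun c hc => hc.1, ?_, ?_⟩
  · rintro c ⟨-, x, -, hW, hcW, -⟩
    exact prefix_of_mem_cylinder hW hcW (by simp)
  · rintro c ⟨hne, -⟩ c' ⟨-, x, -, -, hcW', hfirst⟩ hpre
    obtain ⟨hc, hret⟩ := mem_cylinder_append.1 (cylinder_anti hpre hcW')
    have hle : c.length ≤ c'.length := by simpa using hpre.length_le
    have hlen : c.length = c'.length := by
      by_contra hlt
      exact hfirst c.length (List.length_pos_iff.2 hne) (by omega) hret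
    exact (prefix_of_mem_cylinder hc (mem_cylinder_append.1 hcW').1 hle).eq_of_length hlen

lemma returnWords_subset_loopWords (h : IsMultinacciBase β m) :
    returnWords β t W ⊆ loopWords m W := fun c hc =>
  ⟨(isBlockCode_returnWords β t W).marker_prefix c hc,
    have ⟨_, _, _, _, hcW, _⟩ := hc
    h.admissible_of_mem_cylinder hcW⟩

lemma lt_of_mem_cylinder_suffix_append (hβ : β ∈ Ioc (0 : ℝ) 2) (ht : t ∈ cylinder β W)
    (hc : c ∈ returnWords β t W) (hv : v <:+ c) (hne : v ≠ []) (hne' : v ≠ c)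
    (hz : z ∈ cylinder β (v ++ W)) (hx : x ∈ cylinder β W) : x < z := by
  obtain ⟨-, y, hK, -, hcW, hfirst⟩ := hc
  obtain ⟨a, rfl⟩ := hv
  have ha : 0 < a.length := List.length_pos_iff.2 fun ha => hne' (by simp [ha])
  have hvlen := List.length_pos_iff.2 hne
  rw [List.append_assoc] at hcW
  refine lt_of_mem_cylinder_of_notMem hβ ht (hK.2 a.length) (iterate_Tbeta_mem_Ico hK.1 _)
    (hfirst a.length ha (by simp [hvlen])) (n := (v ++ W).length) (by simp) ?_ hx
  rw [(mem_cylinder_append.1 hcW).2.2]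
  exact hz

lemma IsMultinacciBase.lt_wordValue_suffix_append (h : IsMultinacciBase β m)
    (ht : t ∈ cylinder β W) (hc : c ∈ returnWords β t W) (hv : v <:+ c) (hne : v ≠ [])
    (hne' : v ≠ c) : t < wordValue β (v ++ W) :=
  lt_of_mem_cylinder_suffix_append h.mem_Ioc ht hc hv hne hne' (h.wordValue_mem_cylinder
    (admissible_append_of_suffix (returnWords_subset_loopWords h hc) hv)) ht

lemma IsMultinacciBase.lt_wordValue_append_of_notMem (h : IsMultinacciBase β m)
    (hc : c ∈ returnWords β t W) (hmem : t ∉ cylinder β (c ++ W)) : t < wordValue β (c ++ W) := by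
  have hval := h.wordValue_mem_cylinder (returnWords_subset_loopWords h hc).2
  obtain ⟨-, x, hK, -, hcW, -⟩ := hc
  by_contra! hle
  exact hmem ((ordConnected_cylinder h.mem_Ioc _).out hval hcW ⟨hle, hK.2 0⟩)

lemma subsingleton_returnWords_of_mem_cylinder :
    {c : List Bool | c ∈ returnWords β t W ∧ z ∈ cylinder β (c ++ W)}.Subsingleton := by
  rintro c ⟨hc, hzc⟩ d ⟨hd, hzd⟩
  have hcode := isBlockCode_returnWords β t W
  exact (prefix_or_prefix_of_mem_cylinder hzc hzd).elim (hcode.eq_of_prefix c hc d hd)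
    fun hdc => (hcode.eq_of_prefix d hd c hc hdc).symm

lemma one_le_genFun_returnWords (hβ : β ∈ Ioc (1 : ℝ) 2)
    (havoid : dimH (avoiding β W (Kset β t)) < dimH (Kset β t)) (hs : s < dimH (Kset β t)) :
    1 ≤ genFun (letterWeight β s) (returnWords β t W) := by
  by_contra! hlt
  have hrec := dimH_le_of_genFun_lt_one hβ (X := recurring β W (Kset β t))
    (fun _ => exists_returnWord_of_mem_recurring) hlt
  exact (dimH_le_max_avoiding_recurring ⟨zero_lt_one.trans hβ.1, hβ.2⟩ W (fun _ hx => hx.1)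
    fun _ => Tbeta_mem_Kset).not_gt (max_lt havoid (hrec.trans_lt hs))

end ReturnWords

section RightContinuity

variable {β t : ℝ} {m : ℕ} {s : ℝ≥0} {W : List Bool} {F : Set (List Bool)}

lemma lt_wordValue_append_of_suffix_flatten_append (hβ : 0 < β) (hF : ∀ f ∈ F, W <+: f ++ W)
    (hproper : ∀ f ∈ F, ∀ v, v <:+ f → v ≠ [] → v ≠ f → t < wordValue β (v ++ W))
    (hfull : ∀ f ∈ F, branch β f t = t ∨ t < wordValue β (f ++ W)) {e : List Bool} (he : e ∈ F)
    (hne : e ≠ []) (hlt : t < wordValue β (e ++ W)) {L : List (List Bool)} (hL : ∀ f ∈ L, f ∈ F)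
    {v : List Bool} (hv : v <:+ L.flatten ++ e) (hvne : v ≠ []) : t < wordValue β (v ++ W) := by
  induction L generalizing v with
  | nil =>
    rcases eq_or_ne v e with rfl | hve
    · exact hlt
    · exact hproper e he v hv hvne hve
  | cons f L ih =>
    have hL' : ∀ g ∈ L, g ∈ F := fun g hg => hL g (List.mem_cons_of_mem _ hg)
    have hf : f ∈ F := hL f List.mem_cons_self
    rw [List.flatten_cons, List.append_assoc] at hv
    rcases suffix_append_cases hv with hv | ⟨u, hu, huf, rfl⟩
    · exact ih hL' hv hvne
    have htail : t < wordValue β (u ++ W) → t < wordValue β ((u ++ (L.flatten ++ e)) ++ W) := by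
      intro hlt
      obtain ⟨z, hz⟩ : W <+: (L ++ [e]).flatten ++ W := prefix_flatten_append hF (by
        simpa [or_imp, forall_and] using ⟨hL', he⟩)
      simp only [List.flatten_append, List.flatten_singleton] at hz
      rw [List.append_assoc, ← hz, ← List.append_assoc]
      exact hlt.trans_le (wordValue_le_wordValue_append hβ _ _)
    rcases eq_or_ne u f with rfl | huf'
    · refine (hfull u hf).elim (fun hfix => ?_) htail
      rw [List.append_assoc, wordValue_append]
      calc t = branch β u t := hfix.symm
        _ < _ := strictMono_branch hβ u (ih hL' List.suffix_rfl (by simp [hne]))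
    · exact htail (hproper f hf u huf hu huf')

lemma genFun_le_pow_of_subsingleton {α : Type*} {q : ℝ≥0∞} {A : Set (List α)} (hq : q ≤ 1)
    (hA : A.Subsingleton) {L : ℕ} (hL : ∀ u ∈ A, L ≤ u.length) : genFun q A ≤ q ^ L := by
  rcases hA.eq_empty_or_singleton with rfl | ⟨u, rfl⟩
  · simp [genFun]
  · rw [genFun_singleton]
    exact pow_le_pow_of_le_one zero_le hq (hL u rfl)

lemma one_lt_genFun_of_one_le {s s' : ℝ≥0} (hβ : 1 < β) (hss' : s < s') (hF : ∀ f ∈ F, f ≠ [])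
    (hone : 1 ≤ genFun (letterWeight β s') F) : 1 < genFun (letterWeight β s) F := by
  by_contra! hle
  refine hone.not_gt ?_
  have hpos : 0 < β := zero_lt_one.trans hβ
  calc genFun (letterWeight β s') F
      = genFun (letterWeight β (s' - s) * letterWeight β s) F := by
        rw [← letterWeight_add hpos, tsub_add_cancel_of_le hss'.le]
    _ ≤ letterWeight β (s' - s) ^ 1 * genFun (letterWeight β s) F :=
        genFun_mul_le_of_length_ge (letterWeight_le_one hβ.le)
          fun f hf => List.length_pos_iff.2 (hF f hf)
    _ ≤ letterWeight β (s' - s) * 1 := by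
        rw [pow_one]
        gcongr
    _ < 1 := by
        rw [mul_one]
        exact letterWeight_lt_one hβ (tsub_pos_of_lt hss')

namespace IsMultinacciBase

variable (h : IsMultinacciBase β m)
include h

lemma exists_gt_le_dimH_Kset_of_returnWords (ht : t ∈ cylinder β W) (hW : m ≤ W.length)
    (hfull : ∀ c ∈ returnWords β t W, branch β c t = t ∨ t < wordValue β (c ++ W))
    (hs : 1 < genFun (letterWeight β s) (returnWords β t W)) : ∃ τ > t, s ≤ dimH (Kset β τ) := by
  obtain ⟨F, hFR, hF⟩ := exists_finset_lt_genFun hs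
  have hone : letterWeight β s ≤ 1 := letterWeight_le_one h.one_lt.le
  have hcode := (isBlockCode_returnWords β t W).mono hFR
  have hloop := hFR.trans (returnWords_subset_loopWords h)
  have hadm := h.admissible_of_mem_cylinder ht
  -- At most one return word occurs at `t` itself, and one word weighs at most `1`.
  obtain ⟨e, heF, het⟩ : ∃ e ∈ F, t ∉ cylinder β (e ++ W) := by
    by_contra! hall
    refine hF.not_ge (genFun_le_pow_of_subsingleton hone ?_ (L := 0) fun _ _ => Nat.zero_le _)
    exact subsingleton_returnWords_of_mem_cylinder.anti fun c hc => ⟨hFR hc, hall c hc⟩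
  obtain ⟨M, hM⟩ := exists_le_pow_mul hF (y := letterWeight β s ^ e.length)
    (pow_ne_zero _ (letterWeight_ne_zero h.pos)) ENNReal.one_ne_top
  have heL : ∀ d ∈ [e], d ∈ (F : Set (List Bool)) := by simpa using heF
  have hcodeD := hcode.concatPow_append_tail heL (List.cons_ne_nil _ _) M
  rw [List.flatten_singleton] at hcodeD
  refine h.exists_gt_le_dimH_Kset ht.1 hW hadm ((finite_concatPow F.finite_toSet M).image _)
    hcodeD ?_ ?_ ?_
  · rintro _ ⟨_, ⟨L, -, hL, rfl⟩, rfl⟩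
    exact append_mem_loopWords hW (flatten_mem_loopWords hW hadm fun d hd => hloop (hL d hd))
      (hloop heF)
  · rintro _ ⟨_, ⟨L, -, hL, rfl⟩, rfl⟩ v hv hne
    exact lt_wordValue_append_of_suffix_flatten_append h.pos hcode.marker_prefix
      (fun f hf v => h.lt_wordValue_suffix_append ht (hFR hf)) (fun f hf => hfull f (hFR hf)) heF
      (hcode.ne_nil e heF) (h.lt_wordValue_append_of_notMem (hFR heF) het) hL hv hne
  · rw [genFun_image_append_right]
    exact hM.trans (by gcongr; exact hcode.genFun_pow_le M)

lemma exists_gt_le_dimH_Kset_of_periodic (ht : t ∈ Kset β t) {p : ℕ} (hp : 0 < p)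
    (hper : (Tbeta β)^[p] t = t)
    (hs : ∀ N, 1 < genFun (letterWeight β s) (returnWords β t (digits β t N))) :
    ∃ τ > t, s ≤ dimH (Kset β τ) := by
  classical
  have hex : ∃ p, 0 < p ∧ (Tbeta β)^[p] t = t := ⟨p, hp, hper⟩
  obtain ⟨hp0, hpt⟩ := Nat.find_spec hex
  set p := Nat.find hex
  obtain ⟨N, hsep, hN⟩ := ((eventually_iterate_notMem_cylinder_digits ⟨h.one_lt, h.lt_two.le⟩ ht.1 p
    fun l hl hlp heq => Nat.find_min hex hlp ⟨hl, heq⟩).and (eventually_ge_atTop m)).exists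
  set W := digits β t N
  have htW : t ∈ cylinder β W := mem_cylinder_digits ht.1 N
  have hta : t ∈ cylinder β (digits β t p ++ W) := mem_cylinder_append.2
    ⟨mem_cylinder_digits ht.1 p, by rwa [length_digits, hpt]⟩
  have ha : digits β t p ∈ returnWords β t W := by
    refine ⟨List.length_pos_iff.1 (by rwa [length_digits]), t, ht, htW, hta, ?_⟩
    rwa [length_digits]
  refine h.exists_gt_le_dimH_Kset_of_returnWords htW (by rwa [length_digits]) (fun c hc => ?_)
    (hs N)
  by_cases htc : t ∈ cylinder β (c ++ W)
  · left
    rw [subsingleton_returnWords_of_mem_cylinder ⟨hc, htc⟩ ⟨ha, hta⟩]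
    simpa only [hpt] using branch_digits h.mem_Ioc ht.1 p
  · exact .inr (h.lt_wordValue_append_of_notMem hc htc)

lemma exists_gt_le_dimH_Kset_of_aperiodic {s' : ℝ≥0} (ht : t ∈ Ico (0 : ℝ) 1)
    (haper : ∀ p, 0 < p → (Tbeta β)^[p] t ≠ t) (hss' : s < s')
    (hs : ∀ N, 1 ≤ genFun (letterWeight β s') (returnWords β t (digits β t N))) :
    ∃ τ > t, s ≤ dimH (Kset β τ) := by
  have hone : letterWeight β s' ≤ 1 := letterWeight_le_one h.one_lt.le
  set p := letterWeight β (s' - s)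
  have hp : p < 1 := letterWeight_lt_one h.one_lt (tsub_pos_of_lt hss')
  obtain ⟨L, hL⟩ : ∃ L, p + letterWeight β s' ^ L < 1 := by
    obtain ⟨L, hL⟩ := ((ENNReal.tendsto_pow_atTop_nhds_zero_of_lt_one
      (letterWeight_lt_one h.one_lt (zero_le.trans_lt hss'))).eventually
        (gt_mem_nhds (tsub_pos_of_lt hp))).exists
    exact ⟨L, lt_tsub_iff_left.1 hL⟩
  obtain ⟨N, hsep, hN⟩ := ((eventually_iterate_notMem_cylinder_digits ⟨h.one_lt, h.lt_two.le⟩ ht L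
    fun l hl _ => haper l hl).and (eventually_ge_atTop m)).exists
  set W := digits β t N
  have htW : t ∈ cylinder β W := mem_cylinder_digits ht N
  set R := {c : List Bool | c ∈ returnWords β t W ∧ t ∉ cylinder β (c ++ W)}
  set E := {c : List Bool | c ∈ returnWords β t W ∧ t ∈ cylinder β (c ++ W)}
  have hE : genFun (letterWeight β s') E ≤ letterWeight β s' ^ L :=
    genFun_le_pow_of_subsingleton hone subsingleton_returnWords_of_mem_cylinder fun c hc => by
      by_contra! hlt
      exact hsep _ (List.length_pos_iff.2 hc.1.1) hlt (mem_cylinder_append.1 hc.2).2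
  have hR : 1 < genFun (letterWeight β s) R := by
    have hmul : p * letterWeight β s = letterWeight β s' := by
      rw [← letterWeight_add h.pos, tsub_add_cancel_of_le hss'.le]
    refine one_lt_genFun_of_one_le_union (B := E) hp.le (fun c hc => hc.1.1) ?_ ?_
    · rw [hmul]
      exact (hs N).trans (genFun_mono fun c hc =>
        (em (t ∈ cylinder β (c ++ W))).symm.imp (⟨hc, ·⟩) (⟨hc, ·⟩))
    · rw [hmul]
      exact (add_le_add_right hE p).trans_lt hL
  obtain ⟨F, hFR, hF⟩ := exists_finset_lt_genFun hR
  refine h.exists_gt_le_dimH_Kset ht (by rwa [length_digits]) (h.admissible_of_mem_cylinder htW)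
    F.finite_toSet ((isBlockCode_returnWords β t W).mono fun d hd => (hFR hd).1)
    (fun d hd => returnWords_subset_loopWords h (hFR hd).1) (fun d hd v hv hne => ?_) hF.le
  rcases eq_or_ne v d with rfl | hvd
  · exact h.lt_wordValue_append_of_notMem (hFR hd).1 (hFR hd).2
  · exact h.lt_wordValue_suffix_append htW (hFR hd).1 hv hne hvd

lemma exists_gt_le_dimH_Kset_of_mem_Bset (ht : t ∈ Bset β) (hs : s < dimH (Kset β t)) :
    ∃ τ > t, s ≤ dimH (Kset β τ) := by
  obtain ⟨s', hss', hs'⟩ := ENNReal.lt_iff_exists_nnreal_btwn.1 hs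
  have hlt : s < s' := mod_cast hss'
  have hone : ∀ N, 1 ≤ genFun (letterWeight β s') (returnWords β t (digits β t N)) := fun N =>
    one_le_genFun_returnWords ⟨h.one_lt, h.lt_two.le⟩
      (dimH_avoiding_lt_of_mem_Bset h.mem_Ioc ht N) hs'
  by_cases hper : ∃ p, 0 < p ∧ (Tbeta β)^[p] t = t
  · obtain ⟨p, hp, hper⟩ := hper
    exact h.exists_gt_le_dimH_Kset_of_periodic (mem_Kset_of_mem_Bset h.mem_Ioc ht) hp hper
      fun N => one_lt_genFun_of_one_le h.one_lt hlt (fun f hf => hf.1) (hone N)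
  · push Not at hper
    exact h.exists_gt_le_dimH_Kset_of_aperiodic ht.1 hper hlt hone

end IsMultinacciBase

end RightContinuity

section BranchingDigits

variable {β t r x z : ℝ} {m N : ℕ} {v W : List Bool} {X : Set ℝ}

lemma mem_cylinder_append_not (hx : x ∈ cylinder β v) {d : Bool} (hd : x ∉ cylinder β (v ++ [d])) :
    x ∈ cylinder β (v ++ [!d]) := by
  have hI := iterate_Tbeta_mem_Ico (β := β) hx.1 v.length
  have key : ∀ e, x ∈ cylinder β (v ++ [e]) ↔ firstDigit β ((Tbeta β)^[v.length] x) = e := by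
    intro e
    rw [mem_cylinder_append, mem_cylinder_cons]
    exact ⟨fun h => h.2.2.1, fun h => ⟨hx, hI, h, Tbeta_mem_Ico _ _, rfl⟩⟩
  rw [key] at hd ⊢
  exact Bool.eq_not_of_ne hd

lemma lt_of_mem_cylinder_append_false_true (hβ : β ∈ Ioc (0 : ℝ) 2)
    (hx : x ∈ cylinder β (v ++ [false])) (hz : z ∈ cylinder β (v ++ [true])) : x < z := by
  obtain ⟨hxv, hxd⟩ := mem_cylinder_append.1 hx
  obtain ⟨hzv, hzd⟩ := mem_cylinder_append.1 hz
  have hx1 : ¬ 1 ≤ β * (Tbeta β)^[v.length] x := of_decide_eq_false (mem_cylinder_cons.1 hxd).2.1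
  have hz1 : 1 ≤ β * (Tbeta β)^[v.length] z := of_decide_eq_true (mem_cylinder_cons.1 hzd).2.1
  rw [← branch_iterate_of_mem_cylinder hβ hxv, ← branch_iterate_of_mem_cylinder hβ hzv]
  exact strictMono_branch hβ.1 v (lt_of_mul_lt_mul_left ((not_le.1 hx1).trans_le hz1) hβ.1.le)

lemma eventually_cylinder_digits_subset_Iio (hβ : β ∈ Ioc (1 : ℝ) 2) (hx : x ∈ Ico (0 : ℝ) 1)
    (hr : 0 < r) : ∀ᶠ N in atTop, cylinder β (digits β x N) ⊆ Iio (x + r) := by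
  have hβ0 : β ∈ Ioc (0 : ℝ) 2 := ⟨zero_lt_one.trans hβ.1, hβ.2⟩
  have hlim : Tendsto (fun N : ℕ => 1 / β ^ N) atTop (nhds 0) :=
    tendsto_const_nhds.div_atTop (tendsto_pow_atTop_atTop_of_one_lt hβ.1)
  filter_upwards [hlim.eventually_lt_const hr] with N hN y hy
  have hyN := lt_wordValue_add_of_mem_cylinder hβ0 hy
  have hxN := wordValue_le_of_mem_cylinder hβ0 (mem_cylinder_digits (β := β) hx N)
  rw [length_digits] at hyN
  exact mem_Iio.2 (by linarith)

lemma exists_sibling_of_avoiding_not_subset (hβ : β ∈ Ioc (0 : ℝ) 2) (ht : t ∈ Ico (0 : ℝ) 1)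
    (hN : ¬ avoiding β (digits β t (N + 1)) (Kset β t) ⊆ avoiding β (digits β t N) (Kset β t)) :
    digits β t (N + 1) = digits β t N ++ [false] ∧
      (cylinder β (digits β t N ++ [true])).Nonempty := by
  obtain ⟨x, ⟨hx, havoid⟩, hhit⟩ := not_subset.1 hN
  obtain ⟨n, hn⟩ : ∃ n, (Tbeta β)^[n] x ∈ cylinder β (digits β t N) := by
    by_contra! hnot
    exact hhit ⟨hx, hnot⟩
  set d := firstDigit β ((Tbeta β)^[N] t)
  have hdigits : digits β t (N + 1) = digits β t N ++ [d] := digits_add t N 1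
  have htN := mem_cylinder_digits (β := β) ht (N + 1)
  have hz : (Tbeta β)^[n] x ∈ cylinder β (digits β t N ++ [!d]) :=
    mem_cylinder_append_not hn (hdigits ▸ havoid n)
  have hd : d = false := by
    by_contra hd
    rw [Bool.not_eq_false] at hd
    rw [hdigits, hd] at htN
    rw [hd] at hz
    exact (lt_of_mem_cylinder_append_false_true hβ hz htN).not_ge (hx.2 n)
  rw [hd] at hdigits hz
  exact ⟨hdigits, _, hz⟩

lemma exists_dimH_avoiding_lt_le {s : ℝ≥0} (N₀ : ℕ)
    (h₀ : dimH (avoiding β (digits β t N₀) X) < s)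
    (h₁ : ∃ᶠ N in atTop, s ≤ dimH (avoiding β (digits β t N) X)) :
    ∃ N ≥ N₀, dimH (avoiding β (digits β t N) X) < s ∧
      s ≤ dimH (avoiding β (digits β t (N + 1)) X) := by
  by_contra! hstep
  have hall : ∀ N ≥ N₀, dimH (avoiding β (digits β t N) X) < s := fun N hN => by
    induction N, hN using Nat.le_induction with
    | base => exact h₀
    | succ N hN ih => exact hstep N hN ih
  exact h₁ ((eventually_ge_atTop N₀).mono fun N hN => (hall N hN).not_ge)

section Sibling

variable (hβ : β ∈ Ioc (0 : ℝ) 2) (ht : t ∈ Ico (0 : ℝ) 1)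
  (hdigits : digits β t (N + 1) = digits β t N ++ [false])
  (hval : wordValue β (digits β t N ++ [true]) ∈ cylinder β (digits β t N ++ [true]))
include hβ ht hdigits hval

lemma avoiding_digits_succ_subset_Kset :
    avoiding β (digits β t (N + 1)) (Kset β t) ⊆
      Kset β (wordValue β (digits β t N ++ [true])) := by
  refine fun x hx => ⟨hx.1.1, fun j => ?_⟩
  have hjI := iterate_Tbeta_mem_Ico (β := β) hx.1.1 j
  by_cases hj : (Tbeta β)^[j] x ∈ cylinder β (digits β t N)
  · exact wordValue_le_of_mem_cylinder hβ
      (mem_cylinder_append_not (d := false) hj (hdigits ▸ hx.2 j))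
  · exact (lt_of_mem_cylinder_of_notMem hβ (mem_cylinder_digits ht N) (hx.1.2 j) hjI hj le_rfl
      (mem_cylinder_digits hjI _) (cylinder_anti (List.prefix_append _ _) hval)).le

lemma avoiding_sibling_subset :
    avoiding β (digits β t N ++ [true]) (Kset β (wordValue β (digits β t N ++ [true]))) ⊆
      avoiding β (digits β t N) (Kset β t) := by
  have htN := mem_cylinder_digits (β := β) ht (N + 1)
  rw [hdigits] at htN
  have hlt := lt_of_mem_cylinder_append_false_true hβ htN hval
  refine fun x hx => ⟨antitone_Kset β hlt.le hx.1, fun j hj => ?_⟩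
  exact (lt_of_mem_cylinder_append_false_true hβ
    (mem_cylinder_append_not (d := true) hj (hx.2 j)) hval).not_ge (hx.1.2 j)

end Sibling

lemma IsMultinacciBase.exists_word_dimH_avoiding_lt (h : IsMultinacciBase β m) (ht : t ∈ Bset β)
    (hr : 0 < r) {b : ℝ≥0∞} (hb : b < dimH (Kset β t)) :
    ∃ (W : List Bool) (s : ℝ≥0), m ≤ W.length ∧ Admissible m W ∧ cylinder β W ⊆ Ioo t (t + r) ∧
      dimH (avoiding β W (Kset β (wordValue β W))) < s ∧ b < s ∧
      s < dimH (Kset β (wordValue β W)) := by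
  have hβ : β ∈ Ioc (1 : ℝ) 2 := ⟨h.one_lt, h.lt_two.le⟩
  obtain ⟨N₀, hN₀r, hN₀m⟩ :=
    ((eventually_cylinder_digits_subset_Iio hβ ht.1 hr).and (eventually_ge_atTop m)).exists
  obtain ⟨s', hs', hs't⟩ := ENNReal.lt_iff_exists_nnreal_btwn.1
    (max_lt (dimH_avoiding_lt_of_mem_Bset h.mem_Ioc ht N₀) hb)
  obtain ⟨havoid₀, hbs'⟩ := max_lt_iff.1 hs'
  obtain ⟨τ, htτ, hτ⟩ := h.exists_gt_le_dimH_Kset_of_mem_Bset ht hs't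
  have hlarge : ∀ᶠ N in atTop, s' ≤ dimH (avoiding β (digits β t N) (Kset β t)) := by
    filter_upwards [eventually_cylinder_digits_subset_Iio hβ ht.1 (sub_pos.2 htτ)] with N hN
    refine hτ.trans (dimH_mono fun x hx => ⟨antitone_Kset β htτ.le hx, fun n hn => ?_⟩)
    exact (hx.2 n).not_gt (by simpa using hN hn)
  obtain ⟨N, hN, hlt, hle⟩ := exists_dimH_avoiding_lt_le N₀ havoid₀ hlarge.frequently
  obtain ⟨hdigits, z, hz⟩ := exists_sibling_of_avoiding_not_subset h.mem_Ioc ht.1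
    fun hsub => (hle.trans (dimH_mono hsub)).not_gt hlt
  have hadm := h.admissible_of_mem_cylinder hz
  have hval := h.wordValue_mem_cylinder hadm
  have htN := mem_cylinder_digits (β := β) ht.1 (N + 1)
  rw [hdigits] at htN
  obtain ⟨s, hs, hss'⟩ := ENNReal.lt_iff_exists_nnreal_btwn.1 (max_lt hlt hbs')
  obtain ⟨hlts, hbs⟩ := max_lt_iff.1 hs
  refine ⟨digits β t N ++ [true], s, by simp; omega, hadm, fun w hw => ⟨?_, ?_⟩,
    (dimH_mono (avoiding_sibling_subset h.mem_Ioc ht.1 hdigits hval)).trans_lt hlts, hbs,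
    hss'.trans_le (hle.trans
      (dimH_mono (avoiding_digits_succ_subset_Kset h.mem_Ioc ht.1 hdigits hval)))⟩
  · exact lt_of_mem_cylinder_append_false_true h.mem_Ioc htN hw
  · exact hN₀r (cylinder_anti ((digits_prefix t hN).trans (List.prefix_append _ _)) hw)

end BranchingDigits

section ReturnPairs

variable {β t p x : ℝ} {m : ℕ} {W a c : List Bool} {F D : Set (List Bool)}

/-- The cylinder of `u` lies strictly to the left of the cylinder of `v`. -/
def CylinderLT (β : ℝ) (u v : List Bool) : Prop :=
  ∀ x ∈ cylinder β u, ∀ z ∈ cylinder β v, x < z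

lemma CylinderLT.mono {u u' v v' : List Bool} (h : CylinderLT β u v) (hu : u <+: u')
    (hv : v <+: v') : CylinderLT β u' v' :=
  fun x hx z hz => h x (cylinder_anti hu hx) z (cylinder_anti hv hz)

/-- `a` and `c` are distinct words of `F`, and followed by `W` they have the leftmost and the
rightmost cylinder among the words of `F` followed by `W`. -/
structure IsExtremalPair (β : ℝ) (W : List Bool) (F : Set (List Bool)) (a c : List Bool) :
    Prop where
  left_mem : a ∈ F
  right_mem : c ∈ F
  ne : a ≠ c
  lt_of_ne_left : ∀ f ∈ F, f ≠ a → CylinderLT β (a ++ W) (f ++ W)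
  lt_of_ne_right : ∀ f ∈ F, f ≠ c → CylinderLT β (f ++ W) (c ++ W)

namespace IsMultinacciBase

variable (h : IsMultinacciBase β m)
include h

lemma cylinderLT_of_wordValue_le (hcode : IsBlockCode W D) (hD : D ⊆ loopWords m W)
    {d e : List Bool} (hd : d ∈ D) (he : e ∈ D) (hne : d ≠ e)
    (hle : wordValue β (d ++ W) ≤ wordValue β (e ++ W)) : CylinderLT β (d ++ W) (e ++ W) := by
  have hde : ¬ d ++ W <+: e ++ W := fun hpre => hne (hcode.eq_of_prefix d hd e he hpre)
  have hed : ¬ e ++ W <+: d ++ W := fun hpre => hne (hcode.eq_of_prefix e he d hd hpre).symm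
  have hvald := h.wordValue_mem_cylinder (hD hd).2
  have hvale := h.wordValue_mem_cylinder (hD he).2
  refine fun x hx z hz => lt_of_mem_cylinder_of_lt h.mem_Ioc hde hed hvald hvale
    (hle.lt_of_ne fun heq => ?_) hx hz
  rw [heq] at hvald
  exact (prefix_or_prefix_of_mem_cylinder hvald hvale).elim hde hed

lemma exists_isExtremalPair {F : Finset (List Bool)} (hcode : IsBlockCode W (F : Set (List Bool)))
    (hF : ↑F ⊆ loopWords m W) {q : ℝ≥0∞} (hq : q ≤ 1)
    (hgen : 1 < genFun q (F : Set (List Bool))) : ∃ a c, IsExtremalPair β W F a c := by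
  have hntriv : ¬ (F : Set (List Bool)).Subsingleton := fun hsub =>
    hgen.not_ge ((genFun_le_pow_of_subsingleton hq hsub fun _ _ => Nat.zero_le _).trans_eq
      (pow_zero q))
  have hne : F.Nonempty := Finset.coe_nonempty.1 (not_subsingleton_iff.1 hntriv).nonempty
  obtain ⟨a, ha, hmin⟩ := F.exists_min_image (fun f => wordValue β (f ++ W)) hne
  obtain ⟨c, hc, hmax⟩ := F.exists_max_image (fun f => wordValue β (f ++ W)) hne
  have hleft : ∀ f ∈ F, f ≠ a → CylinderLT β (a ++ W) (f ++ W) := fun f hf hfa =>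
    h.cylinderLT_of_wordValue_le hcode hF ha hf hfa.symm (hmin f hf)
  refine ⟨a, c, ha, hc, ?_, hleft, fun f hf hfc =>
    h.cylinderLT_of_wordValue_le hcode hF hf hc hfc (hmax f hf)⟩
  rintro rfl
  refine hntriv (subsingleton_of_forall_eq a fun f hf => ?_)
  by_contra hfa
  exact (hleft f hf hfa _ (h.wordValue_mem_cylinder (hF ha).2) _
    (h.wordValue_mem_cylinder (hF hf).2)).not_ge (hmax f hf)

end IsMultinacciBase

lemma branch_le_self_of_branch_eq_self (hβ : 1 ≤ β) (hp : branch β a p = p) (hpx : p ≤ x) :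
    branch β a x ≤ x := by
  have hsub := branch_sub_branch (zero_lt_one.trans_le hβ) a x p
  rw [hp] at hsub
  linarith [div_le_self (sub_nonneg.2 hpx) (one_le_pow₀ hβ (n := a.length))]

lemma exists_branch_eq_self (hβ : 1 < β) (ha : a ≠ []) : ∃ p, branch β a p = p := by
  have hpow : 1 < β ^ a.length := one_lt_pow₀ hβ (List.length_pos_iff.2 ha).ne'
  refine ⟨wordValue β a * β ^ a.length / (β ^ a.length - 1), ?_⟩
  rw [branch_eq (zero_lt_one.trans hβ)]
  have : β ^ a.length - 1 ≠ 0 := (sub_pos.2 hpow).ne'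
  have : β ^ a.length ≠ 0 := (zero_lt_one.trans hpow).ne'
  field_simp
  ring

lemma le_of_le_branch (hβ : 1 < β) (ha : a ≠ []) (hp : branch β a p = p)
    (hx : x ≤ branch β a x) : x ≤ p := by
  have hsub := branch_sub_branch (zero_lt_one.trans hβ) a p x
  rw [hp] at hsub
  by_contra! hlt
  have hdiv := div_lt_self (sub_pos.2 hlt) (one_lt_pow₀ hβ (List.length_pos_iff.2 ha).ne')
  have hneg : (p - x) / β ^ a.length = -((x - p) / β ^ a.length) := by ring
  linarith

lemma le_of_branch_le (hβ : 1 < β) (ha : a ≠ []) (hp : branch β a p = p)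
    (hx : branch β a x ≤ x) : p ≤ x := by
  have hsub := branch_sub_branch (zero_lt_one.trans hβ) a p x
  rw [hp] at hsub
  by_contra! hlt
  linarith [div_lt_self (sub_pos.2 hlt) (one_lt_pow₀ hβ (List.length_pos_iff.2 ha).ne')]

/-- An ordered pair of first return words of `K_β(t)` to the cylinder of `W`. -/
structure IsReturnPair (β t : ℝ) (W a c : List Bool) : Prop where
  left_mem : a ∈ returnWords β t W
  right_mem : c ∈ returnWords β t W
  lt : CylinderLT β (a ++ W) (c ++ W)

lemma IsExtremalPair.isReturnPair (hac : IsExtremalPair β W F a c) (hF : F ⊆ returnWords β t W) :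
    IsReturnPair β t W a c :=
  ⟨hF hac.left_mem, hF hac.right_mem, hac.lt_of_ne_left c hac.right_mem hac.ne.symm⟩

lemma cylinder_wordPow_append_subset (hc : W <+: c ++ W) {j : ℕ} (hj : 1 ≤ j) :
    cylinder β (wordPow c j ++ W) ⊆ cylinder β (c ++ W) := by
  obtain ⟨j, rfl⟩ := Nat.exists_eq_add_of_le' hj
  rw [wordPow_succ, List.append_assoc]
  exact cylinder_anti ((List.prefix_append_right_inj c).2 (prefix_wordPow_append hc j))

namespace IsReturnPair

variable (hac : IsReturnPair β t W a c)
include hac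

lemma left_mem_loopWords (h : IsMultinacciBase β m) : a ∈ loopWords m W :=
  returnWords_subset_loopWords h hac.left_mem

lemma right_mem_loopWords (h : IsMultinacciBase β m) : c ∈ loopWords m W :=
  returnWords_subset_loopWords h hac.right_mem

lemma admissible (h : IsMultinacciBase β m) : Admissible m W :=
  (hac.left_mem_loopWords h).2.right

lemma mem_cylinder_of_branch_eq_self (h : IsMultinacciBase β m) (hW : m ≤ W.length)
    (hp : branch β a p = p) : p ∈ cylinder β (a ++ W) := by
  have ha := hac.left_mem_loopWords h
  have hc := hac.right_mem_loopWords h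
  have hvalW := h.wordValue_mem_cylinder (hac.admissible h)
  have hvalc := h.wordValue_mem_cylinder hc.2
  have hvalcW := cylinder_anti hc.1 hvalc
  have hlow : wordValue β W ≤ p := le_of_le_branch h.one_lt hac.left_mem.1 hp <|
    wordValue_le_of_mem_cylinder h.mem_Ioc
      (cylinder_anti ha.1 (h.branch_mem_cylinder ha.2 hW hvalW).1)
  have hupp : p ≤ wordValue β (c ++ W) := le_of_branch_le h.one_lt hac.left_mem.1 hp
    (hac.lt _ (h.branch_mem_cylinder ha.2 hW hvalcW).1 _ hvalc).le
  have hpW : p ∈ cylinder β W := (ordConnected_cylinder h.mem_Ioc W).out hvalW hvalcW ⟨hlow, hupp⟩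
  exact hp ▸ (h.branch_mem_cylinder ha.2 hW hpW).1

lemma wordValue_wordPow_mem_cylinder (h : IsMultinacciBase β m) (hW : m ≤ W.length) {M : ℕ}
    (hM : 1 ≤ M) : wordValue β (wordPow c M ++ W) ∈ cylinder β (c ++ W) :=
  have hc := hac.right_mem_loopWords h
  cylinder_wordPow_append_subset hc.1 hM
    (h.wordValue_mem_cylinder (wordPow_mem_loopWords hW hc M).2)

end IsReturnPair

end ReturnPairs

section Blocks

variable {β t p : ℝ} {m M k : ℕ} {W a c v : List Bool} {F : Set (List Bool)}

lemma length_le_or_exists_ne_of_suffix_flatten {α : Type*} {a c : α} (hac : a ≠ c)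
    {l : List (List α)} (hl : ∀ e ∈ l, ∃ fs : List α, fs.length = M ∧ e = fs ++ [a, c])
    {L : List α} (hL : L <:+ l.flatten) :
    L.length ≤ M + 2 ∨ ∃ d ∈ L.take (M + 2), d ≠ c := by
  have of_prefix {x : List α} (hx : x <+: L) (hax : a ∈ x) (hlen : x.length ≤ M + 2) :
      L.length ≤ M + 2 ∨ ∃ d ∈ L.take (M + 2), d ≠ c :=
    .inr ⟨a, (List.prefix_take_iff.2 ⟨hx, hlen⟩).subset hax, hac⟩
  rcases suffix_flatten_cases hL with ⟨_ | ⟨e, l'⟩, hl', rfl⟩ | ⟨e, l', u, hl', hue, hu, -, rfl⟩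
  · simp
  · obtain ⟨fs, hfs, rfl⟩ := hl e (hl'.subset (by simp))
    exact of_prefix (x := fs ++ [a, c]) (by simp) (by simp) (by simp [hfs])
  · obtain ⟨fs, hfs, rfl⟩ := hl e (hl'.subset (by simp))
    have hlen : u.length ≤ M + 2 := hue.length_le.trans_eq (by simp [hfs])
    by_cases hau : a ∈ u
    · exact of_prefix (List.prefix_append _ _) hau hlen
    obtain rfl : u = [c] := by
      rcases suffix_append_cases hue with hu' | ⟨u', -, -, rfl⟩
      · rcases List.suffix_cons_iff.1 hu' with rfl | hu'
        · simp at hau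
        · exact (List.suffix_cons_iff.1 hu').resolve_right fun hnil =>
            hu (List.suffix_nil.1 hnil)
      · simp at hau
    rcases l' with _ | ⟨e, l'⟩
    · simp
    · obtain ⟨gs, hgs, rfl⟩ := hl e (hl'.subset (by simp))
      exact of_prefix (x := c :: (gs ++ [a])) (by simp) (by simp) (by simp [hgs])

lemma exists_flatten_eq_of_blocks (ha : a ∈ F) (hc : c ∈ F) (hac : a ≠ c) {l : List (List Bool)}
    (hl : ∀ d ∈ l, d ∈ (· ++ [a, c].flatten) '' concatPow F M) :
    ∃ L : List (List Bool), (∀ f ∈ L, f ∈ F) ∧ l.flatten = L.flatten ∧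
      ∀ L', L' <:+ L → L'.length ≤ M + 2 ∨ ∃ d ∈ L'.take (M + 2), d ≠ c := by
  have hblock : ∀ d ∈ l, ∃ fs : List (List Bool), fs.length = M ∧ (∀ f ∈ fs, f ∈ F) ∧
      (fs ++ [a, c]).flatten = d := by
    intro d hd
    obtain ⟨_, ⟨fs, hfs, hF, rfl⟩, rfl⟩ := hl d hd
    exact ⟨fs, hfs, hF, List.flatten_append⟩
  choose! g hlen hF hflat using hblock
  refine ⟨(l.map fun d => g d ++ [a, c]).flatten, ?_, ?_, fun L' hL' =>
    length_le_or_exists_ne_of_suffix_flatten hac ?_ hL'⟩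
  · simp only [List.mem_flatten, List.mem_map]
    rintro f ⟨_, ⟨d, hd, rfl⟩, hf⟩
    have : f ∈ g d ∨ f = a ∨ f = c := by simpa using hf
    rcases this with hf | rfl | rfl
    exacts [hF d hd f hf, ha, hc]
  · rw [List.flatten_flatten, List.map_map]
    conv_lhs => rw [← List.map_id l]
    exact congrArg List.flatten (List.map_congr_left fun d hd => (hflat d hd).symm)
  · simp only [List.mem_map]
    rintro _ ⟨d, hd, rfl⟩
    exact ⟨g d, hlen d hd, rfl⟩

namespace IsMultinacciBase

variable (h : IsMultinacciBase β m)
include h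

lemma wordValue_flatten_append_le_wordPow (hW : m ≤ W.length) (hF : F ⊆ loopWords m W)
    (hc : c ∈ F) (hmax : ∀ f ∈ F, f ≠ c → CylinderLT β (f ++ W) (c ++ W))
    {L : List (List Bool)} (hL : ∀ f ∈ L, f ∈ F)
    (hrun : L.length ≤ k ∨ ∃ d ∈ L.take k, d ≠ c) :
    wordValue β (L.flatten ++ W) ≤ wordValue β (wordPow c k ++ W) := by
  have hadm : Admissible m W := (hF hc).2.right
  have marker {L : List (List Bool)} (hL : ∀ f ∈ L, f ∈ F) : L.flatten ∈ loopWords m W :=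
    flatten_mem_loopWords hW hadm fun f hf => hF (hL f hf)
  have hpow (k : ℕ) : wordPow c k ∈ loopWords m W :=
    wordPow_mem_loopWords hW (hF hc) k
  induction k generalizing L with
  | zero =>
    obtain rfl : L = [] := by simpa using hrun
    exact le_rfl
  | succ k ih =>
    rcases L with _ | ⟨d, L⟩
    · exact wordValue_le_of_mem_cylinder h.mem_Ioc
        (cylinder_anti (hpow _).1 (h.wordValue_mem_cylinder (hpow _).2))
    rw [List.forall_mem_cons] at hL
    rw [List.flatten_cons, wordPow_succ, List.append_assoc, List.append_assoc]
    by_cases hdc : d = c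
    · subst hdc
      rw [wordValue_append d, wordValue_append d]
      exact (strictMono_branch h.pos d).monotone (ih hL.2 (by simpa using hrun))
    · have hd : (d :: L).flatten ∈ loopWords m W := marker (List.forall_mem_cons.2 hL)
      have hck := hpow (k + 1)
      rw [List.flatten_cons] at hd
      rw [wordPow_succ] at hck
      refine ((hmax d hL.1 hdc).mono ?_ ?_ _ (h.wordValue_mem_cylinder ?_) _
        (h.wordValue_mem_cylinder ?_)).le
      · exact (List.prefix_append_right_inj d).2 (marker hL.2).1
      · exact (List.prefix_append_right_inj c).2 (hpow k).1
      · simpa using hd.2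
      · simpa using hck.2

lemma exists_eq_flatten_of_prefix_append (ht : t ∈ cylinder β W) (hW : m ≤ W.length)
    {L : List (List Bool)} (hL : ∀ c ∈ L, c ∈ returnWords β t W) (hv : v <:+ L.flatten)
    (hWv : W <+: v ++ W) : ∃ L', L' <:+ L ∧ v = L'.flatten := by
  rcases suffix_flatten_cases hv with hv | ⟨d, L', u, hdL, hud, hu, hne, rfl⟩
  · exact hv
  have hL' : ∀ e ∈ L', e ∈ returnWords β t W := fun e he =>
    hL e (hdL.subset (List.mem_cons_of_mem _ he))
  have hval := h.wordValue_mem_cylinder <| admissible_append_of_suffix (flatten_mem_loopWords hW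
    (h.admissible_of_mem_cylinder ht) fun c hc => returnWords_subset_loopWords h (hL c hc)) hv
  have hpre : u ++ W <+: (u ++ L'.flatten) ++ W := by
    rw [List.append_assoc]
    exact (List.prefix_append_right_inj u).2
      (prefix_flatten_append (isBlockCode_returnWords β t W).marker_prefix hL')
  exact absurd (lt_of_mem_cylinder_suffix_append h.mem_Ioc ht (hL d (hdL.subset (by simp))) hud hu
    hne (cylinder_anti hpre hval) (cylinder_anti hWv hval)) (lt_irrefl _)

lemma wordValue_le_of_suffix_blocks (ht : t ∈ cylinder β W) (hW : m ≤ W.length)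
    (hF : F ⊆ returnWords β t W) (hac : IsExtremalPair β W F a c) {l : List (List Bool)}
    (hl : ∀ d ∈ l, d ∈ (· ++ [a, c].flatten) '' concatPow F M) (hv : v <:+ l.flatten)
    (hWv : W <+: v) : wordValue β v ≤ wordValue β (wordPow c (M + 2) ++ W) := by
  obtain ⟨L, hL, hflat, hrun⟩ := exists_flatten_eq_of_blocks hac.left_mem hac.right_mem hac.ne hl
  rw [hflat] at hv
  obtain ⟨L', hL', rfl⟩ := h.exists_eq_flatten_of_prefix_append ht hW (fun f hf => hF (hL f hf))
    hv (hWv.trans (List.prefix_append _ _))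
  exact (wordValue_le_wordValue_append h.pos _ W).trans <|
    h.wordValue_flatten_append_le_wordPow hW (hF.trans (returnWords_subset_loopWords h))
      hac.right_mem hac.lt_of_ne_right (fun f hf => hL f (hL'.subset hf)) (hrun L' hL')

lemma lt_wordValue_append_of_suffix_block (ht : t ∈ cylinder β W) (hW : m ≤ W.length)
    (hF : F ⊆ returnWords β t W) (hac : IsExtremalPair β W F a c) (hp : branch β a p = p)
    {d : List Bool} (hd : d ∈ (· ++ [a, c].flatten) '' concatPow F M) (hv : v <:+ d)
    (hne : v ≠ []) : p < wordValue β (v ++ W) := by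
  have hpair := hac.isReturnPair hF
  have hpa : p ∈ cylinder β (a ++ W) := hpair.mem_cylinder_of_branch_eq_self h hW hp
  have hpW : p ∈ cylinder β W := cylinder_anti (hpair.left_mem_loopWords h).1 hpa
  have lt_full (f : List Bool) (hf : f ∈ F) (hfa : f ≠ a) : p < wordValue β (f ++ W) :=
    hac.lt_of_ne_left f hf hfa p hpa _
      (h.wordValue_mem_cylinder (returnWords_subset_loopWords h (hF hf)).2)
  obtain ⟨_, ⟨L, -, hL, rfl⟩, rfl⟩ := hd
  refine lt_wordValue_append_of_suffix_flatten_append (F := F) (L := L ++ [a]) (e := c) h.pos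
    (fun f hf => (returnWords_subset_loopWords h (hF hf)).1) (fun f hf v hvf hv hvne => ?_)
    (fun f hf => ?_) hac.right_mem (hF hac.right_mem).1 (lt_full c hac.right_mem hac.ne.symm)
    ?_ (by simpa using hv) hne
  · exact lt_of_mem_cylinder_suffix_append h.mem_Ioc ht (hF hf) hvf hv hvne
      (h.wordValue_mem_cylinder
        (admissible_append_of_suffix (returnWords_subset_loopWords h (hF hf)) hvf)) hpW
  · rcases eq_or_ne f a with rfl | hfa
    exacts [.inl hp, .inr (lt_full f hf hfa)]
  · simpa [or_imp, forall_and] using ⟨hL, hac.left_mem⟩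

end IsMultinacciBase

end Blocks

section BoundedRecurring

variable {β t p τ hi y z : ℝ} {m M : ℕ} {s : ℝ≥0} {W a c : List Bool} {F : Set (List Bool)}

/-- The points of `K_β(lo)` in the cylinder of `W` whose orbit visits that cylinder infinitely
often, but only at points below `hi`. -/
def boundedRecurring (β : ℝ) (W : List Bool) (lo hi : ℝ) : Set ℝ :=
  {y | y ∈ recurring β W (Kset β lo) ∧
    ∀ n, (Tbeta β)^[n] y ∈ cylinder β W → (Tbeta β)^[n] y ≤ hi}

lemma boundedRecurring_subset_Kset (β : ℝ) (W : List Bool) (lo hi : ℝ) :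
    boundedRecurring β W lo hi ⊆ Kset β lo := fun _ hy => hy.1.1

lemma lt_iterate_of_mem_cylinder_append (hβ : β ∈ Ioc (0 : ℝ) 2) (ht : t ∈ cylinder β W)
    (ha : a ∈ returnWords β t W) (hy : y ∈ cylinder β (a ++ W)) {n : ℕ} (hn : 0 < n)
    (hna : n < a.length) (hz : z ∈ cylinder β W) : z < (Tbeta β)^[n] y := by
  rw [← List.take_append_drop n a, List.append_assoc, mem_cylinder_append, List.length_take,
    min_eq_left hna.le] at hy
  refine lt_of_mem_cylinder_suffix_append hβ ht ha (List.drop_suffix n a) ?_ ?_ hy.2 hz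
  · simpa using hna
  · refine fun heq => (Nat.sub_lt (hn.trans hna) hn).ne ?_
    rw [← List.length_drop, heq]

lemma mapsTo_Tbeta_restrictedSurvivor (β τ : ℝ) (Q : List Bool → Prop) :
    MapsTo (Tbeta β) (restrictedSurvivor β τ Q) (restrictedSurvivor β τ Q) := fun _ hx =>
  ⟨Tbeta_mem_Kset hx.1, fun n => hx.2 (n + 1)⟩

lemma branch_wordPow_eq_self (hp : branch β a p = p) (k : ℕ) : branch β (wordPow a k) p = p := by
  induction k with
  | zero => rfl
  | succ k ih => rw [wordPow_succ, branch_append, ih, hp]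

lemma recurring_restrictedSurvivor_subset (hβ : β ∈ Ioc (1 : ℝ) 2) :
    recurring β W (restrictedSurvivor β τ fun v => W <+: v → wordValue β v ≤ hi) ⊆
      boundedRecurring β W τ hi := by
  rintro z ⟨⟨hzK, hzQ⟩, hzW, hrec⟩
  refine ⟨⟨hzK, hzW, hrec⟩, fun n hn => ?_⟩
  have hlim : Tendsto (fun k : ℕ => hi + 1 / β ^ k) atTop (nhds hi) := by
    simpa using (tendsto_inv_atTop_zero.comp
      (tendsto_pow_atTop_atTop_of_one_lt hβ.1)).const_add hi
  refine ge_of_tendsto hlim ((eventually_ge_atTop W.length).mono fun k hk => ?_)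
  have hval := hzQ n k ((mem_cylinder_iff_prefix_digits hn.1 hk).1 hn)
  have hlt := lt_wordValue_add_of_mem_cylinder ⟨zero_lt_one.trans hβ.1, hβ.2⟩
    (mem_cylinder_digits (β := β) hn.1 k)
  rw [length_digits] at hlt
  linarith

lemma exists_branch_wordPow_le (hβ : 1 < β) (ha : a ≠ []) (hp : branch β a p = p) (hpτ : p < τ) :
    ∃ k, ∀ z ≤ p + 1, branch β (wordPow a (k + 1)) z ≤ τ := by
  have hpos : 0 < β := zero_lt_one.trans hβ
  obtain ⟨k, hk⟩ := exists_pow_lt_of_lt_one (sub_pos.2 hpτ) (inv_lt_one_of_one_lt₀ hβ)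
  refine ⟨k, fun z hz => ?_⟩
  have hlen : k ≤ (wordPow a (k + 1)).length := by
    rw [length_wordPow]
    exact k.le_succ.trans (Nat.le_mul_of_pos_right _ (List.length_pos_iff.2 ha))
  have hdist := branch_sub_branch hpos (wordPow a (k + 1)) z p
  rw [branch_wordPow_eq_self hp] at hdist
  refine sub_le_sub_iff_right p |>.1 (le_of_lt ?_)
  calc branch β (wordPow a (k + 1)) z - p
      = (z - p) / β ^ (wordPow a (k + 1)).length := hdist
    _ ≤ 1 / β ^ k := by
        gcongr
        · linarith
        · exact hβ.le
    _ < τ - p := by rwa [one_div, ← inv_pow]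

namespace IsMultinacciBase

variable (h : IsMultinacciBase β m)
include h

lemma branch_mem_boundedRecurring (hW : m ≤ W.length) (ht : t ∈ cylinder β W)
    (ha : a ∈ returnWords β t W) (hhi : ∀ x ∈ cylinder β (a ++ W), x ≤ hi)
    (hle : branch β a z ≤ z) (hz : z ∈ boundedRecurring β W (min τ z) hi) :
    branch β a z ∈ boundedRecurring β W (min τ (branch β a z)) hi := by
  obtain ⟨⟨hzK, hzW, hrec⟩, hupp⟩ := hz
  have hloop := returnWords_subset_loopWords h ha
  obtain ⟨hmem, hiter⟩ := h.branch_mem_cylinder hloop.2 hW hzW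
  have hmemW := cylinder_anti hloop.1 hmem
  have iterate_add (j : ℕ) : (Tbeta β)^[a.length + j] (branch β a z) = (Tbeta β)^[j] z := by
    rw [iterate_add_apply', hiter]
  have split (n : ℕ) : n = 0 ∨ (0 < n ∧ n < a.length) ∨ ∃ j, n = a.length + j := by
    rcases Nat.eq_zero_or_pos n with hn | hn
    · exact .inl hn
    · exact .inr ((lt_or_ge n a.length).imp (⟨hn, ·⟩) Nat.exists_eq_add_of_le)
  have between {n : ℕ} (hn : 0 < n) (hna : n < a.length) {x : ℝ} (hx : x ∈ cylinder β W) :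
      x < (Tbeta β)^[n] (branch β a z) :=
    lt_iterate_of_mem_cylinder_append h.mem_Ioc ht ha hmem hn hna hx
  refine ⟨⟨⟨hmemW.1, fun n => ?_⟩, hmemW, fun N => ?_⟩, fun n hn => ?_⟩
  · rcases split n with rfl | ⟨hn, hna⟩ | ⟨j, rfl⟩
    · exact min_le_right _ _
    · exact (min_le_right _ _).trans (between hn hna hmemW).le
    · rw [iterate_add]
      exact (min_le_min_left τ hle).trans (hzK.2 j)
  · obtain ⟨n, hn, hnW⟩ := hrec N
    exact ⟨a.length + n, hn.trans (Nat.le_add_left _ _), by rwa [iterate_add]⟩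
  · rcases split n with rfl | ⟨hn0, hna⟩ | ⟨j, rfl⟩
    · exact hhi _ hmem
    · exact absurd (between hn0 hna hn) (lt_irrefl _)
    · rw [iterate_add] at hn ⊢
      exact hupp j hn

lemma branch_wordPow_mem_boundedRecurring (hW : m ≤ W.length) (ht : t ∈ cylinder β W)
    (ha : a ∈ returnWords β t W) (hhi : ∀ x ∈ cylinder β (a ++ W), x ≤ hi)
    (hp : branch β a p = p) (hpz : p ≤ z) (hz : z ∈ boundedRecurring β W (min τ z) hi) (k : ℕ) :
    branch β (wordPow a k) z ∈ boundedRecurring β W (min τ (branch β (wordPow a k) z)) hi := by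
  induction k with
  | zero => exact hz
  | succ k ih =>
    rw [wordPow_succ, branch_append]
    refine h.branch_mem_boundedRecurring hW ht ha hhi
      (branch_le_self_of_branch_eq_self h.one_lt.le hp ?_) ih
    exact (branch_wordPow_eq_self hp k).symm.trans_le
      ((strictMono_branch h.pos (wordPow a k)).monotone hpz)

lemma exists_gt_le_dimH_restrictedSurvivor (hW : m ≤ W.length) (ht : t ∈ cylinder β W)
    (hFfin : F.Finite) (hF : F ⊆ returnWords β t W) (hac : IsExtremalPair β W F a c)
    (hp : branch β a p = p) (hs : 1 < genFun (letterWeight β s) F) :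
    ∃ M τ, 1 ≤ M ∧ p < τ ∧ s ≤ dimH (restrictedSurvivor β τ fun v =>
      W <+: v → wordValue β v ≤ wordValue β (wordPow c M ++ W)) := by
  obtain ⟨M, hM⟩ := exists_le_pow_mul hs (y := letterWeight β s ^ [a, c].flatten.length)
    (pow_ne_zero _ (letterWeight_ne_zero h.pos)) ENNReal.one_ne_top
  set D := (· ++ [a, c].flatten) '' concatPow F M
  have hcode := (isBlockCode_returnWords β t W).mono hF
  have hpairF : ∀ d ∈ [a, c], d ∈ F := by simp [hac.left_mem, hac.right_mem]
  have hloop := hF.trans (returnWords_subset_loopWords h)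
  have hadm := h.admissible_of_mem_cylinder ht
  have hDloop : D ⊆ loopWords m W := by
    rintro _ ⟨_, ⟨L, -, hL, rfl⟩, rfl⟩
    exact append_mem_loopWords hW (flatten_mem_loopWords hW hadm fun d hd => hloop (hL d hd))
      (flatten_mem_loopWords hW hadm fun d hd => hloop (hpairF d hd))
  have hp01 := ((hac.isReturnPair hF).mem_cylinder_of_branch_eq_self h hW hp).1
  obtain ⟨τ, hpτ, hτ1, hτ⟩ := exists_gt_le_wordValue_append ((finite_concatPow hFfin M).image _)
    hp01.2 fun d hd v hv hne => h.lt_wordValue_append_of_suffix_block ht hW hF hac hp hd hv hne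
  refine ⟨M + 2, τ, by omega, hpτ, h.le_dimH_restrictedSurvivor (hp01.1.trans_lt hpτ) hτ1 ?_ hW
    hadm (hcode.concatPow_append_tail hpairF (List.cons_ne_nil _ _) M) hDloop hτ ?_ ?_⟩
  · rintro u _ ⟨v, rfl⟩ hv hWu
    exact (wordValue_le_wordValue_append h.pos u v).trans
      (hv (hWu.trans (List.prefix_append u v)))
  · exact fun l hl v hv hWv => h.wordValue_le_of_suffix_blocks ht hW hF hac hl hv hWv
  · rw [genFun_image_append_right]
    exact hM.trans (by gcongr; exact hcode.genFun_pow_le M)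

lemma exists_isReturnPair_le_dimH_boundedRecurring (hW : m ≤ W.length) (hadm : Admissible m W)
    (havoid : dimH (avoiding β W (Kset β (wordValue β W))) < s)
    (hs : s < dimH (Kset β (wordValue β W))) :
    ∃ a c M p τ, 1 ≤ M ∧ IsReturnPair β (wordValue β W) W a c ∧ branch β a p = p ∧ p < τ ∧
      s ≤ dimH (boundedRecurring β W τ (wordValue β (wordPow c M ++ W))) := by
  set t := wordValue β W
  have ht : t ∈ cylinder β W := h.wordValue_mem_cylinder hadm
  obtain ⟨s', hss', hs'⟩ := ENNReal.lt_iff_exists_nnreal_btwn.1 hs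
  have hone := one_lt_genFun_of_one_le h.one_lt (mod_cast hss') (fun f hf => hf.1)
    (one_le_genFun_returnWords ⟨h.one_lt, h.lt_two.le⟩ (havoid.trans hs) hs')
  obtain ⟨F, hFR, hF⟩ := exists_finset_lt_genFun hone
  obtain ⟨a, c, hac⟩ := h.exists_isExtremalPair ((isBlockCode_returnWords β t W).mono hFR)
    (hFR.trans (returnWords_subset_loopWords h)) (letterWeight_le_one h.one_lt.le) hF
  have hpair := hac.isReturnPair hFR
  obtain ⟨p, hp⟩ := exists_branch_eq_self h.one_lt hpair.left_mem.1
  obtain ⟨M, τ, hM, hpτ, hdim⟩ :=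
    h.exists_gt_le_dimH_restrictedSurvivor hW ht F.finite_toSet hFR hac hp hF
  have htp : t ≤ p := wordValue_le_of_mem_cylinder h.mem_Ioc (cylinder_anti
    (hpair.left_mem_loopWords h).1 (hpair.mem_cylinder_of_branch_eq_self h hW hp))
  refine ⟨a, c, M, p, τ, hM, hpair, hp, hpτ, ?_⟩
  set Q : List Bool → Prop := fun v => W <+: v → wordValue β v ≤ wordValue β (wordPow c M ++ W)
  have hsub : avoiding β W (restrictedSurvivor β τ Q) ⊆ avoiding β W (Kset β t) := fun x hx =>
    ⟨antitone_Kset β (htp.trans hpτ.le) hx.1.1, hx.2⟩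
  have havoidQ := (dimH_mono hsub).trans_lt havoid
  have hmax := hdim.trans <| dimH_le_max_avoiding_recurring h.mem_Ioc W (fun x hx => hx.1.1)
    (mapsTo_Tbeta_restrictedSurvivor β τ Q)
  exact ((le_max_iff.1 hmax).resolve_left havoidQ.not_ge).trans
    (dimH_mono (recurring_restrictedSurvivor_subset ⟨h.one_lt, h.lt_two.le⟩))

lemma exists_isReturnPair_le_dimH (hW : m ≤ W.length) (hadm : Admissible m W)
    (havoid : dimH (avoiding β W (Kset β (wordValue β W))) < s)
    (hs : s < dimH (Kset β (wordValue β W))) :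
    ∃ a c M, IsReturnPair β (wordValue β W) W a c ∧
      s ≤ dimH {y | y ∈ cylinder β (a ++ W) ∧ wordValue β W < y ∧ s ≤ dimH (Kset β y) ∧
        y ∈ boundedRecurring β W y (wordValue β (wordPow c M ++ W))} := by
  obtain ⟨a, c, M, p, τ, hM, hac, hp, hpτ, hdimτ⟩ :=
    h.exists_isReturnPair_le_dimH_boundedRecurring hW hadm havoid hs
  have ht := h.wordValue_mem_cylinder hadm
  have ha := hac.left_mem_loopWords h
  have hhi : ∀ x ∈ cylinder β (a ++ W), x ≤ wordValue β (wordPow c M ++ W) := fun x hx =>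
    (hac.lt x hx _ (hac.wordValue_wordPow_mem_cylinder h hW hM)).le
  have hpa := hac.mem_cylinder_of_branch_eq_self h hW hp
  have htp := wordValue_le_of_mem_cylinder h.mem_Ioc (cylinder_anti ha.1 hpa)
  obtain ⟨k, hk⟩ := exists_branch_wordPow_le h.one_lt hac.left_mem.1 hp hpτ
  refine ⟨a, c, M, hac, ?_⟩
  refine (hdimτ.trans_eq (dimH_image_branch h.pos (wordPow a (k + 1)) _).symm).trans
    (dimH_mono ?_)
  rintro _ ⟨z, hz, rfl⟩
  have hτz : τ ≤ z := hz.1.1.2 0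
  have hmem := h.branch_wordPow_mem_boundedRecurring (τ := τ) hW ht hac.left_mem hhi hp
    (hpτ.le.trans hτz) (by rwa [min_eq_left hτz])
  have hyτ : branch β (wordPow a (k + 1)) z ≤ τ :=
    hk z (hz.1.1.1.2.le.trans (le_add_of_nonneg_left hpa.1.1))
  have hpy : p < branch β (wordPow a (k + 1)) z := (branch_wordPow_eq_self hp (k + 1)).symm.trans_lt
    (strictMono_branch h.pos _ (hpτ.trans_le hτz))
  refine ⟨?_, htp.trans_lt hpy, ?_, ?_⟩
  · rw [wordPow_succ, branch_append]
    exact (h.branch_mem_cylinder ha.2 hW (hmem k).1.2.1).1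
  · exact hdimτ.trans (dimH_mono ((boundedRecurring_subset_Kset β W τ _).trans
      (antitone_Kset β hyτ)))
  · simpa only [min_eq_right hyτ] using hmem (k + 1)

end IsMultinacciBase

end BoundedRecurring

section SurvivorLoops

variable {β t τ x : ℝ} {m n : ℕ} {s : ℝ≥0} {W : List Bool}

/-- The words of length `n` with which the greedy expansions of the points of `K_β(t)` start. -/
def survivorPrefixes (β t : ℝ) (n : ℕ) : Set (List Bool) := (digits β · n) '' Kset β t

/-- The words that a point of `K_β(t)`, started in the cylinder of `W`, reads until some later
visit, not necessarily the first one, to that cylinder. -/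
def survivorLoops (β t : ℝ) (W : List Bool) : Set (List Bool) :=
  {u | ∃ x ∈ Kset β t, x ∈ cylinder β W ∧ x ∈ cylinder β (u ++ W)}

lemma survivorLoops_subset_loopWords (h : IsMultinacciBase β m) :
    survivorLoops β t W ⊆ loopWords m W := fun _ ⟨_, _, hW, huW⟩ =>
  ⟨prefix_of_mem_cylinder hW huW (by simp), h.admissible_of_mem_cylinder huW⟩

lemma one_le_genFun_survivorPrefixes (hβ : β ∈ Ioc (1 : ℝ) 2) (hs0 : 0 < s)
    (hs : s ≤ dimH (Kset β t)) (n : ℕ) :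
    1 ≤ genFun (letterWeight β s) (survivorPrefixes β t n) := by
  have hfin : (survivorPrefixes β t n).Finite := (List.finite_length_eq Bool n).subset <| by
    rintro _ ⟨x, -, rfl⟩
    exact length_digits x n
  by_contra! hlt
  obtain ⟨s', hs's, hs'⟩ :=
    exists_lt_genFun_lt_one (zero_lt_one.trans hβ.1).ne' hfin hs0 hlt
  have hdim : dimH (Kset β t) ≤ s' := dimH_le_of_genFun_lt_one hβ (fun x hx =>
    ⟨_, mem_image_of_mem _ hx, mem_cylinder_digits hx.1 n, iterate_mem_Kset hx _⟩) hs'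
  exact (ENNReal.coe_le_coe.1 (hs.trans hdim)).not_gt hs's

lemma genFun_iUnion_survivorPrefixes (hβ : β ∈ Ioc (1 : ℝ) 2) (hs0 : 0 < s)
    (hs : s ≤ dimH (Kset β t)) :
    genFun (letterWeight β s) (⋃ n, survivorPrefixes β t n) = ⊤ := by
  have hdisj : Pairwise (Function.onFun Disjoint (survivorPrefixes β t)) := by
    refine fun i j hij => Set.disjoint_left.2 ?_
    rintro _ ⟨x, -, rfl⟩ ⟨y, -, hyx⟩
    exact hij (by simpa using (congrArg List.length hyx).symm)
  have hsum : genFun (letterWeight β s) (⋃ n, survivorPrefixes β t n) =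
      ∑' n, genFun (letterWeight β s) (survivorPrefixes β t n) := by
    rw [genFun, ← (Set.unionEqSigmaOfDisjoint hdisj).symm.tsum_eq, ENNReal.tsum_sigma']
    rfl
  rw [hsum, eq_top_iff, ← ENNReal.tsum_const_eq_top_of_ne_zero (α := ℕ) one_ne_zero]
  exact ENNReal.tsum_le_tsum (one_le_genFun_survivorPrefixes hβ hs0 hs)

namespace IsMultinacciBase

variable (h : IsMultinacciBase β m)
include h

lemma digits_mem_survivorLang (hx : x ∈ Kset β τ) (hW : W ≠ [])
    (hno : ∀ i < n, (Tbeta β)^[i] x ∉ cylinder β W) :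
    digits β x n ∈ survivorLang β m τ fun v => ¬ W <+: v := by
  refine ⟨h.admissible_of_mem_cylinder (mem_cylinder_digits hx.1 n), fun v hv => ?_⟩
  have hlen : v.length ≤ n := by simpa using hv.length_le
  rw [List.suffix_iff_eq_drop.1 hv, length_digits, drop_digits x (Nat.sub_le _ _),
    Nat.sub_sub_self hlen]
  set z := (Tbeta β)^[n - v.length] x
  have hz : z ∈ Kset β τ := iterate_mem_Kset hx _
  refine ⟨(hz.2 0).trans ?_, fun hWz => ?_⟩
  · calc z = branch β (digits β z v.length) ((Tbeta β)^[v.length] z) :=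
        (branch_digits h.mem_Ioc hz.1 _).symm
      _ ≤ branch β (digits β z v.length) (1 / (β - 1)) := by
        refine (strictMono_branch h.pos _).monotone ((iterate_Tbeta_mem_Ico hz.1 _).2.le.trans ?_)
        rw [le_div_iff₀ (sub_pos.2 h.one_lt)]
        linarith [h.lt_two]
  · have hWlen : W.length ≤ v.length := by simpa using hWz.length_le
    have hWpos := List.length_pos_iff.2 hW
    exact hno _ (by omega) ((mem_cylinder_iff_prefix_digits hz.1 hWlen).2 hWz)

/- Cut the orbit at its first and at its last visit to the cylinder of `W`. -/
lemma digits_mem_image2_of_iterate_mem_cylinder (hW : W ≠ []) (hτ : τ ≤ t) (hx : x ∈ Kset β t)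
    {i : ℕ} (hi : i ≤ n) (hit : (Tbeta β)^[i] x ∈ cylinder β W) :
    digits β x n ∈ image2 (· ++ ·)
      (image2 (· ++ ·) (survivorLang β m τ fun v => ¬ W <+: v) (survivorLoops β t W))
      (image2 (· ++ ·) {e : List Bool | e.length ≤ 1}
        (survivorLang β m τ fun v => ¬ W <+: v)) := by
  classical
  have hex : ∃ i, (Tbeta β)^[i] x ∈ cylinder β W := ⟨i, hit⟩
  obtain ⟨j, hj⟩ := Nat.exists_eq_add_of_le ((Nat.find_min' hex hit).trans
    (Nat.le_findGreatest (P := fun i => (Tbeta β)^[i] x ∈ cylinder β W) hi hit))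
  have hfirst := Nat.find_spec hex
  have hlast := Nat.findGreatest_spec (P := fun i => (Tbeta β)^[i] x ∈ cylinder β W) hi hit
  obtain ⟨k, hk⟩ := Nat.exists_eq_add_of_le
    (Nat.findGreatest_le (P := fun i => (Tbeta β)^[i] x ∈ cylinder β W) n)
  have hafter : ∀ l, Nat.findGreatest (fun i => (Tbeta β)^[i] x ∈ cylinder β W) n < l →
      l ≤ n → (Tbeta β)^[l] x ∉ cylinder β W := fun l => Nat.findGreatest_is_greatest
  set i₀ := Nat.find hex
  set i₁ := Nat.findGreatest (fun i => (Tbeta β)^[i] x ∈ cylinder β W) n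
  have hxτ := antitone_Kset β hτ hx
  refine ⟨_, ⟨digits β x i₀, h.digits_mem_survivorLang hxτ hW fun l hl => Nat.find_min hex hl,
    digits β ((Tbeta β)^[i₀] x) j, ⟨_, iterate_mem_Kset hx i₀, hfirst, ?_⟩, rfl⟩, _,
    ⟨digits β ((Tbeta β)^[i₁] x) (min 1 k), by simp,
      digits β ((Tbeta β)^[i₁ + min 1 k] x) (k - min 1 k), ?_, rfl⟩, ?_⟩
  · rw [mem_cylinder_append, length_digits, ← iterate_add_apply', ← hj]
    exact ⟨mem_cylinder_digits hfirst.1 j, hlast⟩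
  · refine h.digits_mem_survivorLang (iterate_mem_Kset hxτ _) hW fun l hl => ?_
    rw [← iterate_add_apply']
    exact hafter _ (by omega) (by omega)
  · simp only
    rw [← digits_add, ← hj, iterate_add_apply', ← digits_add,
      Nat.add_sub_cancel' (min_le_right 1 k), ← digits_add, ← hk]

lemma genFun_survivorLoops_eq_top (hW : W ≠ []) (hτ0 : 0 < τ) (hτ : τ ≤ t)
    (havoid : dimH (avoiding β W (Kset β τ)) < s) (hs : s ≤ dimH (Kset β t)) :
    genFun (letterWeight β s) (survivorLoops β t W) = ⊤ := by
  have hs0 : 0 < s := ENNReal.coe_pos.1 (bot_le.trans_lt havoid)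
  set V := survivorLang β m τ fun v => ¬ W <+: v
  have hV : genFun (letterWeight β s) V ≠ ⊤ := by
    refine h.genFun_survivorLang_ne_top hτ0 (fun u v huv hv hu => hv (hu.trans huv)) ?_
    refine (dimH_mono fun x hx => ?_).trans_lt havoid
    exact ⟨hx.1, fun n hn => hx.2 n W.length (by rw [hn.2])⟩
  have hsub : ⋃ n, survivorPrefixes β t n ⊆ V ∪ image2 (· ++ ·)
      (image2 (· ++ ·) V (survivorLoops β t W))
      (image2 (· ++ ·) {e : List Bool | e.length ≤ 1} V) := by
    refine iUnion_subset fun n => ?_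
    rintro _ ⟨x, hx, rfl⟩
    by_cases hex : ∃ i ≤ n, (Tbeta β)^[i] x ∈ cylinder β W
    · obtain ⟨i, hi, hit⟩ := hex
      exact .inr (h.digits_mem_image2_of_iterate_mem_cylinder hW hτ hx hi hit)
    · push Not at hex
      exact .inl (h.digits_mem_survivorLang (antitone_Kset β hτ hx) hW fun i hi => hex i hi.le)
  by_contra hloops
  refine ne_top_of_le_ne_top (ENNReal.add_ne_top.2 ⟨hV, ?_⟩)
    ((genFun_mono hsub).trans genFun_union_le)
    (genFun_iUnion_survivorPrefixes ⟨h.one_lt, h.lt_two.le⟩ hs0 hs)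
  have hfin := genFun_ne_top_of_finite (q := letterWeight β s) letterWeight_ne_top
    (List.finite_length_le Bool 1)
  exact ne_top_of_le_ne_top (ENNReal.mul_ne_top
    (ne_top_of_le_ne_top (ENNReal.mul_ne_top hV hloops) (genFun_image2_append_le _ _))
    (ne_top_of_le_ne_top (ENNReal.mul_ne_top hfin hV) (genFun_image2_append_le _ _)))
    (genFun_image2_append_le _ _)

end IsMultinacciBase

end SurvivorLoops

section Markers

variable {β t t' x y z : ℝ} {m M l : ℕ} {W a c e q u v : List Bool}

/-- The word `e q e`. With `e` a power of the larger word of a return pair and `q` a long prefix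
of the expansion of a point above `W`, it occurs in no overlapping position in the words that are
later concatenated, so that appending it turns loop words into a block code. -/
def marker (e q : List Bool) : List Bool := e ++ (q ++ e)

lemma marker_append (e q w : List Bool) : marker e q ++ w = e ++ (q ++ (e ++ w)) := by
  simp [marker]

lemma iterate_mem_cylinder_drop_append (hx : x ∈ cylinder β (u ++ v)) {i : ℕ}
    (hi : i ≤ u.length) : (Tbeta β)^[i] x ∈ cylinder β (u.drop i ++ v) := by
  rw [← List.take_append_drop i u, List.append_assoc, mem_cylinder_append, List.length_take,
    min_eq_left hi] at hx
  exact hx.2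

namespace IsReturnPair

variable (hac : IsReturnPair β t W a c)
include hac

lemma lt_of_mem_cylinder_suffix_wordPow (hβ : β ∈ Ioc (0 : ℝ) 2) (ht : t ∈ cylinder β W)
    (hy : y ∈ cylinder β (a ++ W)) (hv : v <:+ wordPow c M) (hne : v ≠ [])
    (hz : z ∈ cylinder β (v ++ W)) : y < z := by
  have hcode := isBlockCode_returnWords β t W
  have hc := hcode.marker_prefix c hac.right_mem
  rcases suffix_wordPow_cases hv with ⟨j, -, rfl⟩ | ⟨j, u, huc, hu, huc', rfl⟩
  · have hj : 1 ≤ j := Nat.one_le_iff_ne_zero.2 fun hj => hne (by rw [hj, wordPow_zero])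
    exact hac.lt y hy z (cylinder_wordPow_append_subset hc hj hz)
  · refine lt_of_mem_cylinder_suffix_append hβ ht hac.right_mem huc hu huc' ?_
      (cylinder_anti (hcode.marker_prefix a hac.left_mem) hy)
    rw [List.append_assoc] at hz
    exact cylinder_anti ((List.prefix_append_right_inj u).2 (prefix_wordPow_append hc j)) hz

lemma disjoint_cylinder_suffix_wordPow (hβ : β ∈ Ioc (0 : ℝ) 2) (ht : t ∈ cylinder β W)
    (hv : v <:+ wordPow c M) (hne : v ≠ wordPow c M) :
    Disjoint (cylinder β (v ++ (a ++ W))) (cylinder β (wordPow c M ++ W)) := by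
  refine Set.disjoint_left.2 fun x hx hx' => ?_
  have hcode := isBlockCode_returnWords β t W
  have ha := hcode.marker_prefix a hac.left_mem
  have hc := hcode.marker_prefix c hac.right_mem
  rcases suffix_wordPow_cases hv with ⟨j, hj, rfl⟩ | ⟨j, u, huc, hu, huc', rfl⟩
  · obtain ⟨i, rfl⟩ := Nat.exists_eq_add_of_le hj
    have hi : 1 ≤ i := Nat.one_le_iff_ne_zero.2 fun hi => hne (by rw [hi, Nat.add_zero])
    rw [wordPow_add, List.append_assoc] at hx'
    exact lt_irrefl _ (hac.lt _ (mem_cylinder_append.1 hx).2 _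
      (cylinder_wordPow_append_subset hc hi (mem_cylinder_append.1 hx').2))
  · rw [List.append_assoc] at hx
    have hpre : W <+: wordPow c j ++ (a ++ W) := (prefix_wordPow_append hc j).trans
      ((List.prefix_append_right_inj _).2 ha)
    exact lt_irrefl _ (lt_of_mem_cylinder_suffix_append hβ ht hac.right_mem huc hu huc'
      (cylinder_anti ((List.prefix_append_right_inj u).2 hpre) hx)
      (cylinder_anti (prefix_wordPow_append hc M) hx'))

lemma iterate_notMem_cylinder_wordPow (hβ : β ∈ Ioc (0 : ℝ) 2) (ht : t ∈ cylinder β W)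
    (hx : x ∈ cylinder β (wordPow c M ++ (a ++ W))) {i : ℕ} (hi : 0 < i)
    (hiM : i ≤ (wordPow c M).length) : (Tbeta β)^[i] x ∉ cylinder β (wordPow c M ++ W) := by
  refine Set.disjoint_left.1 (hac.disjoint_cylinder_suffix_wordPow hβ ht (List.drop_suffix i _) ?_)
    (iterate_mem_cylinder_drop_append hx hiM)
  exact fun heq => (Nat.sub_lt (hi.trans_le hiM) hi).ne (by rw [← List.length_drop, heq])

end IsReturnPair

lemma iterate_le_wordValue_append (hβ : β ∈ Ioc (0 : ℝ) 2)
    (hy : y ∈ boundedRecurring β W t (wordValue β (e ++ W)))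
    (hv : (Tbeta β)^[l] y ∈ cylinder β (v ++ W)) :
    (Tbeta β)^[l] y ≤ wordValue β (v ++ (e ++ W)) := by
  obtain ⟨hyv, hyW⟩ := mem_cylinder_append.1 hv
  rw [← iterate_add_apply'] at hyW
  rw [wordValue_append, ← branch_iterate_of_mem_cylinder hβ hyv, ← iterate_add_apply']
  exact (strictMono_branch hβ.1 v).monotone (hy.2 _ hyW)

lemma iterate_notMem_cylinder_of_mem_boundedRecurring (hβ : β ∈ Ioc (0 : ℝ) 2)
    (hy : y ∈ boundedRecurring β W t (wordValue β (e ++ W))) (hWt : wordValue β W < t)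
    (hl : (Tbeta β)^[l] y ∈ cylinder β W) : (Tbeta β)^[l] y ∉ cylinder β e := fun he =>
  (hy.2 l hl).not_gt <| by
    rw [wordValue_append, ← branch_iterate_of_mem_cylinder hβ he, ← iterate_add_apply']
    exact strictMono_branch hβ.1 e (hWt.trans_le (hy.1.1.2 _))

/-- The word `q` is read by `y` up to a visit to the cylinder of `W`, starts with `a W`, and is so
long that its cylinder lies below `t'`. -/
structure IsLongLoop (β t' y : ℝ) (W a q : List Bool) : Prop where
  mem_cylinder : y ∈ cylinder β (q ++ W)
  prefix_left : a ++ W <+: q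
  lt : ∀ x ∈ cylinder β q, x < t'

lemma cylinder_marker_subset (hq : a ++ W <+: q) :
    cylinder β (marker e q ++ W) ⊆ cylinder β (e ++ (a ++ W)) := by
  rw [marker_append]
  exact cylinder_anti ((List.prefix_append_right_inj e).2 (hq.trans (List.prefix_append q _)))

namespace IsReturnPair

variable (hac : IsReturnPair β t W a c)
include hac

lemma wordPow_append_prefix_marker (hq : a ++ W <+: q) (M : ℕ) :
    wordPow c M ++ W <+: marker (wordPow c M) q ++ W := by
  rw [marker_append]
  exact (List.prefix_append_right_inj _).2 <|
    ((isBlockCode_returnWords β t W).marker_prefix a hac.left_mem).trans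
      (hq.trans (List.prefix_append q _))

lemma iterate_notMem_cylinder_marker (hβ : β ∈ Ioc (0 : ℝ) 2) (ht : t ∈ cylinder β W)
    (hWy : wordValue β W < y)
    (hy : y ∈ boundedRecurring β W y (wordValue β (wordPow c M ++ W)))
    (hq : IsLongLoop β t' y W a q) (hl : l < q.length) (hyl : (Tbeta β)^[l] y ∈ cylinder β W)
    (hx : x ∈ cylinder β (q ++ (wordPow c M ++ W))) :
    (Tbeta β)^[l] x ∉ cylinder β (marker (wordPow c M) q ++ W) := by
  intro hmark
  have hdrop := iterate_mem_cylinder_drop_append hx hl.le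
  have hmark' := cylinder_marker_subset hq.prefix_left hmark
  have hpos : 0 < (q.drop l).length := by rw [List.length_drop]; omega
  rcases le_or_gt (q.drop l).length (wordPow c M).length with hle | hgt
  · exact hac.iterate_notMem_cylinder_wordPow hβ ht hmark' hpos hle (mem_cylinder_append.1 hdrop).2
  · have hpre := prefix_of_mem_cylinder (mem_cylinder_append.1 hmark').1
      (mem_cylinder_append.1 hdrop).1 hgt.le
    exact iterate_notMem_cylinder_of_mem_boundedRecurring hβ hy hWy hyl <| cylinder_anti
      (hpre.trans (List.prefix_append _ W)) (iterate_mem_cylinder_drop_append hq.mem_cylinder hl.le)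

/- An occurrence of the marker overlapping another one must start inside its first power of `c`,
inside `q`, or run past `q`; the last case would put a point of `K_β(t')` below `t'`. -/
lemma marker_append_not_prefix (h : IsMultinacciBase β m) (hW : m ≤ W.length)
    (ht : t ∈ cylinder β W) (hWy : wordValue β W < y)
    (hy : y ∈ boundedRecurring β W y (wordValue β (wordPow c M ++ W)))
    (hq : IsLongLoop β t' y W a q) (hloop : marker (wordPow c M) q ∈ loopWords m W) (hu : u ≠ [])
    (hz : z ∈ Kset β t') (hzu : z ∈ cylinder β (u ++ W)) :
    ¬ marker (wordPow c M) q ++ W <+: u ++ (marker (wordPow c M) q ++ W) := by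
  intro hpre
  have hxu := h.wordValue_mem_cylinder
    ((h.admissible_of_mem_cylinder hzu).append_of_prefix hloop.2 hloop.1 hW)
  set x := wordValue β (u ++ (marker (wordPow c M) q ++ W))
  have hx : x ∈ cylinder β (marker (wordPow c M) q ++ W) := cylinder_anti hpre hxu
  rcases le_or_gt u.length (wordPow c M).length with hle | hgt
  · exact hac.iterate_notMem_cylinder_wordPow h.mem_Ioc ht
      (cylinder_marker_subset hq.prefix_left hx) (List.length_pos_iff.2 hu) hle
      (cylinder_anti (hac.wordPow_append_prefix_marker hq.prefix_left M)
        (mem_cylinder_append.1 hxu).2)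
  rw [marker_append] at hx
  obtain ⟨v, rfl⟩ : wordPow c M <+: u := prefix_of_mem_cylinder (mem_cylinder_append.1 hx).1
    (mem_cylinder_append.1 hxu).1 hgt.le
  rw [List.append_assoc] at hxu hzu
  replace hx := (mem_cylinder_append.1 hx).2
  replace hxu := (mem_cylinder_append.1 hxu).2
  replace hzu := (mem_cylinder_append.1 hzu).2
  have hxq := (mem_cylinder_append.1 hx).1
  have hxv := cylinder_anti ((List.prefix_append_right_inj v).2 hloop.1) hxu
  rcases le_or_gt q.length (v ++ W).length with hle | hgt'
  · have hqv := prefix_of_mem_cylinder hxq hxv hle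
    exact (hq.lt _ (cylinder_anti hqv hzu)).not_ge (hz.2 _)
  · have hvq := prefix_of_mem_cylinder hxv hxq hgt'.le
    have hyv := cylinder_anti hvq (mem_cylinder_append.1 hq.mem_cylinder).1
    refine hac.iterate_notMem_cylinder_marker h.mem_Ioc ht hWy hy hq ?_
      (mem_cylinder_append.1 hyv).2 hx (mem_cylinder_append.1 hxu).2
    rw [List.length_append] at hgt'
    omega

end IsReturnPair

end Markers

section BifurcationPoints

variable {β t t' y : ℝ} {m M : ℕ} {s : ℝ≥0} {W a c q v : List Bool}

lemma exists_isLongLoop (hβ : β ∈ Ioc (1 : ℝ) 2) (hy : y ∈ cylinder β (a ++ W))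
    (hrec : ∀ N, ∃ n ≥ N, (Tbeta β)^[n] y ∈ cylinder β W) (hyt : y < t') :
    ∃ q, IsLongLoop β t' y W a q := by
  obtain ⟨N, hN⟩ := (eventually_cylinder_digits_subset_Iio hβ hy.1 (sub_pos.2 hyt)).exists
  obtain ⟨k, hk, hkW⟩ := hrec (max N (a ++ W).length)
  refine ⟨digits β y k, ?_, ?_, fun x hx => ?_⟩
  · rw [mem_cylinder_append, length_digits]
    exact ⟨mem_cylinder_digits hy.1 k, hkW⟩
  · exact (mem_cylinder_iff_prefix_digits hy.1 ((le_max_right _ _).trans hk)).1 hy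
  · simpa using hN (cylinder_anti (digits_prefix y ((le_max_left _ _).trans hk)) hx)

namespace IsReturnPair

variable (hac : IsReturnPair β t W a c) (h : IsMultinacciBase β m) (hW : m ≤ W.length)
include hac h hW

lemma marker_mem_loopWords (hq : IsLongLoop β t' y W a q) :
    q ++ wordPow c M ∈ loopWords m W ∧ marker (wordPow c M) q ∈ loopWords m W := by
  have hpow := wordPow_mem_loopWords hW (hac.right_mem_loopWords h) M
  have hqloop : q ∈ loopWords m W :=
    ⟨(hac.left_mem_loopWords h).1.trans (hq.prefix_left.trans (List.prefix_append q W)),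
      h.admissible_of_mem_cylinder hq.mem_cylinder⟩
  have hqpow := append_mem_loopWords hW hqloop hpow
  exact ⟨hqpow, append_mem_loopWords hW hpow hqpow⟩

lemma image_marker_subset_loopWords (hq : IsLongLoop β t' y W a q) :
    (· ++ marker (wordPow c M) q) '' survivorLoops β t' W ⊆ loopWords m W := by
  rintro _ ⟨u, hu, rfl⟩
  exact append_mem_loopWords hW (survivorLoops_subset_loopWords h hu)
    (hac.marker_mem_loopWords h hW hq).2

lemma isBlockCode_image_marker (ht : t ∈ cylinder β W) (hWy : wordValue β W < y)
    (hy : y ∈ boundedRecurring β W y (wordValue β (wordPow c M ++ W)))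
    (hq : IsLongLoop β t' y W a q) :
    IsBlockCode W ((· ++ marker (wordPow c M) q) '' survivorLoops β t' W) := by
  refine ⟨?_, fun d hd => (hac.image_marker_subset_loopWords h hW hq hd).1, ?_⟩
  · rintro _ ⟨u, -, rfl⟩ hnil
    have hq_nil : q = [] := by simp_all [marker]
    have hpre := hq.prefix_left
    rw [hq_nil, List.prefix_nil, List.append_eq_nil_iff] at hpre
    exact hac.left_mem.1 hpre.1
  · rintro _ ⟨u, -, rfl⟩ _ ⟨w, hw, rfl⟩ hpre
    have hlen : u.length ≤ w.length := by simpa using hpre.length_le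
    simp only [List.append_assoc] at hpre
    obtain ⟨v, rfl⟩ := List.prefix_of_prefix_length_le ((List.prefix_append u _).trans hpre)
      (List.prefix_append w _) hlen
    obtain ⟨z, hz, -, hzw⟩ := hw
    rw [List.append_assoc, mem_cylinder_append] at hzw
    rw [List.append_assoc, List.prefix_append_right_inj] at hpre
    by_contra hne
    exact hac.marker_append_not_prefix h hW ht hWy hy hq (hac.marker_mem_loopWords h hW hq).2
      (by simpa using hne) (iterate_mem_Kset hz _) hzw.2 hpre

lemma le_wordValue_append_of_suffix_marker (ht : t ∈ cylinder β W)
    (hy : y ∈ boundedRecurring β W y (wordValue β (wordPow c M ++ W)))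
    (hq : IsLongLoop β t' y W a q) (hv : v <:+ marker (wordPow c M) q) (hne : v ≠ []) :
    y ≤ wordValue β (v ++ W) := by
  have hya : y ∈ cylinder β (a ++ W) :=
    cylinder_anti (hq.prefix_left.trans (List.prefix_append q W)) hq.mem_cylinder
  obtain ⟨hqpow, hmark⟩ := hac.marker_mem_loopWords h hW hq (M := M)
  have hval := h.wordValue_mem_cylinder (admissible_append_of_suffix hmark hv)
  rcases suffix_append_cases hv with hv | ⟨u, hu, hsuf, rfl⟩
  · rcases suffix_append_cases hv with hv | ⟨u, -, ⟨w, rfl⟩, rfl⟩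
    · exact (hac.lt_of_mem_cylinder_suffix_wordPow h.mem_Ioc ht hya hv hne hval).le
    · have hw := hq.mem_cylinder
      rw [List.append_assoc] at hw ⊢
      exact (hy.1.1.2 _).trans
        (iterate_le_wordValue_append h.mem_Ioc hy (mem_cylinder_append.1 hw).2)
  · rw [List.append_assoc] at hval
    exact (hac.lt_of_mem_cylinder_suffix_wordPow h.mem_Ioc ht hya hsuf hu
      (cylinder_anti ((List.prefix_append_right_inj u).2 hqpow.1) hval)).le.trans_eq
        (by simp only [List.append_assoc])

lemma le_wordValue_append_of_suffix_append_marker (ht : t ∈ cylinder β W)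
    (hy : y ∈ boundedRecurring β W y (wordValue β (wordPow c M ++ W))) (hyt : y < t')
    (hq : IsLongLoop β t' y W a q) {d : List Bool}
    (hd : d ∈ (· ++ marker (wordPow c M) q) '' survivorLoops β t' W) (hv : v <:+ d)
    (hne : v ≠ []) : y ≤ wordValue β (v ++ W) := by
  obtain ⟨u, hu, rfl⟩ := hd
  rcases suffix_append_cases hv with hv | ⟨v, -, hvu, rfl⟩
  · exact hac.le_wordValue_append_of_suffix_marker h hW ht hy hq hv hne
  have hpow := wordPow_mem_loopWords hW (hac.right_mem_loopWords h) M
  have hadm := (admissible_append_of_suffix (survivorLoops_subset_loopWords h hu) hvu)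
    |>.append_of_prefix hpow.2 hpow.1 hW
  have hval := h.wordValue_mem_cylinder hadm
  have hle : wordValue β (v ++ (wordPow c M ++ W)) ≤
      wordValue β ((v ++ marker (wordPow c M) q) ++ W) := by
    obtain ⟨z, hz⟩ := hac.wordPow_append_prefix_marker hq.prefix_left M
    rw [List.append_assoc v, ← hz, ← List.append_assoc v (_ ++ W)]
    exact wordValue_le_wordValue_append h.pos _ _
  by_contra! hlt
  obtain ⟨z, hz, -, hzu⟩ := hu
  obtain ⟨w, rfl⟩ := hvu
  rw [List.append_assoc, mem_cylinder_append] at hzu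
  have hyv := (ordConnected_cylinder h.mem_Ioc (v ++ W)).out
    (cylinder_anti ((List.prefix_append_right_inj v).2 hpow.1) hval) hzu.2
    ⟨(hle.trans_lt hlt).le, hyt.le.trans (hz.2 _)⟩
  exact ((iterate_le_wordValue_append (l := 0) h.mem_Ioc hy hyv).trans hle).not_gt hlt

/- If the dimension at `t' > y` were at least `s`, the loop words of `K_β(t')` would have infinite
generating function, and the block code obtained by appending the marker would push the dimension
at `y` strictly above `s`. -/
lemma exists_gt_le_dimH_Kset (hW0 : 0 < wordValue β W)
    (havoid : dimH (avoiding β W (Kset β (wordValue β W))) < s) (ht : t ∈ cylinder β W)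
    (hya : y ∈ cylinder β (a ++ W)) (hWy : wordValue β W < y)
    (hy : y ∈ boundedRecurring β W y (wordValue β (wordPow c M ++ W))) (hyt : y < t')
    (hs : s ≤ dimH (Kset β t')) : ∃ s' > s, s' ≤ dimH (Kset β y) := by
  have hWne : W ≠ [] := by
    rintro rfl
    exact lt_irrefl _ hW0
  obtain ⟨q, hq⟩ := exists_isLongLoop ⟨h.one_lt, h.lt_two.le⟩ hya hy.1.2.2 hyt
  set D := (· ++ marker (wordPow c M) q) '' survivorLoops β t' W
  have hD : 1 < genFun (letterWeight β s) D := by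
    rw [genFun_image_append_right,
      h.genFun_survivorLoops_eq_top hWne hW0 (hWy.trans hyt).le havoid hs,
      ENNReal.top_mul (pow_ne_zero _ (letterWeight_ne_zero h.pos))]
    exact ENNReal.one_lt_top
  obtain ⟨F, hFD, hF⟩ := exists_finset_lt_genFun hD
  obtain ⟨s', hs', hFs'⟩ := exists_gt_one_lt_genFun h.pos.ne' F.finite_toSet hF
  exact ⟨s', hs', h.le_dimH_Kset (hW0.trans hWy) hya.1.2.le hW (hac.admissible h)
    ((hac.isBlockCode_image_marker h hW ht hWy hy hq).mono hFD)
    (hFD.trans (hac.image_marker_subset_loopWords h hW hq))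
    (fun d hd v hv hne =>
      hac.le_wordValue_append_of_suffix_append_marker h hW ht hy hyt hq (hFD hd) hv hne) hFs'.le⟩

lemma mem_Bset (hW0 : 0 < wordValue β W)
    (havoid : dimH (avoiding β W (Kset β (wordValue β W))) < s) (ht : t ∈ cylinder β W)
    (hya : y ∈ cylinder β (a ++ W)) (hWy : wordValue β W < y)
    (hy : y ∈ boundedRecurring β W y (wordValue β (wordPow c M ++ W)))
    (hs : s ≤ dimH (Kset β y)) : y ∈ Bset β := by
  refine ⟨hya.1, fun t' hyt _ heq => ?_⟩
  have hfin : dimH (Kset β y) ≠ ⊤ := ne_top_of_le_ne_top (by simp [Real.dimH_univ])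
    (dimH_mono (subset_univ _))
  have hd : ((dimH (Kset β y)).toNNReal : ℝ≥0∞) = dimH (Kset β y) := ENNReal.coe_toNNReal hfin
  obtain ⟨s', hs', hle⟩ := hac.exists_gt_le_dimH_Kset h hW hW0
    (havoid.trans_le (hs.trans_eq hd.symm)) ht hya hWy hy hyt (hd.trans heq.symm).le
  exact (ENNReal.coe_lt_coe.2 hs').not_ge (hle.trans_eq hd.symm)

end IsReturnPair

end BifurcationPoints

section Multinacci

variable {β : ℝ} {m : ℕ}

lemma wordValue_replicate_true_eq_sum (β : ℝ) (j : ℕ) :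
    wordValue β (List.replicate j true) = ∑ i ∈ Finset.range j, 1 / β ^ (i + 1) := by
  induction j with
  | zero => simp [wordValue, branch]
  | succ j ih =>
    have hcons : wordValue β (List.replicate (j + 1) true) =
        (1 + wordValue β (List.replicate j true)) / β := by
      simp [wordValue, branch, List.replicate_succ]
    rw [hcons, ih, Finset.sum_range_succ', add_div, Finset.sum_div, add_comm, zero_add, pow_one]
    simp only [div_div, ← pow_succ]

lemma perSeq_add_length (w : List ℕ) (i : ℕ) : perSeq w (i + w.length) = perSeq w i := by
  simp only [perSeq, Nat.add_mod_right]

lemma sum_range_perSeq_div_pow (β : ℝ) (m : ℕ) :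
    ∑ i ∈ Finset.range (m + 1), (perSeq (List.replicate m 1 ++ [0]) i : ℝ) / β ^ (i + 1) =
      ∑ i ∈ Finset.range m, 1 / β ^ (i + 1) := by
  have hlen : (List.replicate m 1 ++ [0]).length = m + 1 := by simp
  rw [Finset.sum_range_succ]
  simp only [perSeq, hlen]
  have hlast : (List.replicate m 1 ++ [0]).getD (m % (m + 1)) 0 = 0 := by
    simp
  rw [hlast, Nat.cast_zero, zero_div, add_zero]
  refine Finset.sum_congr rfl fun i hi => ?_
  have him := Finset.mem_range.1 hi
  rw [Nat.mod_eq_of_lt (by lia), List.getD_append _ _ _ _ (by simpa using him)]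
  simp [List.getD, him]

lemma sum_range_perSeq_div_pow_of_tsum_eq_one {w : List ℕ}
    (hsum : ∑' i, (perSeq w i : ℝ) / β ^ (i + 1) = 1) :
    ∑ i ∈ Finset.range w.length, (perSeq w i : ℝ) / β ^ (i + 1) + 1 / β ^ w.length = 1 := by
  have hsummable : Summable fun i => (perSeq w i : ℝ) / β ^ (i + 1) := by
    by_contra hdiv
    exact zero_ne_one (hsum ▸ tsum_eq_zero_of_not_summable hdiv).symm
  have hshift : ∀ i, (perSeq w (i + w.length) : ℝ) / β ^ (i + w.length + 1) =
      perSeq w i / β ^ (i + 1) * (1 / β ^ w.length) := fun i => by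
    rw [perSeq_add_length, div_mul_div_comm, mul_one, ← pow_add, add_right_comm]
  have hsplit := hsummable.sum_add_tsum_nat_add w.length
  simpa only [hshift, tsum_mul_right, hsum, one_mul] using hsplit

lemma IsMultinacciBase.of_isQuasiGreedy (hβ : 1 < β)
    (hδ : IsQuasiGreedy β (perSeq (List.replicate m 1 ++ [0]))) : IsMultinacciBase β m := by
  refine ⟨hβ, ?_⟩
  have hsum := sum_range_perSeq_div_pow_of_tsum_eq_one hδ.2.2.1
  rw [List.length_append, List.length_replicate, List.length_singleton,
    sum_range_perSeq_div_pow] at hsum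
  rw [wordValue_replicate_true_eq_sum, Finset.sum_range_succ, hsum]

end Multinacci

section LocalDimension

variable {β t r : ℝ} {m : ℕ}

lemma dimH_Bset_inter_le (hβ : β ∈ Ioc (0 : ℝ) 2) (t : ℝ) (A : Set ℝ) (hA : A ⊆ Ici t) :
    dimH (Bset β ∩ A) ≤ dimH (Kset β t) :=
  dimH_mono fun _ hy => antitone_Kset β (hA hy.2) (mem_Kset_of_mem_Bset hβ hy.1)

namespace IsMultinacciBase

variable (h : IsMultinacciBase β m) (ht : t ∈ Bset β)
include h ht

lemma lt_dimH_Bset_inter_Ioo (hr : 0 < r) {b : ℝ≥0∞} (hb : b < dimH (Kset β t)) :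
    b < dimH (Bset β ∩ Ioo t (t + r)) := by
  obtain ⟨W, s, hW, hadm, hsub, havoid, hbs, hs⟩ := h.exists_word_dimH_avoiding_lt ht hr hb
  obtain ⟨a, c, M, hac, hdim⟩ := h.exists_isReturnPair_le_dimH hW hadm havoid hs
  have hWmem := h.wordValue_mem_cylinder hadm
  refine hbs.trans_le (hdim.trans (dimH_mono fun y hy => ?_))
  obtain ⟨hya, hWy, hsy, hrec⟩ := hy
  exact ⟨hac.mem_Bset h hW (ht.1.1.trans_lt (hsub hWmem).1) havoid hWmem hya hWy hrec hsy,
    hsub (cylinder_anti (hac.left_mem_loopWords h).1 hya)⟩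

lemma tendsto_dimH_Bset_inter_Ioo :
    Tendsto (fun r => dimH (Bset β ∩ Ioo t (t + r))) (nhdsWithin 0 (Ioi 0))
      (nhds (dimH (Kset β t))) := by
  refine tendsto_order.2 ⟨fun b hb => ?_, fun b hb => .of_forall fun r => ?_⟩
  · filter_upwards [self_mem_nhdsWithin] with r hr using h.lt_dimH_Bset_inter_Ioo ht hr hb
  · exact (dimH_Bset_inter_le h.mem_Ioc t _ fun _ hy => hy.1.le).trans_lt hb

end IsMultinacciBase

lemma dimH_Kset_pos_of_mem_Bset (ht : t ∈ Bset β) : 0 < dimH (Kset β t) := by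
  obtain ⟨τ, htτ, hτ⟩ := exists_between ht.1.2
  exact pos_of_gt (dimH_Kset_lt_of_mem_Bset ht htτ hτ)

end LocalDimension

end BetaSurvivor

/-- Let `β ∈ (1,2)` with `δ(β) = (1^m 0)^∞` for some `m ≥ 1`. Then
for every `t ∈ B_β`, `lim_{r→0⁺} dim_H (B_β ∩ (t, t+r)) = dim_H K_β(t) > 0`. -/
theorem stmt_13 (β : ℝ) (hβ : β ∈ Set.Ioo (1 : ℝ) 2) (m : ℕ) (hm : 1 ≤ m)
    (hδ : IsQuasiGreedy β (perSeq (List.replicate m 1 ++ [0]))) :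
    ∀ t ∈ Bset β,
      Filter.Tendsto (fun r : ℝ => dimH (Bset β ∩ Set.Ioo t (t + r)))
        (nhdsWithin 0 (Set.Ioi 0)) (nhds (dimH (Kset β t))) ∧
      0 < dimH (Kset β t) := by
  intro t ht
  have h := BetaSurvivor.IsMultinacciBase.of_isQuasiGreedy hβ.1 hδ
  exact ⟨h.tendsto_dimH_Bset_inter_Ioo ht, BetaSurvivor.dimH_Kset_pos_of_mem_Bset ht⟩
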